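/- arXiv:0801.0939 — 2 statements merged into one kernel-verified Lean document; each statement's English description precedes it below -/
import Mathlib

section
/- Let d and k be integers with 0 ≤ k ≤ d-3. For every convex polytope P of dimension d, the graph G_k(P) is (k+1)(d-k)-vertex-connected. -/
open Set

/-- A convex polytope in `ℝ^N`: the convex hull of a finite set of points. -/
def IsPolytope {N : ℕ} (P : Set (EuclideanSpace ℝ (Fin N))) : Prop :=
  ∃ S : Set (EuclideanSpace ℝ (Fin N)), S.Finite ∧ P = convexHull ℝ S

/-- The dimension of a subset of `ℝ^N`: the dimension of its affine hull. -/
noncomputable def sdim {N : ℕ} (P : Set (EuclideanSpace ℝ (Fin N))) : ℕ :=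
  Module.finrank ℝ (affineSpan ℝ P).direction

/-- `F` is a face of `P` of dimension `k`: a nonempty exposed subset of `P`
(the set of minimizers over `P` of some linear functional) of dimension `k`. -/
def IsFaceDim {N : ℕ} (P F : Set (EuclideanSpace ℝ (Fin N))) (k : ℕ) : Prop :=
  IsExposed ℝ P F ∧ F.Nonempty ∧ sdim F = k

/-- The graph `G_k(P)` on the `k`-dimensional faces of `P`: two such faces
are adjacent if some `(k+1)`-dimensional face of `P` contains both. -/
def faceGraph {N : ℕ} (P : Set (EuclideanSpace ℝ (Fin N))) (k : ℕ) :
    SimpleGraph {F : Set (EuclideanSpace ℝ (Fin N)) // IsFaceDim P F k} :=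
  SimpleGraph.fromRel (fun F F' => ∃ G, IsFaceDim P G (k + 1) ∧ F.1 ⊆ G ∧ F'.1 ⊆ G)

/-- A graph is `m`-connected if it has at least `m+1` nodes and deleting any set
of at most `m-1` nodes (and incident edges) leaves a connected graph. -/
def MConnected {V : Type*} (G : SimpleGraph V) (m : ℕ) : Prop :=
  m + 1 ≤ Nat.card V ∧
    ∀ S : Set V, S.Finite → S.ncard < m → (G.induce Sᶜ).Connected


namespace FG
universe u
open Module

set_option linter.unusedSectionVars false
variable {ι : Type} {V : Type u} [AddCommGroup V] [Module ℝ V] [FiniteDimensional ℝ V]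

def IsFc (v : ι → V) (I A : Finset ι) : Prop :=
  A ⊆ I ∧ ∃ l : V →ₗ[ℝ] ℝ, ∀ i ∈ I, 0 ≤ l (v i) ∧ (l (v i) = 0 ↔ i ∈ A)

def sp (v : ι → V) (A : Finset ι) : Submodule ℝ V := Submodule.span ℝ (v '' (A : Set ι))

noncomputable def rk (v : ι → V) (A : Finset ι) : ℕ := finrank ℝ (sp v A)

def Ptd (v : ι → V) (I : Finset ι) : Prop :=
  ∃ l : V →ₗ[ℝ] ℝ, ∀ i ∈ I, v i ≠ 0 → 0 < l (v i)

def Fk (v : ι → V) (I : Finset ι) (r : ℕ) (A : Finset ι) : Prop := IsFc v I A ∧ rk v A = r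

lemma IsFc.self (v : ι → V) (I : Finset ι) : IsFc v I I :=
  ⟨Finset.Subset.refl _, 0, fun i hi => by simp [hi]⟩

lemma IsFc.inter [DecidableEq ι] {v : ι → V} {I A B : Finset ι} (hA : IsFc v I A) (hB : IsFc v I B) :
    IsFc v I (A ∩ B) := by
  obtain ⟨hAI, l, hl⟩ := hA
  obtain ⟨hBI, m, hm⟩ := hB
  refine ⟨fun i hi => hAI (Finset.mem_of_mem_inter_left hi), l + m, fun i hi => ?_⟩
  have h1 := hl i hi
  have h2 := hm i hi
  refine ⟨by simpa using add_nonneg h1.1 h2.1, ?_⟩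
  rw [Finset.mem_inter, ← h1.2, ← h2.2, LinearMap.add_apply]
  constructor
  · intro h; constructor <;> linarith [h1.1, h2.1]
  · rintro ⟨a, b⟩; linarith

lemma IsFc.trans {v : ι → V} {I B A : Finset ι} (hB : IsFc v I B) (hA : IsFc v B A) :
    IsFc v I A := by
  classical
  obtain ⟨hBI, m, hm⟩ := hB
  obtain ⟨hAB, l, hl⟩ := hA
  refine ⟨hAB.trans hBI, ?_⟩
  -- C large
  obtain ⟨C, hC⟩ : ∃ C : ℝ, ∀ i ∈ I, i ∉ B → 0 < l (v i) + C * m (v i) := by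
    obtain ⟨C, hC⟩ := (I.finite_toSet.image (fun i => - l (v i) / m (v i))).bddAbove
    refine ⟨C + 1, fun i hi hiB => ?_⟩
    have h0 : 0 < m (v i) := lt_of_le_of_ne (hm i hi).1 (fun h => hiB ((hm i hi).2.1 h.symm))
    have h1 : - l (v i) / m (v i) ≤ C := hC ⟨i, hi, rfl⟩
    rw [div_le_iff₀ h0] at h1
    nlinarith
  refine ⟨l + C • m, fun i hi => ?_⟩
  by_cases hiB : i ∈ B
  · have := (hm i hi).2.2 hiB
    have h2 := hl i hiB
    simpa [this] using h2
  · have := hC i hi hiB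
    have hiA : i ∉ A := fun h => hiB (hAB h)
    simp only [LinearMap.add_apply, LinearMap.smul_apply, smul_eq_mul, hiA, iff_false]
    exact ⟨this.le, this.ne'⟩

lemma IsFc.restrict {v : ι → V} {I B A : Finset ι} (hA : IsFc v I A) (hAB : A ⊆ B) (hBI : B ⊆ I) :
    IsFc v B A := by
  obtain ⟨_, l, hl⟩ := hA
  exact ⟨hAB, l, fun i hi => hl i (hBI hi)⟩

lemma Ptd.mono {v : ι → V} {I B : Finset ι} (h : Ptd v I) (hB : B ⊆ I) : Ptd v B := by
  obtain ⟨l, hl⟩ := h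
  exact ⟨l, fun i hi => hl i (hB hi)⟩

lemma mem_sp {v : ι → V} {A : Finset ι} {i : ι} (hi : i ∈ A) : v i ∈ sp v A :=
  Submodule.subset_span ⟨i, hi, rfl⟩

lemma sp_mono {v : ι → V} {A B : Finset ι} (h : A ⊆ B) : sp v A ≤ sp v B :=
  Submodule.span_mono (Set.image_mono (by exact_mod_cast h))

lemma sp_le {v : ι → V} {A : Finset ι} {W : Submodule ℝ V} : sp v A ≤ W ↔ ∀ i ∈ A, v i ∈ W := by
  unfold sp
  rw [Submodule.span_le]
  constructor
  · intro h i hi; exact h ⟨i, hi, rfl⟩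
  · rintro h _ ⟨i, hi, rfl⟩; exact h i hi

lemma rk_mono {v : ι → V} {A B : Finset ι} (h : A ⊆ B) : rk v A ≤ rk v B :=
  Submodule.finrank_mono (sp_mono h)

lemma IsFc.mem_of_sp {v : ι → V} {I A : Finset ι} (hA : IsFc v I A) {i : ι} (hi : i ∈ I)
    (h : v i ∈ sp v A) : i ∈ A := by
  obtain ⟨hAI, l, hl⟩ := hA
  have : sp v A ≤ LinearMap.ker l := sp_le.2 fun j hj => ((hl j (hAI hj)).2.2 hj)
  exact (hl i hi).2.1 (this h)

lemma IsFc.eq_of_rk {v : ι → V} {I A B : Finset ι} (hA : IsFc v I A) (hAB : A ⊆ B) (hB : B ⊆ I)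
    (h : rk v B ≤ rk v A) : A = B := by
  have : sp v A = sp v B := Submodule.eq_of_le_of_finrank_le (sp_mono hAB) h
  refine Finset.Subset.antisymm hAB fun i hi => hA.mem_of_sp (hB hi) ?_
  rw [this]; exact mem_sp hi

lemma IsFc.rk_lt {v : ι → V} {I A B : Finset ι} (hA : IsFc v I A) (hAB : A ⊆ B) (hB : B ⊆ I)
    (hne : A ≠ B) : rk v A < rk v B := by
  by_contra h
  exact hne (hA.eq_of_rk hAB hB (not_lt.1 h))

/-- contraction -/
def ct (v : ι → V) (A : Finset ι) : ι → V ⧸ sp v A := fun i => (sp v A).mkQ (v i)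

lemma ct_zero {v : ι → V} {A : Finset ι} {i : ι} : ct v A i = 0 ↔ v i ∈ sp v A := by
  simp [ct]

lemma ct_face {v : ι → V} {I A B : Finset ι} (hA : A ⊆ I) :
    IsFc (ct v A) I B ↔ IsFc v I B ∧ A ⊆ B := by
  constructor
  · rintro ⟨hB, l, hl⟩
    refine ⟨⟨hB, l.comp (sp v A).mkQ, fun i hi => hl i hi⟩, fun i hi => ?_⟩
    rw [← (hl i (hA hi)).2, ct_zero.2 (mem_sp hi), map_zero]
  · rintro ⟨⟨hB, l, hl⟩, hAB⟩
    have hk : sp v A ≤ LinearMap.ker l :=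
      sp_le.2 fun j hj => ((hl j (hA hj)).2.2 (hAB hj))
    exact ⟨hB, (sp v A).liftQ l hk, fun i hi => by simpa [ct] using hl i hi⟩

lemma ct_ptd {v : ι → V} {I A : Finset ι} (hA : IsFc v I A) : Ptd (ct v A) I := by
  obtain ⟨hB, l, hl⟩ := (ct_face hA.1).2 ⟨hA, Finset.Subset.refl _⟩
  refine ⟨l, fun i hi h0 => lt_of_le_of_ne (hl i hi).1 fun h => h0 ?_⟩
  exact ct_zero.2 (mem_sp ((hl i hi).2.1 h.symm))

lemma ct_rk {v : ι → V} {A B : Finset ι} (hAB : A ⊆ B) : rk (ct v A) B + rk v A = rk v B := by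
  have h1 : sp (ct v A) B = (sp v B).map (sp v A).mkQ := by
    unfold sp ct
    rw [Submodule.map_span, ← Set.image_comp]; rfl
  unfold rk
  rw [h1]
  have h2 := LinearMap.finrank_range_add_finrank_ker ((sp v A).mkQ.domRestrict (sp v B))
  rw [LinearMap.range_domRestrict] at h2
  rw [← h2]
  congr 1
  rw [LinearMap.ker_domRestrict, Submodule.ker_mkQ]
  exact (Submodule.comapSubtypeEquivOfLe (sp_mono hAB)).finrank_eq.symm

lemma ct_Fk {v : ι → V} {I A B : Finset ι} {r s : ℕ} (hA : Fk v I s A) :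
    Fk (ct v A) I r B ↔ Fk v I (r + s) B ∧ A ⊆ B := by
  unfold Fk
  rw [ct_face hA.1.1]
  constructor
  · rintro ⟨⟨h1, h2⟩, h3⟩
    refine ⟨⟨h1, ?_⟩, h2⟩
    rw [← ct_rk h2, h3, hA.2]
  · rintro ⟨⟨h1, h3⟩, h2⟩
    refine ⟨⟨h1, h2⟩, ?_⟩
    have := ct_rk (v := v) h2
    rw [hA.2] at this; omega

open Classical in
lemma zero_face {v : ι → V} {I : Finset ι} (h : Ptd v I) :
    Fk v I 0 (I.filter fun i => v i = 0) := by
  obtain ⟨l, hl⟩ := h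
  refine ⟨⟨Finset.filter_subset _ _, l, fun i hi => ?_⟩, ?_⟩
  · by_cases h0 : v i = 0
    · simp [h0, hi]
    · have := hl i hi h0
      simp [h0, this.le, this.ne']
  · have : sp v (I.filter fun i => v i = 0) = ⊥ := by
      rw [eq_bot_iff, sp_le]
      intro i hi
      simpa using (Finset.mem_filter.1 hi).2
    rw [rk, this, finrank_bot]

/-- top face for g: functional m = t l - g. -/
lemma top_face {v : ι → V} {I : Finset ι} {l : V →ₗ[ℝ] ℝ} (hl : ∀ i ∈ I, v i ≠ 0 → 0 < l (v i))
    (g : V →ₗ[ℝ] ℝ) {i : ι} (hi : i ∈ I) (hg : 0 < g (v i)) :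
    ∃ t : ℝ, 0 < t ∧ ∃ T : Finset ι, T ⊆ I ∧ (∀ j ∈ I, 0 ≤ (t • l - g) (v j) ∧
      ((t • l - g) (v j) = 0 ↔ j ∈ T)) ∧ ∃ j ∈ T, v j ≠ 0 := by
  classical
  have hi0 : v i ≠ 0 := by rintro h; simp [h] at hg
  obtain ⟨k, hk, hmax⟩ := Finset.exists_max_image (I.filter fun i => v i ≠ 0)
    (fun j => g (v j) / l (v j)) ⟨i, by simp [hi, hi0]⟩
  rw [Finset.mem_filter] at hk
  have hlk := hl k hk.1 hk.2
  set t := g (v k) / l (v k) with ht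
  have hge : ∀ j ∈ I, 0 ≤ (t • l - g) (v j) := by
    intro j hj
    by_cases h0 : v j = 0
    · simp [h0]
    · have h1 := hmax j (by simp [hj, h0])
      rw [div_le_iff₀ (hl j hj h0)] at h1
      simpa using h1
  have hk0 : (t • l - g) (v k) = 0 := by
    simp [ht, hlk.ne']
  refine ⟨t, ?_, I.filter fun j => (t • l - g) (v j) = 0, Finset.filter_subset _ _,
    fun j hj => ⟨hge j hj, by rw [Finset.mem_filter]; simp only [hj, true_and]⟩, k,
    by simp only [Finset.mem_filter, hk.1, hk0, true_and], hk.2⟩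
  exact lt_of_lt_of_le (div_pos hg (hl i hi hi0)) (hmax i (by simp [hi, hi0]))

lemma top_face' {v : ι → V} {I : Finset ι} (hp : Ptd v I)
    (g : V →ₗ[ℝ] ℝ) {i : ι} (hi : i ∈ I) (hg : 0 < g (v i)) :
    ∃ T, IsFc v I T ∧ (∀ j ∈ T, v j ≠ 0 → 0 < g (v j)) ∧ ∃ j ∈ T, v j ≠ 0 := by
  obtain ⟨l, hl⟩ := hp
  obtain ⟨t, ht, T, hTI, hT, hj⟩ := top_face hl g hi hg
  refine ⟨T, ⟨hTI, _, hT⟩, fun j hj h0 => ?_, hj⟩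
  have h1 := (hT j (hTI hj)).2.2 hj
  have h2 := hl j (hTI hj) h0
  simp only [LinearMap.sub_apply, LinearMap.smul_apply, smul_eq_mul] at h1
  have := mul_pos ht h2
  linarith

/-- separating functional -/
lemma sep (W : Submodule ℝ V) {x : V} (hx : x ∉ W) :
    ∃ g : V →ₗ[ℝ] ℝ, W ≤ LinearMap.ker g ∧ 0 < g x := by
  obtain ⟨f, hf, hW⟩ := Submodule.exists_dual_map_eq_bot_of_notMem hx inferInstance
  have hk : W ≤ LinearMap.ker f := by
    intro y hy
    have : f y ∈ W.map f := ⟨y, hy, rfl⟩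
    rw [hW] at this; simpa using this
  rcases lt_or_gt_of_ne hf with h | h
  · exact ⟨-f, fun y hy => by simpa using hk hy, by simpa using h⟩
  · exact ⟨f, hk, h⟩

lemma exists_notMem {v : ι → V} {I : Finset ι} {W : Submodule ℝ V} (h : finrank ℝ W < rk v I) :
    ∃ i ∈ I, v i ∉ W := by
  by_contra hc
  push Not at hc
  exact absurd (Submodule.finrank_mono (sp_le.2 hc)) (not_le.2 h)

lemma facet_aux {v : ι → V} {I : Finset ι} (hp : Ptd v I) {i : ι} (hi : i ∈ I) (h0 : v i ≠ 0)
    (m : ℕ) (hm : m + 1 ≤ rk v I) : ∃ B, IsFc v I B ∧ i ∉ B ∧ m ≤ rk v B := by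
  classical
  induction m with
  | zero => exact ⟨_, (zero_face hp).1, by simp [h0], Nat.zero_le _⟩
  | succ m ih =>
    obtain ⟨B, hB, hiB, hmB⟩ := ih (by omega)
    by_cases hlt : m + 1 ≤ rk v B
    · exact ⟨B, hB, hiB, hlt⟩
    have hBr : rk v B = m := by omega
    have h1 := ct_rk (v := v) hB.1
    have hfi : finrank ℝ (Submodule.span ℝ {ct v B i}) < rk (ct v B) I := by
      have := finrank_span_le_card (R := ℝ) ({ct v B i} : Set (V ⧸ sp v B))
      simp at this
      omega
    obtain ⟨j, hj, hjW⟩ := exists_notMem hfi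
    obtain ⟨g, hgk, hgj⟩ := sep _ hjW
    obtain ⟨T, hT, hTg, k, hk, hk0⟩ := top_face' (ct_ptd hB) g hj hgj
    have hT' := (ct_face hB.1).1 hT
    refine ⟨T, hT'.1, fun hiT => ?_, ?_⟩
    · have : ct v B i ≠ 0 := fun h => hiB (hB.mem_of_sp hi (ct_zero.1 h))
      have h2 := hTg i hiT this
      have : g (ct v B i) = 0 := hgk (Submodule.mem_span_singleton_self _)
      linarith
    · have : B ≠ T := by
        rintro rfl
        exact hk0 (ct_zero.2 (mem_sp hk))
      have := hB.rk_lt hT'.2 hT'.1.1 this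
      omega

lemma facet {v : ι → V} {I : Finset ι} (hp : Ptd v I) {i : ι} (hi : i ∈ I) (h0 : v i ≠ 0)
    {m : ℕ} (hm : rk v I = m + 1) : ∃ B, Fk v I m B ∧ i ∉ B := by
  obtain ⟨B, hB, hiB, hmB⟩ := facet_aux hp hi h0 m (by omega)
  refine ⟨B, ⟨hB, ?_⟩, hiB⟩
  have : B ≠ I := by rintro rfl; exact hiB hi
  have := hB.rk_lt hB.1 (Finset.Subset.refl _) this
  omega

lemma exists_ne_zero {v : ι → V} {I : Finset ι} (h : 0 < rk v I) : ∃ i ∈ I, v i ≠ 0 := by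
  obtain ⟨i, hi, h⟩ := exists_notMem (W := (⊥ : Submodule ℝ V)) (by simpa using h)
  exact ⟨i, hi, by simpa using h⟩

lemma rk_pos {v : ι → V} {I : Finset ι} {i : ι} (hi : i ∈ I) (h : v i ≠ 0) : 0 < rk v I := by
  by_contra hc
  have : sp v I = ⊥ := Submodule.finrank_eq_zero.1 (by unfold rk at hc; omega)
  have h2 := mem_sp (v := v) hi
  rw [this] at h2
  exact h (by simpa using h2)

lemma exists_vertex {v : ι → V} {n : ℕ} : ∀ {I : Finset ι}, Ptd v I → rk v I = n + 1 →
    ∃ a, Fk v I 1 a := by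
  induction n with
  | zero => intro I hp h; exact ⟨I, IsFc.self _ _, h⟩
  | succ n ih =>
    intro I hp h
    obtain ⟨i, hi, h0⟩ := exists_ne_zero (v := v) (I := I) (by omega)
    obtain ⟨B, hB, -⟩ := facet hp hi h0 h
    obtain ⟨a, ha⟩ := ih (hp.mono hB.1.1) hB.2
    exact ⟨a, hB.1.trans ha.1, ha.2⟩

lemma exists_vertex_pos {v : ι → V} {I : Finset ι} (hp : Ptd v I)
    (g : V →ₗ[ℝ] ℝ) {i : ι} (hi : i ∈ I) (hg : 0 < g (v i)) :
    ∃ a, Fk v I 1 a ∧ ∀ j ∈ a, v j ≠ 0 → 0 < g (v j) := by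
  obtain ⟨T, hT, hTg, k, hk, hk0⟩ := top_face' hp g hi hg
  have := rk_pos hk hk0
  obtain ⟨a, ha⟩ := exists_vertex (n := rk v T - 1) (hp.mono hT.1) (by omega)
  exact ⟨a, ⟨hT.trans ha.1, ha.2⟩, fun j hj => hTg j (ha.1.1 hj)⟩

/-- a vertex has a representative -/
lemma vrep {v : ι → V} {I a : Finset ι} (ha : Fk v I 1 a) :
    ∃ i ∈ a, v i ≠ 0 ∧ sp v a = Submodule.span ℝ {v i} := by
  obtain ⟨i, hi, h0⟩ := exists_ne_zero (v := v) (I := a) (by have := ha.2; omega)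
  refine ⟨i, hi, h0, ?_⟩
  symm
  apply Submodule.eq_of_le_of_finrank_le
  · rw [Submodule.span_singleton_le_iff_mem]; exact mem_sp hi
  · rw [finrank_span_singleton h0]; exact ha.2.le

/-- distinct vertices: face containing a nonzero element of a contains a -/
lemma vsub {v : ι → V} {I a F : Finset ι} (ha : Fk v I 1 a) (hF : IsFc v I F) {i : ι} (hia : i ∈ a)
    (h0 : v i ≠ 0) (hiF : i ∈ F) : a ⊆ F := by
  classical
  have h := (ha.1.inter hF).eq_of_rk (Finset.inter_subset_left) ha.1.1 (by
    have := rk_pos (v := v) (I := a ∩ F) (by simp [hia, hiF]) h0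
    have := ha.2; omega)
  rw [← h]; exact Finset.inter_subset_right

lemma step {v : ι → V} {I a : Finset ι} (hp : Ptd v I) (ha : Fk v I 1 a) (g : V →ₗ[ℝ] ℝ)
    (hga : sp v a ≤ LinearMap.ker g) {i : ι} (hi : i ∈ I) (hg : 0 < g (v i)) :
    ∃ e b, Fk v I 2 e ∧ a ⊆ e ∧ b ⊆ e ∧ Fk v I 1 b ∧ ∀ j ∈ b, v j ≠ 0 → 0 < g (v j) := by
  obtain ⟨e, he, hge⟩ := exists_vertex_pos (ct_ptd ha.1) ((sp v a).liftQ g hga) hi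
    (by simpa [ct] using hg)
  obtain ⟨k, hk, hk0⟩ := exists_ne_zero (v := ct v a) (I := e) (by have := he.2; omega)
  have hgk : 0 < g (v k) := by simpa [ct] using hge k hk hk0
  have he' := (ct_Fk ha).1 he
  obtain ⟨b, hb, hbg⟩ := exists_vertex_pos (hp.mono he'.1.1.1) g hk hgk
  exact ⟨e, b, he'.1, he'.2, hb.1.1, ⟨he'.1.1.trans hb.1, hb.2⟩, hbg⟩

open Classical in
noncomputable def faces (v : ι → V) (I : Finset ι) (r : ℕ) : Finset (Finset ι) :=
  I.powerset.filter (fun A => Fk v I r A)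

lemma mem_faces {v : ι → V} {I A : Finset ι} {r : ℕ} : A ∈ faces v I r ↔ Fk v I r A := by
  classical
  unfold faces
  rw [Finset.mem_filter, Finset.mem_powerset]
  exact ⟨fun h => h.2, fun h => ⟨h.1.1, h⟩⟩

lemma count (n : ℕ) : ∀ (V : Type u) [AddCommGroup V] [Module ℝ V] [FiniteDimensional ℝ V]
    (v : ι → V) (I : Finset ι) (_ : Ptd v I) (_ : rk v I = n) (j : ℕ),
    n.choose j ≤ (faces v I j).card := by
  classical
  induction n with
  | zero =>
    intro V _ _ _ v I hp hr j
    cases j with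
    | zero =>
      simp only [Nat.choose_self]
      exact Finset.card_pos.2 ⟨_, mem_faces.2 (zero_face hp)⟩
    | succ j => simp
  | succ n ih =>
    intro V _ _ _ v I hp hr j
    cases j with
    | zero =>
      simp only [Nat.choose_zero_right]
      exact Finset.card_pos.2 ⟨_, mem_faces.2 (zero_face hp)⟩
    | succ j =>
      obtain ⟨a, ha⟩ := exists_vertex hp hr
      obtain ⟨i, hia, h0⟩ := exists_ne_zero (v := v) (I := a) (by have := ha.2; omega)
      obtain ⟨B, hB, hiB⟩ := facet hp (ha.1.1 hia) h0 hr
      have h1 := ih _ (ct v a) I (ct_ptd ha.1)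
        (by have := ct_rk (v := v) ha.1.1; have := ha.2; omega) j
      have h2 := ih _ v B (hp.mono hB.1.1) hB.2 (j + 1)
      rw [Nat.choose_succ_succ]
      refine (add_le_add h1 h2).trans ?_
      rw [← Finset.card_union_of_disjoint]
      · apply Finset.card_le_card
        intro F hF
        rw [Finset.mem_union, mem_faces, mem_faces, ct_Fk ha] at hF
        rw [mem_faces]
        rcases hF with h | h
        · exact h.1
        · exact ⟨hB.1.trans h.1, h.2⟩
      · rw [Finset.disjoint_left]
        intro F hF hF'
        rw [mem_faces, ct_Fk ha] at hF
        rw [mem_faces] at hF'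
        exact hiB (hF'.1.1 (hF.2 hia))

end FG


namespace FG
universe u
open Module

set_option linter.unusedSectionVars false
variable {ι : Type} {V : Type u} [AddCommGroup V] [Module ℝ V] [FiniteDimensional ℝ V]

def VA (v : ι → V) (I : Finset ι) (X : Finset ι → Prop) (a b : Finset ι) : Prop :=
  Fk v I 1 a ∧ Fk v I 1 b ∧ ¬ X a ∧ ¬ X b ∧ ∃ e, Fk v I 2 e ∧ a ⊆ e ∧ b ⊆ e

lemma VA.symm {v : ι → V} {I : Finset ι} {X : Finset ι → Prop} {a b : Finset ι}
    (h : VA v I X a b) : VA v I X b a := by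
  obtain ⟨h1, h2, h3, h4, e, h5, h6, h7⟩ := h
  exact ⟨h2, h1, h4, h3, e, h5, h7, h6⟩

lemma rtg_symm {α : Type*} {R : α → α → Prop} (hR : ∀ a b, R a b → R b a) {a b : α}
    (h : Relation.ReflTransGen R a b) : Relation.ReflTransGen R b a := by
  induction h with
  | refl => exact .refl
  | tail _ h ih => exact Relation.ReflTransGen.head (hR _ _ h) ih

def Pos (v : ι → V) (g : V →ₗ[ℝ] ℝ) (a : Finset ι) : Prop := ∀ i ∈ a, v i ≠ 0 → 0 < g (v i)

lemma pos_of {v : ι → V} {I a : Finset ι} (hp : Ptd v I) (ha : Fk v I 1 a) {g : V →ₗ[ℝ] ℝ} {i : ι}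
    (hi : i ∈ a) (hg : 0 < g (v i)) : Pos v g a := by
  obtain ⟨l, hl⟩ := hp
  obtain ⟨k, hk, hk0, hs⟩ := vrep ha
  have key : ∀ j ∈ a, v j ≠ 0 → ∃ c : ℝ, 0 < c ∧ v j = c • v k := by
    intro j hj hj0
    have := mem_sp (v := v) hj
    rw [hs, Submodule.mem_span_singleton] at this
    obtain ⟨c, hc⟩ := this
    refine ⟨c, ?_, hc.symm⟩
    have h1 := hl j (ha.1.1 hj) hj0
    rw [← hc, map_smul, smul_eq_mul] at h1
    exact (pos_iff_pos_of_mul_pos h1).2 (hl k (ha.1.1 hk) hk0)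
  have hi0 : v i ≠ 0 := by rintro h; simp [h] at hg
  intro j hj hj0
  obtain ⟨c, hc, hcj⟩ := key j hj hj0
  obtain ⟨d, hd, hdi⟩ := key i hi hi0
  rw [hdi, map_smul, smul_eq_mul] at hg
  rw [hcj, map_smul, smul_eq_mul]
  exact mul_pos hc ((pos_iff_pos_of_mul_pos hg).1 hd)

lemma climb {v : ι → V} {I B : Finset ι} {l : V →ₗ[ℝ] ℝ} (hl : ∀ i ∈ I, v i ≠ 0 → 0 < l (v i))
    (g : V →ₗ[ℝ] ℝ) (t : ℝ) (hBI : B ⊆ I)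
    (hB : ∀ j ∈ I, 0 ≤ (t • l - g) (v j) ∧ ((t • l - g) (v j) = 0 ↔ j ∈ B))
    {k : ι} (hk : k ∈ B) (hk0 : v k ≠ 0) {a : Finset ι} (ha : Fk v I 1 a) (hpa : Pos v g a) :
    ∃ b, Fk v I 1 b ∧ b ⊆ B ∧ Relation.ReflTransGen (VA v I (fun a => ¬ Pos v g a)) a b := by
  classical
  haveI : Nonempty ι := ⟨k⟩
  choose! rep hrep using (fun b (hb : Fk v I 1 b) => vrep hb)
  obtain ⟨b, hb, hmax⟩ := Finset.exists_max_image ((faces v I 1).filter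
    (fun b => Pos v g b ∧ Relation.ReflTransGen (VA v I (fun a => ¬ Pos v g a)) a b))
    (fun b => g (v (rep b)) / l (v (rep b))) ⟨a, by
      rw [Finset.mem_filter, mem_faces]; exact ⟨ha, hpa, .refl⟩⟩
  rw [Finset.mem_filter, mem_faces] at hb
  obtain ⟨hb, hpb, hab⟩ := hb
  obtain ⟨hi, hi0, hs⟩ := hrep b hb
  set i := rep b with hidef
  have hiI := hb.1.1 hi
  refine ⟨b, hb, ?_, hab⟩
  by_cases hiB : i ∈ B
  · exact vsub hb ⟨hBI, _, hB⟩ hi hi0 hiB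
  exfalso
  have hli := hl i hiI hi0
  have hgi := hpb i hi hi0
  have hm : 0 < (t • l - g) (v i) :=
    lt_of_le_of_ne (hB i hiI).1 (fun h => hiB ((hB i hiI).2.1 h.symm))
  simp only [LinearMap.sub_apply, LinearMap.smul_apply, smul_eq_mul] at hm
  set ρ := g (v i) / l (v i) with hρ
  have hρ0 : 0 < ρ := div_pos hgi hli
  have hρt : ρ < t := by rw [hρ, div_lt_iff₀ hli]; linarith
  have hz : (g - ρ • l) (v i) = 0 := by simp [hρ, hli.ne']
  have hker : sp v b ≤ LinearMap.ker (g - ρ • l) := by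
    rw [hs, Submodule.span_singleton_le_iff_mem]; exact hz
  have hlk := hl k (hBI hk) hk0
  have hkpos : 0 < (g - ρ • l) (v k) := by
    have := (hB k (hBI hk)).2.2 hk
    simp only [LinearMap.sub_apply, LinearMap.smul_apply, smul_eq_mul] at this ⊢
    nlinarith
  obtain ⟨e, b', he, hbe, hbe', hb', hpb'⟩ := step ⟨l, hl⟩ hb _ hker (hBI hk) hkpos
  have hP : Pos v g b' := by
    intro j hj hj0
    have h1 := hpb' j hj hj0
    have h2 := hl j (hb'.1.1 hj) hj0
    simp only [LinearMap.sub_apply, LinearMap.smul_apply, smul_eq_mul] at h1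
    have := mul_pos hρ0 h2
    linarith
  have h3 := hmax b' (by
    rw [Finset.mem_filter, mem_faces]
    exact ⟨hb', hP, hab.tail ⟨hb, hb', not_not.2 hpb, not_not.2 hP, e, he, hbe, hbe'⟩⟩)
  obtain ⟨hj, hj0, -⟩ := hrep b' hb'
  have h1 := hpb' _ hj hj0
  simp only [LinearMap.sub_apply, LinearMap.smul_apply, smul_eq_mul] at h1
  rw [div_le_iff₀ (hl _ (hb'.1.1 hj) hj0)] at h3
  linarith

lemma all_conn (n : ℕ) : ∀ {v : ι → V} {I : Finset ι}, Ptd v I → rk v I = n → ∀ {a b : Finset ι},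
    Fk v I 1 a → Fk v I 1 b → Relation.ReflTransGen (VA v I (fun _ => False)) a b := by
  induction n with
  | zero =>
    intro v I hp hr a b ha hb
    have := rk_mono (v := v) ha.1.1
    have := ha.2; omega
  | succ n ih =>
    intro v I hp hr a b ha hb
    rcases Nat.eq_zero_or_pos n with rfl | hn
    · have h1 := ha.1.eq_of_rk ha.1.1 (Finset.Subset.refl _) (by rw [hr, ha.2])
      have h2 := hb.1.eq_of_rk hb.1.1 (Finset.Subset.refl _) (by rw [hr, hb.2])
      rw [h1, h2]
    obtain ⟨i, hi, hi0⟩ := exists_ne_zero (v := v) (I := I) (by omega)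
    obtain ⟨B, hB, -⟩ := facet hp hi hi0 hr
    obtain ⟨k, hk, hk0⟩ := exists_ne_zero (v := v) (I := B) (by have := hB.2; omega)
    obtain ⟨l, hl⟩ := id hp
    obtain ⟨hBI, m, hm⟩ := id hB.1
    obtain ⟨C, hC⟩ := (I.finite_toSet.image (fun i => m (v i) / l (v i))).bddAbove
    set g := (C + 1) • l - m with hg
    have hpos : ∀ a, Fk v I 1 a → Pos v g a := by
      intro a ha j hj hj0
      have h0 := hl j (ha.1.1 hj) hj0
      have h1 : m (v j) / l (v j) ≤ C := hC ⟨j, ha.1.1 hj, rfl⟩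
      rw [div_le_iff₀ h0] at h1
      simp only [hg, LinearMap.sub_apply, LinearMap.smul_apply, smul_eq_mul]
      nlinarith
    have hmm : (C + 1) • l - g = m := by simp [hg]
    rw [← hmm] at hm
    obtain ⟨a', ha', haB, hpa⟩ := climb hl g (C + 1) hBI hm hk hk0 ha (hpos a ha)
    obtain ⟨b', hb', hbB, hpb⟩ := climb hl g (C + 1) hBI hm hk hk0 hb (hpos b hb)
    have hmono : ∀ x y, VA v I (fun a => ¬ Pos v g a) x y → VA v I (fun _ => False) x y :=
      fun x y h => ⟨h.1, h.2.1, not_false, not_false, h.2.2.2.2⟩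
    have hmid := ih (hp.mono hBI) hB.2 (a := a') (b := b') ⟨ha'.1.restrict haB hBI, ha'.2⟩
      ⟨hb'.1.restrict hbB hBI, hb'.2⟩
    have hmid' : Relation.ReflTransGen (VA v I (fun _ => False)) a' b' := by
      refine Relation.ReflTransGen.mono ?_ _ _ hmid
      rintro x y ⟨h1, h2, h3, h4, e, h5, h6⟩
      exact ⟨⟨hB.1.trans h1.1, h1.2⟩, ⟨hB.1.trans h2.1, h2.2⟩, h3, h4, e,
        ⟨hB.1.trans h5.1, h5.2⟩, h6⟩
    exact (Relation.ReflTransGen.mono hmono _ _ hpa).trans (hmid'.trans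
      (rtg_symm (fun _ _ => VA.symm) (Relation.ReflTransGen.mono hmono _ _ hpb)))

lemma pos_conn {v : ι → V} {I : Finset ι} (hp : Ptd v I) (g : V →ₗ[ℝ] ℝ) {a b : Finset ι}
    (ha : Fk v I 1 a) (hb : Fk v I 1 b) (hpa : Pos v g a) (hpb : Pos v g b) :
    Relation.ReflTransGen (VA v I (fun a => ¬ Pos v g a)) a b := by
  obtain ⟨i, hi, hi0⟩ := exists_ne_zero (v := v) (I := a) (by have := ha.2; omega)
  obtain ⟨l, hl⟩ := id hp
  obtain ⟨t, ht, T, hTI, hT, k, hk, hk0⟩ := top_face hl g (ha.1.1 hi) (hpa i hi hi0)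
  obtain ⟨a', ha', haB, hpa⟩ := climb hl g t hTI hT hk hk0 ha hpa
  obtain ⟨b', hb', hbB, hpb⟩ := climb hl g t hTI hT hk hk0 hb hpb
  have hTF : IsFc v I T := ⟨hTI, _, hT⟩
  have hmid := all_conn _ (hp.mono hTI) rfl (a := a') (b := b') ⟨ha'.1.restrict haB hTI, ha'.2⟩
      ⟨hb'.1.restrict hbB hTI, hb'.2⟩
  have hpos : ∀ a, a ⊆ T → Pos v g a := by
    intro a ha j hj hj0
    have h1 := (hT j (hTI (ha hj))).2.2 (ha hj)
    simp only [LinearMap.sub_apply, LinearMap.smul_apply, smul_eq_mul] at h1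
    have := mul_pos ht (hl j (hTI (ha hj)) hj0)
    linarith
  refine hpa.trans (Relation.ReflTransGen.trans ?_ (rtg_symm (fun _ _ => VA.symm) hpb))
  refine Relation.ReflTransGen.mono ?_ _ _ hmid
  rintro x y ⟨h1, h2, h3, h4, e, h5, h6⟩
  exact ⟨⟨hTF.trans h1.1, h1.2⟩, ⟨hTF.trans h2.1, h2.2⟩, not_not.2 (hpos _ h1.1.1),
    not_not.2 (hpos _ h2.1.1), e, ⟨hTF.trans h5.1, h5.2⟩, h6⟩

lemma balinski_aux {v : ι → V} {I : Finset ι} (hp : Ptd v I) (X : Finset ι → Prop)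
    (g : V →ₗ[ℝ] ℝ) (hX : ∀ a, X a → sp v a ≤ LinearMap.ker g) {a b : Finset ι}
    (ha : Fk v I 1 a) (hb : Fk v I 1 b) (hXa : ¬ X a) (hXb : ¬ X b)
    (hga : sp v a ≤ LinearMap.ker g) {j : ι} (hj : j ∈ I) (hgj : 0 < g (v j))
    (hgb : sp v b ≤ LinearMap.ker g ∨ Pos v g b) :
    Relation.ReflTransGen (VA v I X) a b := by
  have hXP : ∀ x, Fk v I 1 x → Pos v g x → ¬ X x := by
    intro x hx hpx hXx
    obtain ⟨i, hi, hi0⟩ := exists_ne_zero (v := v) (I := x) (by have := hx.2; omega)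
    have h1 := hpx i hi hi0
    have h2 : g (v i) = 0 := hX x hXx (mem_sp hi)
    linarith
  have hup : ∀ x, Fk v I 1 x → ¬ X x → sp v x ≤ LinearMap.ker g →
      ∃ y, Fk v I 1 y ∧ Pos v g y ∧ VA v I X x y := by
    intro x hx hXx hgx
    obtain ⟨e, y, he, hxe, hye, hy, hpy⟩ := step hp hx g hgx hj hgj
    exact ⟨y, hy, hpy, hx, hy, hXx, hXP y hy hpy, e, he, hxe, hye⟩
  have hmono : ∀ x y, VA v I (fun a => ¬ Pos v g a) x y → VA v I X x y :=
    fun x y h => ⟨h.1, h.2.1, hXP x h.1 (not_not.1 h.2.2.1), hXP y h.2.1 (not_not.1 h.2.2.2.1),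
      h.2.2.2.2⟩
  obtain ⟨a', ha', hpa', haa'⟩ := hup a ha hXa hga
  obtain ⟨b', hb', hpb', hbb'⟩ : ∃ y, Fk v I 1 y ∧ Pos v g y ∧
      Relation.ReflTransGen (VA v I X) y b := by
    rcases hgb with h | h
    · obtain ⟨y, hy, hpy, hxy⟩ := hup b hb hXb h
      exact ⟨y, hy, hpy, .single hxy.symm⟩
    · exact ⟨b, hb, h, .refl⟩
  exact (Relation.ReflTransGen.single haa').trans
    ((Relation.ReflTransGen.mono hmono _ _ (pos_conn hp g ha' hb' hpa' hpb')).trans hbb')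

lemma balinski {v : ι → V} {I : Finset ι} (hp : Ptd v I) (X : Finset ι → Prop)
    (W : Submodule ℝ V) (hW : finrank ℝ W + 2 ≤ rk v I) (hX : ∀ a, X a → sp v a ≤ W)
    {a b : Finset ι} (ha : Fk v I 1 a) (hb : Fk v I 1 b) (hXa : ¬ X a) (hXb : ¬ X b) :
    Relation.ReflTransGen (VA v I X) a b := by
  have hfr : finrank ℝ ↥(W ⊔ sp v a) < rk v I := by
    have h1 := Submodule.finrank_add_le_finrank_add_finrank W (sp v a)
    have h2 : finrank ℝ (sp v a) = 1 := ha.2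
    omega
  obtain ⟨j, hj, hjW⟩ := exists_notMem hfr
  obtain ⟨g, hgk, hgj⟩ := sep _ hjW
  have hWg : W ≤ LinearMap.ker g := le_sup_left.trans hgk
  have hag : sp v a ≤ LinearMap.ker g := le_sup_right.trans hgk
  obtain ⟨i, hi, hi0, hs⟩ := vrep hb
  rcases lt_trichotomy (g (v i)) 0 with h | h | h
  · have hb' : 0 < (-g) (v i) := by simpa using h
    have hkk : LinearMap.ker (-g) = LinearMap.ker g := by ext x; simp
    exact balinski_aux hp X (-g) (fun a ha => by rw [hkk]; exact (hX a ha).trans hWg) ha hb hXa hXb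
      (by rw [hkk]; exact hag) (hb.1.1 hi) hb' (Or.inr (pos_of hp hb hi hb'))
  · refine balinski_aux hp X g (fun a ha => (hX a ha).trans hWg) ha hb hXa hXb hag hj hgj (Or.inl ?_)
    rw [hs, Submodule.span_singleton_le_iff_mem]; exact h
  · exact balinski_aux hp X g (fun a ha => (hX a ha).trans hWg) ha hb hXa hXb hag hj hgj
      (Or.inr (pos_of hp hb hi h))

end FG


namespace FG
universe u
open Module

set_option linter.unusedSectionVars false
variable {ι : Type} {V : Type u} [AddCommGroup V] [Module ℝ V] [FiniteDimensional ℝ V]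

def Ad (v : ι → V) (I : Finset ι) (U : Finset (Finset ι)) (r : ℕ) (F G : Finset ι) : Prop :=
  F ∉ U ∧ G ∉ U ∧ Fk v I r F ∧ Fk v I r G ∧ ∃ H, Fk v I (r + 1) H ∧ F ⊆ H ∧ G ⊆ H

lemma Ad.symm {v : ι → V} {I : Finset ι} {U : Finset (Finset ι)} {r : ℕ} {a b : Finset ι}
    (h : Ad v I U r a b) : Ad v I U r b a := by
  obtain ⟨h1, h2, h3, h4, e, h5, h6, h7⟩ := h
  exact ⟨h2, h1, h4, h3, e, h5, h7, h6⟩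

def MC (ι : Type) (r n : ℕ) : Prop := ∀ (V : Type u) [AddCommGroup V] [Module ℝ V]
  [FiniteDimensional ℝ V] (v : ι → V) (I : Finset ι) (_ : Ptd v I) (_ : rk v I = n)
  (U : Finset (Finset ι)) (_ : ∀ F ∈ U, Fk v I r F) (_ : U.card < r * (n - r))
  (F F' : Finset ι) (_ : Fk v I r F) (_ : Fk v I r F') (_ : F ∉ U) (_ : F' ∉ U),
  Relation.ReflTransGen (Ad v I U r) F F'

open Classical in
lemma good_conn {r n : ℕ} (ih : MC.{u} ι r n) {v : ι → V} {I : Finset ι}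
    (hr : rk v I = n + 1) {U : Finset (Finset ι)} (hU : ∀ F ∈ U, Fk v I (r + 1) F)
    {a : Finset ι} (ha : Fk v I 1 a) (hc : (U.filter (fun F => a ⊆ F)).card < r * (n - r))
    {F F' : Finset ι} (hF : Fk v I (r + 1) F) (hF' : Fk v I (r + 1) F') (hFU : F ∉ U)
    (hFU' : F' ∉ U) (haF : a ⊆ F) (haF' : a ⊆ F') :
    Relation.ReflTransGen (Ad v I U (r + 1)) F F' := by
  have := ih _ (ct v a) I (ct_ptd ha.1)
    (by have := ct_rk (v := v) ha.1.1; have := ha.2; omega) (U.filter (fun F => a ⊆ F))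
    (fun F hF => by
      rw [Finset.mem_filter] at hF
      exact (ct_Fk ha).2 ⟨hU F hF.1, hF.2⟩) hc F F' ((ct_Fk ha).2 ⟨hF, haF⟩)
      ((ct_Fk ha).2 ⟨hF', haF'⟩) (fun h => hFU (Finset.mem_filter.1 h).1)
      (fun h => hFU' (Finset.mem_filter.1 h).1)
  refine Relation.ReflTransGen.mono ?_ _ _ this
  rintro x y ⟨h1, h2, h3, h4, H, h5, h6⟩
  rw [ct_Fk ha] at h3 h4 h5
  exact ⟨fun h => h1 (Finset.mem_filter.2 ⟨h, h3.2⟩), fun h => h2 (Finset.mem_filter.2 ⟨h, h4.2⟩),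
    h3.1, h4.1, H, h5.1, h6⟩

lemma exists_above {v : ι → V} {I F : Finset ι} {r : ℕ} (hF : Fk v I r F) (hr : r < rk v I) :
    ∃ H, Fk v I (r + 1) H ∧ F ⊆ H := by
  obtain ⟨H, hH⟩ := exists_vertex (n := rk v I - r - 1) (ct_ptd hF.1)
    (by have := ct_rk (v := v) hF.1.1; have := hF.2; omega)
  rw [ct_Fk hF, add_comm] at hH
  exact ⟨H, hH⟩

open Classical in
lemma count_above {v : ι → V} {I A : Finset ι} {s n : ℕ} (hA : Fk v I s A) (hr : rk v I = n) (j : ℕ) :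
    (n - s).choose j ≤ ((faces v I (j + s)).filter (fun F => A ⊆ F)).card := by
  have := count (n - s) _ (ct v A) I (ct_ptd hA.1)
    (by have := ct_rk (v := v) hA.1.1; have := hA.2; omega) j
  refine this.trans (Finset.card_le_card fun F hF => ?_)
  rw [mem_faces, ct_Fk hA] at hF
  rw [Finset.mem_filter, mem_faces]; exact hF

lemma vert_eq {v : ι → V} {I a b : Finset ι} (ha : Fk v I 1 a) (hb : Fk v I 1 b) (h : a ⊆ b) :
    a = b := ha.1.eq_of_rk h hb.1.1 (by rw [ha.2, hb.2])

lemma vert_notMem {v : ι → V} {I a b : Finset ι} (ha : Fk v I 1 a) (hb : Fk v I 1 b) (h : a ≠ b)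
    {j : ι} (hj : j ∈ b) (hj0 : v j ≠ 0) : j ∉ a := fun hja =>
  h (vert_eq hb ha (vsub hb ha.1 hj hj0 hja)).symm

lemma two_le {v : ι → V} {I a b F : Finset ι} (ha : Fk v I 1 a) (hb : Fk v I 1 b) (h : a ≠ b)
    (hF : F ⊆ I) (haF : a ⊆ F) (hbF : b ⊆ F) : 2 ≤ rk v F := by
  have := ha.1.rk_lt haF hF (by
    rintro rfl
    exact h (vert_eq hb ha hbF).symm)
  have := ha.2; omega

lemma edge_sub {v : ι → V} {I a b e F : Finset ι} (ha : Fk v I 1 a) (hb : Fk v I 1 b) (h : a ≠ b)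
    (he : Fk v I 2 e) (hF : IsFc v I F) (hae : a ⊆ e) (hbe : b ⊆ e) (haF : a ⊆ F) (hbF : b ⊆ F) :
    e ⊆ F := by
  classical
  have h1 := two_le ha hb h (he.1.inter hF).1 (Finset.subset_inter hae haF)
    (Finset.subset_inter hbe hbF)
  have := (he.1.inter hF).eq_of_rk Finset.inter_subset_left he.1.1 (by rw [he.2]; exact h1)
  rw [← this]; exact Finset.inter_subset_right

lemma cover_unique {v : ι → V} {I e F H H' : Finset ι} {r : ℕ} (hF : Fk v I r F)
    (hH : Fk v I (r + 1) H) (hH' : Fk v I (r + 1) H') (heF : ¬ e ⊆ F) (h1 : F ⊆ H) (h2 : F ⊆ H')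
    (h3 : e ⊆ H) (h4 : e ⊆ H') : H = H' := by
  classical
  have hi := hH.1.inter hH'.1
  have hne : F ≠ H ∩ H' := by
    rintro rfl
    exact heF (Finset.subset_inter h3 h4)
  have hlt := hF.1.rk_lt (Finset.subset_inter h1 h2) hi.1 hne
  rw [hF.2] at hlt
  have e1 := hi.eq_of_rk Finset.inter_subset_left hH.1.1 (by rw [hH.2]; omega)
  have e2 := hi.eq_of_rk Finset.inter_subset_right hH'.1.1 (by rw [hH'.2]; omega)
  rw [← e1, e2]

lemma facet_avoid {v : ι → V} {I a b H : Finset ι} {r : ℕ} (ha : Fk v I 1 a) (hb : Fk v I 1 b)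
    (h : a ≠ b) (hH : Fk v I (r + 2) H) (haH : a ⊆ H) (hbH : b ⊆ H) :
    ∃ F, Fk v I (r + 1) F ∧ F ⊆ H ∧ a ⊆ F ∧ ¬ b ⊆ F := by
  obtain ⟨j, hj, hj0⟩ := exists_ne_zero (v := v) (I := b) (by have := hb.2; omega)
  have hja := vert_notMem ha hb h hj hj0
  have haH' : Fk v H 1 a := ⟨ha.1.restrict haH hH.1.1, ha.2⟩
  obtain ⟨B, hB, hjB⟩ := facet (m := r) (ct_ptd haH'.1) (hbH hj)
    (fun h => hja (haH'.1.mem_of_sp (hbH hj) (ct_zero.1 h)))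
    (by have := ct_rk (v := v) haH'.1.1; have := ha.2; have := hH.2; omega)
  rw [ct_Fk haH'] at hB
  exact ⟨B, ⟨hH.1.trans hB.1.1, hB.1.2⟩, hB.1.1.1, hB.2, fun hbB => hjB (hbB hj)⟩

def GoodE (v : ι → V) (I : Finset ι) (U : Finset (Finset ι)) (r : ℕ) (a b : Finset ι) : Prop :=
  ∃ H F G, Fk v I (r + 1) H ∧ Fk v I r F ∧ Fk v I r G ∧ F ⊆ H ∧ G ⊆ H ∧ F ∉ U ∧ G ∉ U ∧ a ⊆ F ∧ b ⊆ G

open Classical in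
lemma bad_edge {v : ι → V} {I a b e : Finset ι} {U : Finset (Finset ι)} {r n : ℕ}
    (hn : rk v I = n) (hrn : r + 2 < n) (ha : Fk v I 1 a) (hb : Fk v I 1 b) (hab : a ≠ b)
    (he : Fk v I 2 e) (hae : a ⊆ e) (hbe : b ⊆ e) (hbad : ¬ GoodE v I U (r + 2) a b) :
    (n - 2).choose r ≤ (U.filter (fun F => a ⊆ F ∧ b ⊆ F)).card ∧
    (n - 2).choose (r + 1) ≤
      (U.filter (fun F => (a ⊆ F ∧ ¬ b ⊆ F) ∨ (b ⊆ F ∧ ¬ a ⊆ F))).card := by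
  constructor
  · refine (count_above he hn r).trans (Finset.card_le_card fun F hF => ?_)
    rw [Finset.mem_filter, mem_faces] at hF
    rw [Finset.mem_filter]
    refine ⟨?_, hae.trans hF.2, hbe.trans hF.2⟩
    by_contra hFU
    obtain ⟨H, hH, hFH⟩ := exists_above hF.1 (by omega)
    exact hbad ⟨H, F, F, hH, hF.1, hF.1, hFH, hFH, hFU, hFU, hae.trans hF.2, hbe.trans hF.2⟩
  · have key : ∀ H, Fk v I (r + 3) H → e ⊆ H → ∃ F ∈ U, Fk v I (r + 2) F ∧ F ⊆ H ∧
        ((a ⊆ F ∧ ¬ b ⊆ F) ∨ (b ⊆ F ∧ ¬ a ⊆ F)) := by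
      intro H hH heH
      obtain ⟨F, hF, hFH, haF, hbF⟩ := facet_avoid ha hb hab hH (hae.trans heH) (hbe.trans heH)
      obtain ⟨G, hG, hGH, hbG, haG⟩ :=
        facet_avoid hb ha hab.symm hH (hbe.trans heH) (hae.trans heH)
      by_cases hFU : F ∈ U
      · exact ⟨F, hFU, hF, hFH, Or.inl ⟨haF, hbF⟩⟩
      by_cases hGU : G ∈ U
      · exact ⟨G, hGU, hG, hGH, Or.inr ⟨hbG, haG⟩⟩
      exact absurd ⟨H, F, G, hH, hF, hG, hFH, hGH, hFU, hGU, haF, hbG⟩ hbad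
    choose! f hf using key
    refine (count_above he hn (r + 1)).trans (Finset.card_le_card_of_injOn f ?_ ?_)
    · intro H hH
      rw [Finset.mem_coe, Finset.mem_filter, mem_faces] at hH
      obtain ⟨h1, h2, h3, h4⟩ := hf H hH.1 hH.2
      rw [Finset.mem_coe, Finset.mem_filter]
      exact ⟨h1, h4⟩
    · intro H hH H' hH' hEq
      rw [Finset.mem_coe, Finset.mem_filter, mem_faces] at hH hH'
      obtain ⟨h1, h2, h3, h4⟩ := hf H hH.1 hH.2
      obtain ⟨h1', h2', h3', h4'⟩ := hf H' hH'.1 hH'.2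
      rw [← hEq] at h3'
      refine cover_unique h2 hH.1 hH'.1 (e := e) ?_ h3 h3' hH.2 hH'.2
      intro heF
      rcases h4 with h | h
      · exact h.2 (hbe.trans heF)
      · exact h.2 (hae.trans heF)

lemma assembly {v : ι → V} {I : Finset ι} {U : Finset (Finset ι)} {r : ℕ} (hp : Ptd v I)
    (X : Finset ι → Prop) (W : Submodule ℝ V) (hW : finrank ℝ W + 2 ≤ rk v I)
    (hX : ∀ a, X a → sp v a ≤ W)
    (hgood : ∀ a, Fk v I 1 a → ¬ X a → ∀ F F', Fk v I r F → Fk v I r F' → F ∉ U → F' ∉ U →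
      a ⊆ F → a ⊆ F' → Relation.ReflTransGen (Ad v I U r) F F')
    (hedge : ∀ a b e, Fk v I 1 a → Fk v I 1 b → a ≠ b → ¬ X a → ¬ X b → Fk v I 2 e → a ⊆ e → b ⊆ e →
      GoodE v I U r a b)
    {F F' a a' : Finset ι} (hF : Fk v I r F) (hF' : Fk v I r F') (hFU : F ∉ U) (hFU' : F' ∉ U)
    (ha : Fk v I 1 a) (ha' : Fk v I 1 a') (hXa : ¬ X a) (hXa' : ¬ X a') (haF : a ⊆ F)
    (haF' : a' ⊆ F') : Relation.ReflTransGen (Ad v I U r) F F' := by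
  have hpath := balinski hp X W hW hX ha ha' hXa hXa'
  clear hXa'
  induction hpath generalizing F' with
  | refl => exact hgood a ha hXa F F' hF hF' hFU hFU' haF haF'
  | @tail b c _ hbc ih =>
    obtain ⟨hb, hc, hXb, hXc, e, he, hbe, hce⟩ := hbc
    by_cases hne : b = c
    · subst hne; exact ih hF' hFU' hb haF'
    obtain ⟨H, G, G', hH, hG, hG', hGH, hGH', hGU, hGU', hbG, hcG⟩ :=
      hedge b c e hb hc hne hXb hXc he hbe hce
    exact ((ih hG hGU hb hbG).tail ⟨hGU, hGU', hG, hG', H, hH, hGH, hGH'⟩).trans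
      (hgood c hc hXc G' F' hG' hF' hGU' hFU' hcG haF')

lemma choose1 (a b : ℕ) : a * b + 1 ≤ (a + b).choose a := by
  induction a generalizing b with
  | zero => simp
  | succ a iha =>
    induction b with
    | zero => simp
    | succ b ihb =>
      have h := Nat.choose_succ_succ (a + 1 + b) a
      have h1 := iha (b + 1)
      rw [show a + 1 + (b + 1) = (a + 1 + b) + 1 by ring, h]
      rw [show a + (b + 1) = a + 1 + b by ring] at h1
      nlinarith

lemma choose2 (a b : ℕ) : (a + 3) * (b + 3) ≤ (a + 2 + (b + 3)).choose (a + 2) := by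
  induction a with
  | zero =>
    have h : 0 + 2 + (b + 3) = b + 5 := by ring
    rw [h, show 0 + 2 = 2 from rfl, Nat.choose_two_right, Nat.le_div_iff_mul_le (by norm_num)]
    simp only [show b + 5 - 1 = b + 4 from rfl]
    nlinarith
  | succ a ih =>
    rw [show a + 1 + 2 + (b + 3) = (a + 2 + (b + 3)) + 1 by ring,
      show a + 1 + 2 = (a + 2) + 1 by ring, Nat.choose_succ_succ]
    have h := choose1 (a + 3) (b + 2)
    rw [show a + 3 + (b + 2) = a + 2 + (b + 3) by ring] at h
    simp only [Nat.succ_eq_add_one, show a + 2 + 1 = a + 3 from rfl]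
    nlinarith

lemma sp_union [DecidableEq ι] (v : ι → V) (A B : Finset ι) : sp v (A ∪ B) = sp v A ⊔ sp v B := by
  unfold sp
  rw [Finset.coe_union, Set.image_union, Submodule.span_union]

lemma rk_union_le [DecidableEq ι] (v : ι → V) (A B : Finset ι) : rk v (A ∪ B) ≤ rk v A + rk v B := by
  unfold rk
  rw [sp_union]
  exact Submodule.finrank_add_le_finrank_add_finrank _ _

lemma rk_empty (v : ι → V) : rk v ∅ = 0 := by
  have : sp v ∅ = ⊥ := by rw [eq_bot_iff, sp_le]; simp
  rw [rk, this, finrank_bot]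

open Classical in
lemma dcount {α β : Type*} (S : Finset α) (U : Finset β) (R : α → β → Prop) :
    ∑ a ∈ S, (U.filter (fun b => R a b)).card = ∑ b ∈ U, (S.filter (fun a => R a b)).card := by
  simp only [Finset.card_filter]
  exact Finset.sum_comm

open Classical in
lemma rk_biUnion {v : ι → V} (T : Finset (Finset ι)) (hT : ∀ a ∈ T, rk v a = 1) :
    rk v (T.biUnion id) ≤ T.card := by
  induction T using Finset.induction_on with
  | empty => simp [rk_empty]
  | insert a T ha ih =>
    rw [Finset.biUnion_insert, Finset.card_insert_of_notMem ha]
    have h1 := rk_union_le v (id a) (T.biUnion id)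
    have h2 := hT a (Finset.mem_insert_self _ _)
    have h3 := ih fun b hb => hT b (Finset.mem_insert_of_mem hb)
    simp only [id] at *
    omega

open Classical in
lemma indep {v : ι → V} (T : Finset (Finset ι)) (hT : ∀ a ∈ T, rk v a = 1) (m : ℕ)
    (hm : m ≤ rk v (T.biUnion id)) : ∃ S ⊆ T, S.card = m ∧ rk v (S.biUnion id) = m := by
  induction m with
  | zero => exact ⟨∅, by simp, by simp, by simp [rk_empty]⟩
  | succ m ih =>
    obtain ⟨S, hST, hSc, hSr⟩ := ih (by omega)
    obtain ⟨i, hi, hiS⟩ := exists_notMem (v := v) (I := T.biUnion id) (W := sp v (S.biUnion id))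
      (by unfold rk at *; omega)
    obtain ⟨a, haT, hia⟩ := Finset.mem_biUnion.1 hi
    have haS : a ∉ S := fun h => hiS (mem_sp (Finset.mem_biUnion.2 ⟨a, h, hia⟩))
    have hsub : insert a S ⊆ T := Finset.insert_subset haT hST
    have hc : (insert a S).card = m + 1 := by rw [Finset.card_insert_of_notMem haS, hSc]
    refine ⟨insert a S, hsub, hc, le_antisymm ?_ ?_⟩
    · have := rk_biUnion (v := v) (insert a S) (fun b hb => hT b (hsub hb)); omega
    · rw [← hSr]
      apply Submodule.finrank_lt_finrank_of_lt
      refine lt_of_le_of_ne (sp_mono (Finset.biUnion_subset_biUnion_of_subset_left _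
        (Finset.subset_insert _ _))) fun h => hiS ?_
      rw [h]
      exact mem_sp (Finset.mem_biUnion.2 ⟨a, Finset.mem_insert_self _ _, hia⟩)

lemma MC1 (n : ℕ) (hn : 2 ≤ n) : MC.{u} ι 1 n := by
  classical
  intro V _ _ _ v I hp hr U hU hc F F' hF hF' hFU hFU'
  have h1 := rk_biUnion (v := v) U (fun a ha => (hU a ha).2)
  have := balinski hp (fun a => a ∈ U) (sp v (U.biUnion id)) (by unfold rk at h1; omega)
    (fun a ha => sp_mono (Finset.subset_biUnion_of_mem id ha)) hF hF' hFU hFU'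
  refine Relation.ReflTransGen.mono ?_ _ _ this
  rintro x y ⟨h1, h2, h3, h4, h5⟩
  exact ⟨h3, h4, h1, h2, h5⟩

lemma MC3 (r n : ℕ) (hrn : r + 6 ≤ n) (ih : MC.{u} ι (r + 2) (n - 1)) : MC.{u} ι (r + 3) n := by
  classical
  intro V _ _ _ v I hp hr U hU hc F F' hF hF' hFU hFU'
  obtain ⟨s, rfl⟩ : ∃ s, n = r + 6 + s := ⟨n - (r + 6), by omega⟩
  rw [show r + 6 + s - 1 = r + 5 + s by omega] at ih
  rw [show r + 6 + s - (r + 3) = s + 3 by omega] at hc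
  set Bd := (faces v I 1).filter
    (fun a => (r + 2) * (s + 3) ≤ (U.filter (fun F => a ⊆ F)).card) with hBd
  have hBd1 : ∀ a ∈ Bd, Fk v I 1 a := fun a ha => mem_faces.1 (Finset.mem_filter.1 ha).1
  have hrank : rk v (Bd.biUnion id) ≤ r + 2 := by
    by_contra hlt
    obtain ⟨S, hS, hSc, hSr⟩ := indep Bd (fun a ha => (hBd1 a ha).2) (r + 3) (by omega)
    have h1 : ∑ a ∈ S, (U.filter (fun F => a ⊆ F)).card =
        ∑ F ∈ U, (S.filter (fun a => a ⊆ F)).card := by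
      convert dcount S U (fun a F => a ⊆ F)
    have h2 : S.card * ((r + 2) * (s + 3)) ≤ ∑ a ∈ S, (U.filter (fun F => a ⊆ F)).card := by
      rw [← smul_eq_mul]
      exact Finset.card_nsmul_le_sum _ _ _ fun a ha => (Finset.mem_filter.1 (hS ha)).2
    have h3 : ∑ F ∈ U, (S.filter (fun a => a ⊆ F)).card ≤
        ∑ F ∈ U, ((r + 2) + if S.biUnion id ⊆ F then 1 else 0) := by
      refine Finset.sum_le_sum fun F hF => ?_
      split_ifs with hsub
      · exact (Finset.card_filter_le _ _).trans (by omega)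
      · have : (S.filter (fun a => a ⊆ F)).card < S.card := by
          apply Finset.card_lt_card
          refine Finset.filter_ssubset.2 ?_
          by_contra hcon
          push Not at hcon
          exact hsub (Finset.biUnion_subset.2 hcon)
        omega
    rw [Finset.sum_add_distrib, Finset.sum_const, smul_eq_mul, ← Finset.card_filter] at h3
    have h4 : (U.filter (fun F => S.biUnion id ⊆ F)).card ≤ 1 := by
      rw [Finset.card_le_one]
      intro A hA B hB
      rw [Finset.mem_filter] at hA hB
      have hA' := hU A hA.1
      have hB' := hU B hB.1
      have hi := hA'.1.inter hB'.1
      have h5 := rk_mono (v := v) (Finset.subset_inter hA.2 hB.2)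
      have e1 := hi.eq_of_rk Finset.inter_subset_left hA'.1.1 (by rw [hA'.2]; omega)
      have e2 := hi.eq_of_rk Finset.inter_subset_right hB'.1.1 (by rw [hB'.2]; omega)
      rw [← e1, e2]
    rw [hSc] at h2
    have h6 : U.card + 1 ≤ (r + 3) * (s + 3) := hc
    have h7 := Nat.mul_le_mul_right (r + 2) h6
    nlinarith
  have hvert : ∀ F, Fk v I (r + 3) F → ∃ a, Fk v I 1 a ∧ a ∉ Bd ∧ a ⊆ F := by
    intro F hF
    obtain ⟨i, hi, hiW⟩ := exists_notMem (v := v) (I := F) (W := sp v (Bd.biUnion id))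
      (by rw [hF.2]; unfold rk at hrank; omega)
    obtain ⟨g, hgk, hg⟩ := sep _ hiW
    obtain ⟨a, ha, hpos⟩ := exists_vertex_pos (hp.mono hF.1.1) g hi hg
    refine ⟨a, ⟨hF.1.trans ha.1, ha.2⟩, fun haB => ?_, ha.1.1⟩
    obtain ⟨j, hj, hj0⟩ := exists_ne_zero (v := v) (I := a) (by have := ha.2; omega)
    have h1 := hpos j hj hj0
    have h2 : g (v j) = 0 := hgk (mem_sp (Finset.mem_biUnion.2 ⟨a, haB, hj⟩))
    linarith
  obtain ⟨a, ha, haB, haF⟩ := hvert F hF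
  obtain ⟨a', ha', haB', haF'⟩ := hvert F' hF'
  refine assembly hp (fun a => a ∈ Bd) (sp v (Bd.biUnion id)) (by unfold rk at *; omega)
    (fun a ha => sp_mono (Finset.subset_biUnion_of_mem id ha)) ?_ ?_ hF hF' hFU hFU' ha ha' haB haB'
    haF haF'
  · intro a ha haB F F' hF hF' hFU hFU' haF haF'
    refine good_conn ih (by omega) hU ha ?_ hF hF' hFU hFU' haF haF'
    rw [show r + 5 + s - (r + 2) = s + 3 by omega]
    by_contra hcon
    exact haB (Finset.mem_filter.2 ⟨mem_faces.2 ha, not_lt.1 hcon⟩)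
  · intro a b e ha hb hab _ _ he hae hbe
    by_contra hbad
    obtain ⟨h1, h2⟩ := bad_edge (r := r + 1) hr (by omega) ha hb hab he hae hbe hbad
    have h3 : (U.filter (fun F => a ⊆ F ∧ b ⊆ F)).card +
        (U.filter (fun F => (a ⊆ F ∧ ¬ b ⊆ F) ∨ (b ⊆ F ∧ ¬ a ⊆ F))).card ≤ U.card := by
      rw [← Finset.card_union_of_disjoint]
      · exact Finset.card_le_card (Finset.union_subset (Finset.filter_subset _ _)
          (Finset.filter_subset _ _))
      · rw [Finset.disjoint_filter]; tauto
    have h4 := choose2 r s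
    rw [show r + 2 + (s + 3) = (r + 4 + s) + 1 by ring, show r + 2 = (r + 1) + 1 by ring,
      Nat.choose_succ_succ] at h4
    rw [show r + 6 + s - 2 = r + 4 + s by omega] at h1 h2
    simp only [Nat.succ_eq_add_one] at h4
    omega

end FG


namespace FG
universe u
open Module

set_option linter.unusedSectionVars false
variable {ι : Type} {V : Type u} [AddCommGroup V] [Module ℝ V] [FiniteDimensional ℝ V]

lemma other_end {v : ι → V} {I a e : Finset ι} (hp : Ptd v I) (ha : Fk v I 1 a) (he : Fk v I 2 e) :
    ∃ b, Fk v I 1 b ∧ b ⊆ e ∧ b ≠ a := by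
  obtain ⟨i, hi, hiW⟩ := exists_notMem (v := v) (I := e) (W := sp v a)
      (by rw [he.2]; have := ha.2; unfold rk at this; omega)
  obtain ⟨g, hgk, hg⟩ := sep _ hiW
  obtain ⟨b, hb, hpos⟩ := exists_vertex_pos (hp.mono he.1.1) g hi hg
  refine ⟨b, ⟨he.1.trans hb.1, hb.2⟩, hb.1.1, ?_⟩
  rintro rfl
  obtain ⟨j, hj, hj0⟩ := exists_ne_zero (v := v) (I := b) (by have := hb.2; omega)
  have h1 := hpos j hj hj0
  have h2 : g (v j) = 0 := hgk (mem_sp hj)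
  linarith

lemma three_verts {v : ι → V} {I a b c e : Finset ι} (ha : Fk v I 1 a) (hb : Fk v I 1 b)
    (hc : Fk v I 1 c) (he : Fk v I 2 e) (hae : a ⊆ e) (hbe : b ⊆ e) (hce : c ⊆ e)
    (hab : a ≠ b) (hac : a ≠ c) (hbc : b ≠ c) : False := by
  classical
  obtain ⟨i, hi, hi0, hsa⟩ := vrep ha
  obtain ⟨j, hj, hj0, hsb⟩ := vrep hb
  obtain ⟨k, hk, hk0, hsc⟩ := vrep hc
  have hiI := ha.1.1 hi
  have hjI := hb.1.1 hj
  have hkI := hc.1.1 hk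
  have hdim : sp v (a ∪ b) = sp v e := by
    apply Submodule.eq_of_le_of_finrank_le (sp_mono (Finset.union_subset hae hbe))
    have := two_le ha hb hab (Finset.union_subset ha.1.1 hb.1.1) Finset.subset_union_left
      Finset.subset_union_right
    have h2 := he.2
    unfold rk at this h2
    omega
  have hkm : v k ∈ sp v a ⊔ sp v b := by
    rw [← sp_union, hdim]; exact mem_sp (hce hk)
  rw [hsa, hsb, Submodule.mem_sup] at hkm
  obtain ⟨y, hy, z, hz, hyz⟩ := hkm
  obtain ⟨α, rfl⟩ := Submodule.mem_span_singleton.1 hy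
  obtain ⟨β, rfl⟩ := Submodule.mem_span_singleton.1 hz
  obtain ⟨-, la, hla⟩ := id ha.1
  obtain ⟨-, lb, hlb⟩ := id hb.1
  obtain ⟨-, lc, hlc⟩ := id hc.1
  have pos : ∀ {x : Finset ι} {l : V →ₗ[ℝ] ℝ} {m : ι}, (∀ i ∈ I, 0 ≤ l (v i) ∧ (l (v i) = 0 ↔ i ∈ x)) →
      m ∈ I → m ∉ x → 0 < l (v m) := fun h hm hmx =>
    lt_of_le_of_ne (h _ hm).1 (fun h0 => hmx ((h _ hm).2.1 h0.symm))
  have a1 : la (v i) = 0 := (hla i hiI).2.2 hi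
  have a2 := pos hla hjI (vert_notMem ha hb hab hj hj0)
  have a3 := pos hla hkI (vert_notMem ha hc hac hk hk0)
  have b1 : lb (v j) = 0 := (hlb j hjI).2.2 hj
  have b2 := pos hlb hiI (vert_notMem hb ha hab.symm hi hi0)
  have b3 := pos hlb hkI (vert_notMem hb hc hbc hk hk0)
  have c1 : lc (v k) = 0 := (hlc k hkI).2.2 hk
  have c2 := pos hlc hiI (vert_notMem hc ha hac.symm hi hi0)
  have c3 := pos hlc hjI (vert_notMem hc hb hbc.symm hj hj0)
  rw [← hyz] at a3 b3 c1
  simp only [map_add, map_smul, smul_eq_mul, a1, b1, mul_zero, zero_add, add_zero] at a3 b3 c1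
  have hβ := (pos_iff_pos_of_mul_pos a3).2 a2
  have hα := (pos_iff_pos_of_mul_pos b3).2 b2
  have := mul_pos hα c2
  have := mul_pos hβ c3
  linarith

open Classical in
lemma inter_le_one {v : ι → V} {I a b : Finset ι} {U : Finset (Finset ι)}
    (hU : ∀ F ∈ U, Fk v I 2 F) (ha : Fk v I 1 a) (hb : Fk v I 1 b) (hab : a ≠ b) :
    (U.filter (fun F => a ⊆ F) ∩ U.filter (fun F => b ⊆ F)).card ≤ 1 := by
  rw [Finset.card_le_one]
  intro A hA B hB
  simp only [Finset.mem_inter, Finset.mem_filter] at hA hB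
  have h1 := hU A hA.1.1
  have h2 := hU B hB.1.1
  exact Finset.Subset.antisymm
    (edge_sub ha hb hab h1 h2.1 hA.1.2 hA.2.2 hB.1.2 hB.2.2)
    (edge_sub ha hb hab h2 h1.1 hB.1.2 hB.2.2 hA.1.2 hA.2.2)

open Classical in
lemma heavy_card {v : ι → V} {I : Finset ι} {U : Finset (Finset ι)} (s : ℕ)
    (hU : ∀ F ∈ U, Fk v I 2 F) (hc : U.card < 2 * (s + 3)) (X : Finset (Finset ι))
    (hX : ∀ a ∈ X, Fk v I 1 a ∧ s + 5 ≤ 2 * (U.filter (fun F => a ⊆ F)).card) :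
    X.card ≤ s + 3 := by
  have h1 : ∑ a ∈ X, (U.filter (fun F => a ⊆ F)).card = ∑ F ∈ U, (X.filter (fun a => a ⊆ F)).card := by
    convert dcount X U (fun a F => a ⊆ F)
  have h2 : ∑ F ∈ U, (X.filter (fun a => a ⊆ F)).card ≤ U.card * 2 := by
    rw [← smul_eq_mul]
    refine Finset.sum_le_card_nsmul _ _ _ fun F hF => ?_
    by_contra hcon
    obtain ⟨a, b, c, ha, hb, hc, hab, hac, hbc⟩ := Finset.two_lt_card_iff.1 (not_le.1 hcon)
    rw [Finset.mem_filter] at ha hb hc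
    exact three_verts (hX a ha.1).1 (hX b hb.1).1 (hX c hc.1).1 (hU F hF) ha.2 hb.2 hc.2 hab hac hbc
  rw [← h1] at h2
  have h3 : ∀ m, (∀ a ∈ X, m ≤ (U.filter (fun F => a ⊆ F)).card) → X.card * m ≤ U.card * 2 := by
    intro m hm
    refine le_trans ?_ h2
    rw [← smul_eq_mul]
    exact Finset.card_nsmul_le_sum _ _ _ hm
  by_contra hcon
  have h4 := h3 ((s + 6) / 2) (fun a ha => by have := (hX a ha).2; omega)
  rcases Nat.eq_zero_or_pos s with rfl | hs
  · simp only [Nat.zero_add, show 6 / 2 = 3 from rfl] at h4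
    omega
  · have h5 : s + 5 ≤ 2 * ((s + 6) / 2) := by omega
    have h6 : X.card * (s + 5) ≤ X.card * (2 * ((s + 6) / 2)) := Nat.mul_le_mul_left _ h5
    have h7 : (s + 4) * (s + 5) ≤ X.card * (s + 5) := Nat.mul_le_mul_right _ (by omega)
    nlinarith

open Classical in
lemma reach {v : ι → V} {I : Finset ι} {U : Finset (Finset ι)} (s : ℕ) (hp : Ptd v I)
    (hr : rk v I = s + 5)
    (hU : ∀ F ∈ U, Fk v I 2 F) (hc : U.card < 2 * (s + 3)) (X : Finset (Finset ι))
    (hX : ∀ a, a ∈ X ↔ Fk v I 1 a ∧ s + 5 ≤ 2 * (U.filter (fun F => a ⊆ F)).card)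
    (hXc : X.card ≤ s + 3)
    (hgood : ∀ a, Fk v I 1 a → (U.filter (fun F => a ⊆ F)).card < s + 3 →
      ∀ F F', Fk v I 2 F → Fk v I 2 F' → F ∉ U → F' ∉ U →
      a ⊆ F → a ⊆ F' → Relation.ReflTransGen (Ad v I U 2) F F')
    {F : Finset ι} (hF : Fk v I 2 F) (hFU : F ∉ U) :
    ∃ F₁ a, Relation.ReflTransGen (Ad v I U 2) F F₁ ∧ Fk v I 2 F₁ ∧ F₁ ∉ U ∧ Fk v I 1 a ∧ a ∉ X ∧
      a ⊆ F₁ := by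
  by_contra hcon
  have hin : ∀ F₁ a, Relation.ReflTransGen (Ad v I U 2) F F₁ → Fk v I 2 F₁ → F₁ ∉ U → Fk v I 1 a →
      a ⊆ F₁ → a ∈ X := by
    intro F₁ a h1 h2 h3 h4 h5
    by_contra h6
    exact hcon ⟨F₁, a, h1, h2, h3, h4, h6, h5⟩
  clear hcon
  set d : Finset ι → ℕ := fun a => (U.filter (fun F => a ⊆ F)).card with hd
  set Y := X.filter (fun a => d a < s + 3 ∧ ∃ F₁, Relation.ReflTransGen (Ad v I U 2) F F₁ ∧
    Fk v I 2 F₁ ∧ F₁ ∉ U ∧ a ⊆ F₁) with hY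
  set Bd := X.filter (fun a => s + 3 ≤ d a) with hBd
  have hdisj : Disjoint Y Bd := by
    rw [Finset.disjoint_filter]
    intro x _ h1 h2
    omega
  set T := Y ∪ Bd with hT
  have hTc : T.card = Y.card + Bd.card := Finset.card_union_of_disjoint hdisj
  have hTX : T ⊆ X := Finset.union_subset (Finset.filter_subset _ _) (Finset.filter_subset _ _)
  have hTX' := Finset.card_le_card hTX
  have hX1 : ∀ a ∈ X, Fk v I 1 a := fun a ha => ((hX a).1 ha).1
  -- classification of vertices reached
  have hcl : ∀ F₁ a, Relation.ReflTransGen (Ad v I U 2) F F₁ → Fk v I 2 F₁ → F₁ ∉ U → Fk v I 1 a →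
      a ⊆ F₁ → a ∈ T := by
    intro F₁ a h1 h2 h3 h4 h5
    have h6 := hin F₁ a h1 h2 h3 h4 h5
    by_cases h7 : d a < s + 3
    · exact Finset.mem_union_left _ (Finset.mem_filter.2 ⟨h6, h7, F₁, h1, h2, h3, h5⟩)
    · exact Finset.mem_union_right _ (Finset.mem_filter.2 ⟨h6, not_lt.1 h7⟩)
  have hYne : 0 < Y.card := by
    rw [Finset.card_pos]
    obtain ⟨a, ha⟩ := exists_vertex (n := 1) (hp.mono hF.1.1) hF.2
    have ha' : Fk v I 1 a := ⟨hF.1.trans ha.1, ha.2⟩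
    obtain ⟨b, hb, hbF, hba⟩ := other_end hp ha' hF
    have h1 := hcl F a .refl hF hFU ha' ha.1.1
    have h2 := hcl F b .refl hF hFU hb hbF
    rcases Finset.mem_union.1 h1 with h1 | h1
    · exact ⟨a, h1⟩
    rcases Finset.mem_union.1 h2 with h2 | h2
    · exact ⟨b, h2⟩
    exfalso
    have h3 := (Finset.mem_filter.1 h1).2
    have h4 := (Finset.mem_filter.1 h2).2
    have hdis : Disjoint (U.filter (fun F => a ⊆ F)) (U.filter (fun F => b ⊆ F)) := by
      rw [Finset.disjoint_filter]
      intro G hG h5 h6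
      have h7 := edge_sub ha' hb hba.symm hF (hU G hG).1 ha.1.1 hbF h5 h6
      have h8 := hF.1.eq_of_rk h7 (hU G hG).1.1 (by rw [hF.2, (hU G hG).2])
      exact hFU (h8 ▸ hG)
    have h9 := Finset.card_union_of_disjoint hdis
    have h10 := Finset.card_le_card (Finset.union_subset
      (Finset.filter_subset (fun F => a ⊆ F) U) (Finset.filter_subset (fun F => b ⊆ F) U))
    simp only [hd] at h3 h4
    omega
  set D : Finset ι → Finset (Finset ι) := fun y =>
    U.filter (fun e => y ⊆ e ∧ ∃ z, Fk v I 1 z ∧ z ∉ T ∧ z ⊆ e) with hD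
  have hDc : ∀ y ∈ Y, s + 5 ≤ (D y).card + T.card := by
    intro y hy
    have hyT : y ∈ T := Finset.mem_union_left _ hy
    have hy1 := hX1 y (hTX hyT)
    obtain ⟨hyX, hyd, F₁, hF₁, hF₁2, hF₁U, hyF₁⟩ := Finset.mem_filter.1 hy
    have hcount := count_above hy1 hr 1
    rw [Nat.choose_one_right, show s + 5 - 1 = s + 4 from rfl] at hcount
    set E := (faces v I (1 + 1)).filter (fun F => y ⊆ F) with hE
    have hsplit : E ⊆ D y ∪ E.filter (fun e => ∃ z, z ∈ T ∧ z ≠ y ∧ z ⊆ e) := by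
      intro e he
      have he' := he
      rw [hE, Finset.mem_filter, mem_faces] at he'
      obtain ⟨he2, hye⟩ := he'
      rw [Finset.mem_union, or_iff_not_imp_right]
      intro hno
      have hno' : ∀ z, z ∈ T → z ≠ y → ¬ z ⊆ e := by
        intro z h1 h2 h3
        exact hno (Finset.mem_filter.2 ⟨he, z, h1, h2, h3⟩)
      obtain ⟨z, hz, hze, hzy⟩ := other_end hp hy1 he2
      have hzT : z ∉ T := fun h => hno' z h hzy hze
      refine Finset.mem_filter.2 ⟨?_, hye, z, hz, hzT, hze⟩
      by_contra heU
      exact hzT (hcl e z (hF₁.trans (hgood y hy1 hyd F₁ e hF₁2 he2 hF₁U heU hyF₁ hye)) he2 heU hz hze)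
    have hE' : (E.filter (fun e => ∃ z, z ∈ T ∧ z ≠ y ∧ z ⊆ e)).card ≤ (T.erase y).card := by
      have : ∀ e ∈ E.filter (fun e => ∃ z, z ∈ T ∧ z ≠ y ∧ z ⊆ e), ∃ z, z ∈ T ∧ z ≠ y ∧ z ⊆ e :=
        fun e he => (Finset.mem_filter.1 he).2
      choose! f hf using this
      refine Finset.card_le_card_of_injOn f (fun e he => ?_) ?_
      · have := hf e he
        exact Finset.mem_coe.2 (Finset.mem_erase.2 ⟨this.2.1, this.1⟩)
      · intro e he e' he' hee
        have h1 := hf e he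
        have h2 := hf e' he'
        rw [← hee] at h2
        rw [Finset.mem_coe, Finset.mem_filter, hE, Finset.mem_filter, mem_faces] at he he'
        have hz := hX1 _ (hTX h1.1)
        exact Finset.Subset.antisymm
          (edge_sub hy1 hz h1.2.1.symm he.1.1 he'.1.1.1 he.1.2 h1.2.2 he'.1.2 h2.2.2)
          (edge_sub hy1 hz h1.2.1.symm he'.1.1 he.1.1.1 he'.1.2 h2.2.2 he.1.2 h1.2.2)
    rw [Finset.card_erase_of_mem hyT] at hE'
    have h1 := Finset.card_le_card hsplit
    have h2 := Finset.card_union_le (D y) (E.filter (fun e => ∃ z, z ∈ T ∧ z ≠ y ∧ z ⊆ e))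
    have h3 : 0 < T.card := Finset.card_pos.2 ⟨y, hyT⟩
    omega
  have hDU : Y.biUnion D ⊆ U := Finset.biUnion_subset.2 fun y _ => Finset.filter_subset _ _
  have hDsum : Y.card * (s + 5 - T.card) ≤ (Y.biUnion D).card := by
    rw [Finset.card_biUnion]
    · rw [← smul_eq_mul]
      exact Finset.card_nsmul_le_sum _ _ _ fun y hy => by have := hDc y hy; omega
    · intro y hy y' hy' hne
      change Disjoint (D y) (D y')
      rw [Finset.disjoint_left]
      intro e he he'
      obtain ⟨heU, hye, z, hz, hzT, hze⟩ := Finset.mem_filter.1 he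
      obtain ⟨-, hye', -⟩ := Finset.mem_filter.1 he'
      have hyT : y ∈ T := Finset.mem_union_left _ hy
      have hyT' : y' ∈ T := Finset.mem_union_left _ hy'
      exact three_verts (hX1 y (hTX hyT)) (hX1 y' (hTX hyT')) hz (hU e heU) hye hye' hze hne
        (fun h => hzT (h ▸ hyT)) (fun h => hzT (h ▸ hyT'))
  have hDB : ∀ b ∈ Bd, Disjoint (Y.biUnion D) (U.filter (fun F => b ⊆ F)) := by
    intro b hb
    rw [Finset.disjoint_left]
    intro e he he'
    obtain ⟨y, hy, he⟩ := Finset.mem_biUnion.1 he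
    obtain ⟨heU, hye, z, hz, hzT, hze⟩ := Finset.mem_filter.1 he
    obtain ⟨-, hbe⟩ := Finset.mem_filter.1 he'
    have hyT : y ∈ T := Finset.mem_union_left _ hy
    have hbT : b ∈ T := Finset.mem_union_right _ hb
    exact three_verts (hX1 y (hTX hyT)) (hX1 b (hTX hbT)) hz (hU e heU) hye hbe hze
      (fun h => Finset.disjoint_left.1 hdisj hy (h ▸ hb))
      (fun h => hzT (h ▸ hyT)) (fun h => hzT (h ▸ hbT))
  rcases Nat.lt_or_ge Bd.card 2 with hB2 | hB2
  · rcases Nat.eq_zero_or_pos Bd.card with hB0 | hB1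
    · -- no bad vertices
      rcases Nat.lt_or_ge Y.card 2 with hY2 | hY2
      · obtain ⟨y, hy⟩ := Finset.card_pos.1 hYne
        have h1 := hDc y hy
        have h2 := (Finset.mem_filter.1 hy).2.1
        have h3 : (D y).card ≤ d y := by
          apply Finset.card_le_card
          intro e he
          obtain ⟨heU, hye, -⟩ := Finset.mem_filter.1 he
          exact Finset.mem_filter.2 ⟨heU, hye⟩
        omega
      · have h1 := Finset.card_le_card hDU
        obtain ⟨p, hp'⟩ : ∃ p, Y.card = p + 2 := ⟨Y.card - 2, by omega⟩
        obtain ⟨w, hw⟩ : ∃ w, s = w + p + 2 - 3 ∧ w + p + 2 ≥ 3 := ⟨s + 3 - (p + 2), by omega, by omega⟩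
        have h4 : s + 5 - T.card = w + 2 := by omega
        rw [h4, hp'] at hDsum
        have : U.card < 2 * (w + p + 2) := by omega
        nlinarith
    · have hB1' : Bd.card = 1 := by omega
      obtain ⟨b, hb⟩ := Finset.card_pos.1 hB1
      have h1 := Finset.card_union_of_disjoint (hDB b hb)
      have h2 := Finset.card_le_card (Finset.union_subset hDU (Finset.filter_subset (fun F => b ⊆ F) U))
      have h3 : s + 3 ≤ (U.filter (fun F => b ⊆ F)).card := (Finset.mem_filter.1 hb).2
      obtain ⟨p, hp'⟩ : ∃ p, Y.card = p + 1 := ⟨Y.card - 1, by omega⟩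
      obtain ⟨w, hw⟩ : ∃ w, s + 3 = w + p + 2 := ⟨s + 3 - (p + 2), by omega⟩
      have h4 : s + 5 - T.card = w + 2 := by omega
      rw [h4, hp'] at hDsum
      have : (Y.biUnion D).card + (w + p + 2) < 2 * (w + p + 2) := by omega
      nlinarith
  · obtain ⟨b, hb, c, hc', hbc⟩ := Finset.one_lt_card.1 hB2
    have h1 := inter_le_one hU (hX1 b (hTX (Finset.mem_union_right _ hb)))
      (hX1 c (hTX (Finset.mem_union_right _ hc'))) hbc
    have h2 := Finset.card_union_add_card_inter (U.filter (fun F => b ⊆ F)) (U.filter (fun F => c ⊆ F))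
    have h3 : s + 3 ≤ (U.filter (fun F => b ⊆ F)).card := (Finset.mem_filter.1 hb).2
    have h4 : s + 3 ≤ (U.filter (fun F => c ⊆ F)).card := (Finset.mem_filter.1 hc').2
    have h5 : Disjoint (Y.biUnion D) (U.filter (fun F => b ⊆ F) ∪ U.filter (fun F => c ⊆ F)) := by
      rw [Finset.disjoint_union_right]; exact ⟨hDB b hb, hDB c hc'⟩
    have h6 := Finset.card_union_of_disjoint h5
    have h7 := Finset.card_le_card (Finset.union_subset hDU (Finset.union_subset
      (Finset.filter_subset (fun F => b ⊆ F) U) (Finset.filter_subset (fun F => c ⊆ F) U)))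
    have h8 : 0 < Y.card * (s + 5 - T.card) := Nat.mul_pos hYne (by omega)
    omega

lemma MC2 (n : ℕ) (hn : 5 ≤ n) : MC.{u} ι 2 n := by
  classical
  intro V _ _ _ v I hp hr U hU hc F F' hF hF' hFU hFU'
  obtain ⟨s, rfl⟩ : ∃ s, n = s + 5 := ⟨n - 5, by omega⟩
  rw [show s + 5 - 2 = s + 3 from rfl] at hc
  set X := (faces v I 1).filter
    (fun a => s + 5 ≤ 2 * (U.filter (fun F => a ⊆ F)).card) with hXd
  have hX : ∀ a, a ∈ X ↔ Fk v I 1 a ∧ s + 5 ≤ 2 * (U.filter (fun F => a ⊆ F)).card := by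
    intro a; rw [hXd, Finset.mem_filter, mem_faces]
  have hXc : X.card ≤ s + 3 := heavy_card s hU hc X (fun a ha => by
    have := (hX a).1 ha
    refine ⟨this.1, this.2.trans (le_of_eq ?_)⟩
    congr)
  have hgood : ∀ a, Fk v I 1 a → (U.filter (fun F => a ⊆ F)).card < s + 3 →
      ∀ F F', Fk v I 2 F → Fk v I 2 F' → F ∉ U → F' ∉ U →
      a ⊆ F → a ⊆ F' → Relation.ReflTransGen (Ad v I U 2) F F' := by
    intro a ha hac F F' hF hF' hFU hFU' haF haF'
    refine good_conn (MC1 (s + 4) (by omega)) hr hU ha ?_ hF hF' hFU hFU' haF haF'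
    rw [show 1 * (s + 4 - 1) = s + 3 by omega]
    refine lt_of_le_of_lt (le_of_eq ?_) hac
    congr
  obtain ⟨G, a, hFG, hG, hGU, ha, haX, haG⟩ := reach s hp hr hU hc X
    (fun a => by rw [hX a]) hXc
    (fun a h1 h2 => hgood a h1 (by convert h2)) hF hFU
  obtain ⟨G', a', hFG', hG', hGU', ha', haX', haG'⟩ := reach s hp hr hU hc X
    (fun a => by rw [hX a]) hXc
    (fun a h1 h2 => hgood a h1 (by convert h2)) hF' hFU'
  refine hFG.trans (Relation.ReflTransGen.trans ?_ (rtg_symm (fun _ _ => Ad.symm) hFG'))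
  have h1 := rk_biUnion (v := v) X (fun a ha => ((hX a).1 ha).1.2)
  refine assembly hp (fun a => a ∈ X) (sp v (X.biUnion id)) (by unfold rk at *; omega)
    (fun a ha => sp_mono (Finset.subset_biUnion_of_mem id ha)) ?_ ?_ hG hG' hGU hGU' ha ha' haX haX'
    haG haG'
  · intro a ha haX
    refine hgood a ha ?_
    by_contra hcon
    exact haX ((hX a).2 ⟨ha, by omega⟩)
  · intro a b e ha hb hab haX hbX he hae hbe
    by_contra hbad
    obtain ⟨h1, h2⟩ := bad_edge (r := 0) hr (by omega) ha hb hab he hae hbe hbad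
    rw [Nat.choose_zero_right] at h1
    rw [show 0 + 1 = 1 from rfl, Nat.choose_one_right, show s + 5 - 2 = s + 3 from rfl] at h2
    have h3 : (U.filter (fun F => a ⊆ F)).card + (U.filter (fun F => b ⊆ F)).card =
        2 * (U.filter (fun F => a ⊆ F ∧ b ⊆ F)).card +
        (U.filter (fun F => (a ⊆ F ∧ ¬ b ⊆ F) ∨ (b ⊆ F ∧ ¬ a ⊆ F))).card := by
      simp only [Finset.card_filter]
      rw [Finset.mul_sum, ← Finset.sum_add_distrib, ← Finset.sum_add_distrib]
      refine Finset.sum_congr rfl fun F _ => ?_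
      by_cases h : a ⊆ F <;> by_cases h' : b ⊆ F <;> simp [h, h']
    have h4 : ¬ _ := fun h => haX ((hX a).2 ⟨ha, h⟩)
    have h5 : ¬ _ := fun h => hbX ((hX b).2 ⟨hb, h⟩)
    have h6 : 1 ≤ (U.filter (fun F => a ⊆ F ∧ b ⊆ F)).card := by convert h1
    have h7 : s + 3 ≤ (U.filter (fun F => (a ⊆ F ∧ ¬ b ⊆ F) ∨ (b ⊆ F ∧ ¬ a ⊆ F))).card := by
      convert h2
    omega

theorem MCall (r : ℕ) : ∀ n, r + 4 ≤ n → MC.{u} ι (r + 1) n := by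
  induction r with
  | zero => intro n hn; exact MC1 n (by omega)
  | succ r ih =>
    intro n hn
    rcases r with _ | r
    · exact MC2 n (by omega)
    · exact MC3 r n (by omega) (ih (n - 1) (by omega))

end FG

namespace FG
open Module

section Poly
variable {N : ℕ}

def hom (x : EuclideanSpace ℝ (Fin N)) : EuclideanSpace ℝ (Fin N) × ℝ := (x, 1)

lemma hom_ptd (I : Finset (EuclideanSpace ℝ (Fin N))) : Ptd hom I :=
  ⟨LinearMap.snd ℝ _ _, fun i _ _ => by simp [hom]⟩

lemma hom_rk {A : Finset (EuclideanSpace ℝ (Fin N))} (hA : A.Nonempty) :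
    rk hom A = sdim (convexHull ℝ (A : Set (EuclideanSpace ℝ (Fin N)))) + 1 := by
  obtain ⟨a, ha⟩ := hA
  unfold sdim rk
  rw [affineSpan_convexHull, direction_affineSpan]
  set W := vectorSpan ℝ (A : Set (EuclideanSpace ℝ (Fin N))) with hW
  have h1 : sp hom A = W.map (LinearMap.inl ℝ (EuclideanSpace ℝ (Fin N)) ℝ) ⊔
      Submodule.span ℝ {hom a} := by
    apply le_antisymm
    · rw [sp_le]
      intro i hi
      have : hom i = LinearMap.inl ℝ (EuclideanSpace ℝ (Fin N)) ℝ (i - a) + hom a := by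
        simp [hom]
      rw [this]
      refine Submodule.add_mem_sup (Submodule.mem_map_of_mem ?_) (Submodule.mem_span_singleton_self _)
      exact vsub_mem_vectorSpan ℝ (by exact_mod_cast hi) (by exact_mod_cast ha)
    · refine sup_le ?_ ?_
      · rw [Submodule.map_le_iff_le_comap, hW,
          vectorSpan_eq_span_vsub_set_right ℝ (p := a) (by exact_mod_cast ha), Submodule.span_le]
        rintro _ ⟨i, hi, rfl⟩
        have : LinearMap.inl ℝ (EuclideanSpace ℝ (Fin N)) ℝ (i - a) = hom i - hom a := by
          simp [hom]
        change LinearMap.inl ℝ (EuclideanSpace ℝ (Fin N)) ℝ (i - a) ∈ sp hom A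
        rw [this]
        exact Submodule.sub_mem _ (mem_sp (by exact_mod_cast hi)) (mem_sp ha)
      · rw [Submodule.span_singleton_le_iff_mem]
        exact mem_sp ha
  have h2 : W.map (LinearMap.inl ℝ (EuclideanSpace ℝ (Fin N)) ℝ) ⊓
      Submodule.span ℝ {hom a} = ⊥ := by
    rw [eq_bot_iff]
    rintro x ⟨hx1, hx2⟩
    obtain ⟨y, -, rfl⟩ := hx1
    obtain ⟨c, hc⟩ := Submodule.mem_span_singleton.1 hx2
    have hc2 := congrArg Prod.snd hc
    simp [hom] at hc2
    rw [← hc, hc2]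
    simp
  have h3 := Submodule.finrank_sup_add_finrank_inf_eq
    (W.map (LinearMap.inl ℝ (EuclideanSpace ℝ (Fin N)) ℝ)) (Submodule.span ℝ {hom a})
  rw [h2, finrank_bot, add_zero, finrank_span_singleton (by simp [hom]),
    ← (Submodule.equivMapOfInjective _ LinearMap.inl_injective W).finrank_eq] at h3
  rw [h1, h3]

lemma hom_sum (L : EuclideanSpace ℝ (Fin N) × ℝ →ₗ[ℝ] ℝ) (I : Finset (EuclideanSpace ℝ (Fin N)))
    (w : EuclideanSpace ℝ (Fin N) → ℝ) (hw : ∑ y ∈ I, w y = 1) :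
    L (hom (∑ y ∈ I, w y • y)) = ∑ y ∈ I, w y * L (hom y) := by
  have : hom (∑ y ∈ I, w y • y) = ∑ y ∈ I, w y • hom y := by
    apply Prod.ext
    · simp [hom, Prod.fst_sum]
    · simp [hom, Prod.snd_sum, hw]
  rw [this, map_sum]
  simp

lemma hull_ker {I A : Finset (EuclideanSpace ℝ (Fin N))} (hAI : A ⊆ I)
    {L : EuclideanSpace ℝ (Fin N) × ℝ →ₗ[ℝ] ℝ}
    (hL : ∀ i ∈ I, 0 ≤ L (hom i) ∧ (L (hom i) = 0 ↔ i ∈ A)) {x : EuclideanSpace ℝ (Fin N)}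
    (hx : x ∈ convexHull ℝ (I : Set (EuclideanSpace ℝ (Fin N)))) :
    0 ≤ L (hom x) ∧ (L (hom x) = 0 ↔ x ∈ convexHull ℝ (A : Set (EuclideanSpace ℝ (Fin N)))) := by
  rw [Finset.mem_convexHull'] at hx
  obtain ⟨w, hw0, hw1, rfl⟩ := hx
  have hnn : ∀ y ∈ I, 0 ≤ w y * L (hom y) := fun y hy => mul_nonneg (hw0 y hy) (hL y hy).1
  refine ⟨?_, ?_, ?_⟩
  · rw [hom_sum L I w hw1]
    exact Finset.sum_nonneg hnn
  · intro h
    rw [hom_sum L I w hw1, Finset.sum_eq_zero_iff_of_nonneg hnn] at h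
    have hz : ∀ y ∈ I, y ∉ A → w y = 0 := by
      intro y hy hyA
      rcases mul_eq_zero.1 (h y hy) with h | h
      · exact h
      · exact absurd ((hL y hy).2.1 h) hyA
    rw [Finset.mem_convexHull']
    refine ⟨w, fun y hy => hw0 y (hAI hy), ?_, ?_⟩
    · rw [← hw1]
      exact Finset.sum_subset hAI fun y hy hyA => hz y hy hyA
    · exact Finset.sum_subset hAI fun y hy hyA => by rw [hz y hy hyA, zero_smul]
  · intro h
    rw [Finset.mem_convexHull'] at h
    obtain ⟨u, hu0, hu1, hu⟩ := h
    rw [← hu, hom_sum L A u hu1]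
    exact Finset.sum_eq_zero fun y hy => by rw [(hL y (hAI hy)).2.2 hy, mul_zero]

lemma hull_mem {I A : Finset (EuclideanSpace ℝ (Fin N))} (hA : IsFc hom I A)
    {x : EuclideanSpace ℝ (Fin N)} (hx : x ∈ I)
    (hxA : x ∈ convexHull ℝ (A : Set (EuclideanSpace ℝ (Fin N)))) : x ∈ A := by
  obtain ⟨hAI, L, hL⟩ := hA
  exact (hL x hx).2.1 ((hull_ker hAI hL (subset_convexHull ℝ _ (by exact_mod_cast hx))).2.2 hxA)

lemma hull_sub {I A B : Finset (EuclideanSpace ℝ (Fin N))} (hA : A ⊆ I) (hB : IsFc hom I B) :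
    convexHull ℝ (A : Set (EuclideanSpace ℝ (Fin N))) ⊆
      convexHull ℝ (B : Set (EuclideanSpace ℝ (Fin N))) ↔ A ⊆ B := by
  constructor
  · intro h x hx
    exact hull_mem hB (hA hx) (h (subset_convexHull ℝ _ (by exact_mod_cast hx)))
  · intro h
    exact convexHull_mono (by exact_mod_cast h)

lemma Fk_nonempty {I A : Finset (EuclideanSpace ℝ (Fin N))} {k : ℕ} (h : Fk hom I (k + 1) A) :
    A.Nonempty := by
  obtain ⟨i, hi, -⟩ := exists_ne_zero (v := hom) (I := A) (by rw [h.2]; omega)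
  exact ⟨i, hi⟩

lemma face_of_Fk {I A : Finset (EuclideanSpace ℝ (Fin N))} {k : ℕ} (h : Fk hom I (k + 1) A) :
    IsFaceDim (convexHull ℝ (I : Set (EuclideanSpace ℝ (Fin N))))
      (convexHull ℝ (A : Set (EuclideanSpace ℝ (Fin N)))) k := by
  have hne := Fk_nonempty h
  obtain ⟨⟨hAI, L, hL⟩, hr⟩ := h
  refine ⟨fun _ => ?_, ?_, ?_⟩
  · refine ⟨LinearMap.toContinuousLinearMap (-(L ∘ₗ LinearMap.inl ℝ _ ℝ)), ?_⟩
    have key : ∀ x : EuclideanSpace ℝ (Fin N), LinearMap.toContinuousLinearMap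
        (-(L ∘ₗ LinearMap.inl ℝ (EuclideanSpace ℝ (Fin N)) ℝ)) x = L (0, 1) - L (hom x) := by
      intro x
      have : hom x = (x, 0) + (0, 1) := by simp [hom]
      rw [this, map_add]
      simp
    ext x
    simp only [key, Set.mem_ofPred_eq]
    constructor
    · intro hx
      have hxI : x ∈ convexHull ℝ (I : Set (EuclideanSpace ℝ (Fin N))) :=
        convexHull_mono (by exact_mod_cast hAI) hx
      refine ⟨hxI, fun y hy => ?_⟩
      have h1 := (hull_ker hAI hL hy).1
      have h2 := (hull_ker hAI hL hxI).2.2 hx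
      linarith
    · rintro ⟨hxI, hx⟩
      obtain ⟨a, ha⟩ := hne
      have h1 := hull_ker hAI hL hxI
      have h2 := hx a (subset_convexHull ℝ _ (by exact_mod_cast hAI ha))
      rw [(hL a (hAI ha)).2.2 ha] at h2
      exact h1.2.1 (by linarith [h1.1])
  · exact (convexHull_nonempty_iff).2 (by exact_mod_cast hne)
  · have := hom_rk hne
    omega

lemma Fk_of_face {I : Finset (EuclideanSpace ℝ (Fin N))} {k : ℕ}
    {F : Set (EuclideanSpace ℝ (Fin N))}
    (h : IsFaceDim (convexHull ℝ (I : Set (EuclideanSpace ℝ (Fin N)))) F k) :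
    ∃ A, Fk hom I (k + 1) A ∧ convexHull ℝ (A : Set (EuclideanSpace ℝ (Fin N))) = F := by
  classical
  obtain ⟨hex, hne, hd⟩ := h
  obtain ⟨l, hl⟩ := hex hne
  obtain ⟨x0, hx0⟩ := hne
  have hx0' := hx0
  rw [hl] at hx0'
  obtain ⟨hx0P, hmax⟩ := hx0'
  let L : EuclideanSpace ℝ (Fin N) × ℝ →ₗ[ℝ] ℝ :=
    (l x0) • LinearMap.snd ℝ _ ℝ - (l : EuclideanSpace ℝ (Fin N) →ₗ[ℝ] ℝ) ∘ₗ LinearMap.fst ℝ _ ℝ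
  have hLx : ∀ x, L (hom x) = l x0 - l x := fun x => by simp [L, hom]
  let A := I.filter (fun x => l x = l x0)
  have hAI : A ⊆ I := Finset.filter_subset _ _
  have hL : ∀ i ∈ I, 0 ≤ L (hom i) ∧ (L (hom i) = 0 ↔ i ∈ A) := by
    intro i hi
    have h1 := hmax i (subset_convexHull ℝ _ (by exact_mod_cast hi))
    rw [hLx]
    refine ⟨by linarith, ?_⟩
    simp only [A, Finset.mem_filter, hi, true_and]
    constructor <;> intro h <;> linarith
  have hF : convexHull ℝ (A : Set (EuclideanSpace ℝ (Fin N))) = F := by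
    rw [hl]
    ext x
    constructor
    · intro hx
      have hxI : x ∈ convexHull ℝ (I : Set (EuclideanSpace ℝ (Fin N))) :=
        convexHull_mono (by exact_mod_cast hAI) hx
      have h2 := (hull_ker hAI hL hxI).2.2 hx
      rw [hLx] at h2
      exact ⟨hxI, fun y hy => by have := hmax y hy; linarith⟩
    · rintro ⟨hxI, hx⟩
      have h1 := hull_ker hAI hL hxI
      have h2 := hx x0 hx0P
      rw [hLx] at h1
      exact h1.2.1 (by linarith [h1.1])
  have hAne : A.Nonempty := by
    rw [← hF] at hx0
    have := convexHull_nonempty_iff.1 ⟨x0, hx0⟩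
    exact_mod_cast this
  exact ⟨A, ⟨⟨hAI, L, hL⟩, by rw [hom_rk hAne, hF, hd]⟩, hF⟩

noncomputable def toFace (I : Finset (EuclideanSpace ℝ (Fin N))) (k : ℕ) :
    {A // Fk hom I (k + 1) A} ≃
      {F : Set (EuclideanSpace ℝ (Fin N)) //
        IsFaceDim (convexHull ℝ (I : Set (EuclideanSpace ℝ (Fin N)))) F k} :=
  Equiv.ofBijective (fun A => ⟨convexHull ℝ (A.1 : Set (EuclideanSpace ℝ (Fin N))), face_of_Fk A.2⟩)
    ⟨fun A B h => by
      have h' := congrArg Subtype.val h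
      exact Subtype.ext (Finset.Subset.antisymm ((hull_sub A.2.1.1 B.2.1).1 (le_of_eq h'))
        ((hull_sub B.2.1.1 A.2.1).1 (le_of_eq h'.symm))),
    fun F => by
      obtain ⟨A, hA, h⟩ := Fk_of_face F.2
      exact ⟨⟨A, hA⟩, Subtype.ext h⟩⟩

lemma toFace_val (I : Finset (EuclideanSpace ℝ (Fin N))) (k : ℕ)
    (A : {A // Fk hom I (k + 1) A}) :
    (toFace I k A).1 = convexHull ℝ (A.1 : Set (EuclideanSpace ℝ (Fin N))) := rfl

lemma main (d k : ℕ) (hk : k + 3 ≤ d) (I : Finset (EuclideanSpace ℝ (Fin N)))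
    (hdim : sdim (convexHull ℝ (I : Set (EuclideanSpace ℝ (Fin N)))) = d) :
    MConnected (faceGraph (convexHull ℝ (I : Set (EuclideanSpace ℝ (Fin N)))) k)
      ((k + 1) * (d - k)) := by
  classical
  have hIne : I.Nonempty := by
    rw [Finset.nonempty_iff_ne_empty]
    rintro rfl
    unfold sdim at hdim
    rw [Finset.coe_empty, convexHull_empty, direction_affineSpan, vectorSpan_empty,
      finrank_bot] at hdim
    omega
  have hrk : rk hom I = d + 1 := by rw [hom_rk hIne, hdim]
  have hcard : (k + 1) * (d - k) + 1 ≤ Nat.card {F : Set (EuclideanSpace ℝ (Fin N)) //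
        IsFaceDim (convexHull ℝ (I : Set (EuclideanSpace ℝ (Fin N)))) F k} := by
    rw [← Nat.card_congr (toFace I k)]
    have h1 : Nat.card {A // Fk hom I (k + 1) A} = (faces hom I (k + 1)).card := by
      rw [← Nat.card_eq_finsetCard]
      exact Nat.card_congr (Equiv.subtypeEquivRight fun A => mem_faces.symm)
    rw [h1]
    have h2 := count (d + 1) _ hom I (hom_ptd I) hrk (k + 1)
    have h3 := choose1 (k + 1) (d - k)
    rw [show k + 1 + (d - k) = d + 1 by omega] at h3
    exact h3.trans h2
  refine ⟨hcard, fun S hS hSc => ?_⟩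
  let U : Finset (Finset (EuclideanSpace ℝ (Fin N))) :=
    hS.toFinset.image (fun F => ((toFace I k).symm F).1)
  have hUc : U.card < (k + 1) * (d + 1 - (k + 1)) := by
    refine lt_of_le_of_lt Finset.card_image_le ?_
    rw [← Set.ncard_eq_toFinset_card S hS, show d + 1 - (k + 1) = d - k by omega]
    exact hSc
  have hU : ∀ F ∈ U, Fk hom I (k + 1) F := by
    intro F hF
    obtain ⟨G, -, rfl⟩ := Finset.mem_image.1 hF
    exact ((toFace I k).symm G).2
  have hmem : ∀ A (hA : Fk hom I (k + 1) A), A ∈ U ↔ toFace I k ⟨A, hA⟩ ∈ S := by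
    intro A hA
    simp only [U, Finset.mem_image, Set.Finite.mem_toFinset]
    constructor
    · rintro ⟨G, hG, rfl⟩
      simpa using hG
    · intro h
      exact ⟨_, h, by simp⟩
  have key : ∀ A (hA : Fk hom I (k + 1) A) (hAS : toFace I k ⟨A, hA⟩ ∈ Sᶜ) B,
      Relation.ReflTransGen (Ad hom I U (k + 1)) A B →
      ∀ (hB : Fk hom I (k + 1) B) (hBS : toFace I k ⟨B, hB⟩ ∈ Sᶜ),
      ((faceGraph (convexHull ℝ (I : Set (EuclideanSpace ℝ (Fin N)))) k).induce Sᶜ).Reachable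
        ⟨_, hAS⟩ ⟨_, hBS⟩ := by
    intro A hA hAS B hAB
    induction hAB with
    | refl => intro hB hBS; exact SimpleGraph.Reachable.refl _
    | @tail B C _ hBC ih =>
      intro hC hCS
      obtain ⟨hBU, -, hB, -, H, hH, hBH, hCH⟩ := hBC
      have hBS : toFace I k ⟨B, hB⟩ ∈ Sᶜ := fun h => hBU ((hmem B hB).2 h)
      refine (ih hB hBS).trans ?_
      by_cases hne : B = C
      · subst hne
        exact SimpleGraph.Reachable.refl _
      · refine SimpleGraph.Adj.reachable ?_
        rw [SimpleGraph.induce_adj]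
        unfold faceGraph
        rw [SimpleGraph.fromRel_adj]
        refine ⟨fun h => hne ?_, Or.inl ⟨_, face_of_Fk hH, ?_, ?_⟩⟩
        · have := (toFace I k).injective h
          exact congrArg Subtype.val this
        · exact (hull_sub hB.1.1 hH.1).2 hBH
        · exact (hull_sub hC.1.1 hH.1).2 hCH
  have hpre : ((faceGraph (convexHull ℝ (I : Set (EuclideanSpace ℝ (Fin N)))) k).induce
      Sᶜ).Preconnected := by
    rintro ⟨F, hF⟩ ⟨G, hG⟩
    obtain ⟨⟨A, hA⟩, rfl⟩ := (toFace I k).surjective F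
    obtain ⟨⟨B, hB⟩, rfl⟩ := (toFace I k).surjective G
    refine key A hA hF B ?_ hB hG
    exact MCall k (d + 1) (by omega) _ hom I (hom_ptd I) hrk U hU hUc A B hA hB
      (fun h => hF ((hmem A hA).1 h)) (fun h => hG ((hmem B hB).1 h))
  have hnon : (Sᶜ).Nonempty := by
    rw [Set.nonempty_compl]
    rintro rfl
    rw [Set.ncard_univ] at hSc
    omega
  have := hnon.to_subtype
  exact ⟨hpre⟩

end Poly
end FG

/-- For `0 ≤ k ≤ d-3`, the graph `G_k(P)` of any `d`-dimensional convex
polytope `P` is `(k+1)(d-k)`-vertex-connected. -/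
theorem stmt_0 (d k : ℕ) (hk : k + 3 ≤ d) {N : ℕ}
    (P : Set (EuclideanSpace ℝ (Fin N))) (hP : IsPolytope P) (hdim : sdim P = d) :
    MConnected (faceGraph P k) ((k + 1) * (d - k)) := by
  obtain ⟨S, hS, rfl⟩ := hP
  have h := FG.main d k hk hS.toFinset (by rw [hS.coe_toFinset]; exact hdim)
  rw [hS.coe_toFinset] at h
  exact h
end

section
/- For every convex polytope P of dimension d ≥ 4, the graph G_1(P), whose nodes are the edges (one-dimensional faces) of P with two edges adjacent when some two-dimensional face of P contains both, is (2d-2)-vertex-connected. -/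
namespace Poly
open Finset in
lemma union3 {ι : Type*} [DecidableEq ι] {D X Y Z : Finset ι} (hX : X ⊆ D) (hY : Y ⊆ D) (hZ : Z ⊆ D) :
    #X + #Y + #Z ≤ #D + #(X ∩ Y) + #(X ∩ Z) + #(Y ∩ Z) := by
  have h1 := card_union_add_card_inter (X ∪ Y) Z
  have h2 := card_union_add_card_inter X Y
  have h3 : #((X ∪ Y) ∩ Z) ≤ #(X ∩ Z) + #(Y ∩ Z) := by
    rw [union_inter_distrib_right]; exact card_union_le _ _
  have h4 : #(X ∪ Y ∪ Z) ≤ #D := card_le_card (union_subset (union_subset hX hY) hZ)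
  omega

open Finset Classical in
lemma small {ν ι : Type*} [Fintype ν] [Fintype ι] (inc : ν → ι → Prop) {d : ℕ} (hd : 4 ≤ d)
    (h_two : ∀ e, ∃ a b, a ≠ b ∧ ∀ v, inc v e ↔ v = a ∨ v = b)
    (h_uniq : ∀ a b, a ≠ b → ∀ e f, inc a e → inc b e → inc a f → inc b f → e = f)
    (h_deg : ∀ v, d ≤ #{e | inc v e})
    (D : Finset ι) (hD : #D + 3 ≤ 2 * d) (A K : Finset ν)
    (hA : ∀ a ∈ A, #(D.filter (inc a)) + 2 ≤ d)
    (hK : ∀ a ∈ K, d ≤ #(D.filter (inc a)) + 1)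
    (hAD : ∀ a ∈ A, ∀ v, v ∉ A → v ∉ K → ∀ e, inc a e → inc v e → e ∈ D)
    (hne : A.Nonempty) (hZ : #(A ∪ K) ≤ 3) : False := by
  set Z := A ∪ K with hZdef
  let D' : ν → Finset ι := fun a => D.filter (fun e => inc a e ∧ ∀ z ∈ Z, inc z e → z = a)
  have hD' : ∀ a ∈ A, d + 1 ≤ #(D' a) + #Z := by
    intro a ha
    have haZ : a ∈ Z := mem_union_left _ ha
    have hsub : (univ.filter (inc a)) ⊆ D' a ∪ (Z.erase a).biUnion (fun z => univ.filter (fun e => inc a e ∧ inc z e)) := by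
      intro e he
      have he : inc a e := (mem_filter.1 he).2
      by_cases hz : ∃ z ∈ Z, z ≠ a ∧ inc z e
      · obtain ⟨z, hz, hza, hze⟩ := hz
        refine mem_union_right _ (mem_biUnion.2 ⟨z, mem_erase.2 ⟨hza, hz⟩, by simp [he, hze]⟩)
      · push Not at hz
        refine mem_union_left _ (mem_filter.2 ⟨?_, he, fun z hzZ hze => ?_⟩)
        · obtain ⟨p, q, hpq, hv⟩ := h_two e
          have : ∃ v, v ≠ a ∧ inc v e := by
            rcases (hv a).1 he with rfl | rfl
            · exact ⟨q, hpq.symm, (hv q).2 (Or.inr rfl)⟩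
            · exact ⟨p, hpq, (hv p).2 (Or.inl rfl)⟩
          obtain ⟨v, hva, hve⟩ := this
          have hvZ : v ∉ Z := fun h => hz v h hva hve
          exact hAD a ha v (fun h => hvZ (mem_union_left _ h)) (fun h => hvZ (mem_union_right _ h)) e he hve
        · by_contra hn
          exact hz z hzZ hn hze
    have h1 := (h_deg a).trans (card_le_card hsub)
    have h2 := card_union_le (D' a) ((Z.erase a).biUnion (fun z => univ.filter (fun e => inc a e ∧ inc z e)))
    have h3 : #((Z.erase a).biUnion (fun z => univ.filter (fun e => inc a e ∧ inc z e))) ≤ #(Z.erase a) * 1 := by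
      apply card_biUnion_le_card_mul
      intro z hz
      rw [card_le_one]
      intro e he f hf
      simp only [mem_filter, mem_univ, true_and] at he hf
      exact h_uniq a z (ne_of_mem_erase hz).symm e f he.1 he.2 hf.1 hf.2
    rw [card_erase_of_mem haZ] at h3
    have : 0 < #Z := card_pos.2 ⟨a, haZ⟩
    omega
  have hsub : ∀ a, D' a ⊆ D.filter (inc a) := by
    intro a e he
    simp only [D', mem_filter] at he ⊢
    exact ⟨he.1, he.2.1⟩
  have hZ3 : #Z = 3 := by
    obtain ⟨a, ha⟩ := hne
    have h1 := hD' a ha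
    have h2 := hA a ha
    have h3 := card_le_card (hsub a)
    omega
  have hAK : ∀ v ∈ A, v ∉ K := by
    intro v h1 h2
    have := hA v h1
    have := hK v h2
    omega
  let Q : ν → Finset ι := fun v => if v ∈ A then D' v else D.filter (inc v)
  have hQD : ∀ v, Q v ⊆ D := by
    intro v
    simp only [Q]
    split_ifs <;> exact filter_subset _ _
  have hQA : ∀ v ∈ A, d ≤ #(Q v) + 2 := by
    intro v hv
    have := hD' v hv
    simp only [Q, if_pos hv]
    omega
  have hQK : ∀ v ∈ K, d ≤ #(Q v) + 1 := by
    intro v hv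
    simp only [Q, if_neg (fun h => hAK v h hv)]
    exact hK v hv
  have hQinc : ∀ v, ∀ e ∈ Q v, inc v e := by
    intro v e he
    simp only [Q] at he
    split_ifs at he
    · exact (mem_filter.1 (hsub v he)).2
    · exact (mem_filter.1 he).2
  have hI1 : ∀ u v, u ≠ v → #(Q u ∩ Q v) ≤ 1 := by
    intro u v huv
    rw [card_le_one]
    intro e he f hf
    rw [mem_inter] at he hf
    exact h_uniq u v huv e f (hQinc _ _ he.1) (hQinc _ _ he.2) (hQinc _ _ hf.1) (hQinc _ _ hf.2)
  have hI0 : ∀ u v, u ≠ v → u ∈ A → v ∈ Z → #(Q u ∩ Q v) = 0 := by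
    intro u v huv hu hv
    rw [card_eq_zero, eq_empty_iff_forall_notMem]
    intro e he
    rw [mem_inter] at he
    have h1 := he.1
    simp only [Q, if_pos hu, D', mem_filter] at h1
    exact huv (h1.2.2 v hv (hQinc _ _ he.2)).symm
  have hI0' : ∀ u v, u ≠ v → v ∈ A → u ∈ Z → #(Q u ∩ Q v) = 0 := by
    intro u v huv hu hv
    rw [inter_comm]; exact hI0 v u huv.symm hu hv
  obtain ⟨x, y, z, hxy, hxz, hyz, hZe⟩ := card_eq_three.1 hZ3
  have hx : x ∈ Z := by rw [hZe]; simp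
  have hy : y ∈ Z := by rw [hZe]; simp
  have hz : z ∈ Z := by rw [hZe]; simp
  have hU := union3 (hQD x) (hQD y) (hQD z)
  have i1 := hI1 x y hxy
  have i2 := hI1 x z hxz
  have i3 := hI1 y z hyz
  rcases mem_union.1 hx with hx' | hx' <;> rcases mem_union.1 hy with hy' | hy' <;>
    rcases mem_union.1 hz with hz' | hz'
  · have := hI0 x y hxy hx' hy
    have := hI0 x z hxz hx' hz
    have := hI0 y z hyz hy' hz
    have := hQA x hx'
    have := hQA y hy'
    have := hQA z hz'
    omega
  · have := hI0 x y hxy hx' hy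
    have := hI0 x z hxz hx' hz
    have := hI0 y z hyz hy' hz
    have := hQA x hx'
    have := hQA y hy'
    have := hQK z hz'
    omega
  · have := hI0 x y hxy hx' hy
    have := hI0 x z hxz hx' hz
    have := hI0' y z hyz hz' hy
    have := hQA x hx'
    have := hQK y hy'
    have := hQA z hz'
    omega
  · have := hI0 x y hxy hx' hy
    have := hI0 x z hxz hx' hz
    have := hQA x hx'
    have := hQK y hy'
    have := hQK z hz'
    omega
  · have := hI0' x y hxy hy' hx
    have := hI0' x z hxz hz' hx
    have := hI0 y z hyz hy' hz
    have := hQK x hx'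
    have := hQA y hy'
    have := hQA z hz'
    omega
  · have := hI0' x y hxy hy' hx
    have := hI0 y z hyz hy' hz
    have := hQK x hx'
    have := hQA y hy'
    have := hQK z hz'
    omega
  · have := hI0' x z hxz hz' hx
    have := hI0' y z hyz hz' hy
    have := hQK x hx'
    have := hQK y hy'
    have := hQA z hz'
    omega
  · exfalso
    obtain ⟨a, ha⟩ := hne
    have haZ : a ∈ Z := mem_union_left _ ha
    rw [hZe] at haZ
    simp only [mem_insert, mem_singleton] at haZ
    rcases haZ with rfl | rfl | rfl
    exacts [hAK _ ha hx', hAK _ ha hy', hAK _ ha hz']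

open Finset Classical in
theorem comb {ν ι : Type*} [Fintype ν] [Fintype ι] (inc : ν → ι → Prop) (adj : ι → ι → Prop)
    {d : ℕ} (hd : 4 ≤ d)
    (h_two : ∀ e, ∃ a b, a ≠ b ∧ ∀ v, inc v e ↔ v = a ∨ v = b)
    (h_uniq : ∀ a b, a ≠ b → ∀ e f, inc a e → inc b e → inc a f → inc b f → e = f)
    (h_deg : ∀ v, d ≤ #{e | inc v e})
    (h_bal : ∀ C : Finset ν, #C < d → ∀ A : Set ν,
      (∀ a b e, a ∉ C → b ∉ C → inc a e → inc b e → (a ∈ A ↔ b ∈ A)) →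
      ∀ a b, a ∉ C → b ∉ C → (a ∈ A ↔ b ∈ A))
    (h_link : ∀ v, ∀ D : Finset ι, #(D.filter (inc v)) + 1 < d → ∀ X : Set ι,
      (∀ e f, inc v e → inc v f → e ∉ D → f ∉ D → adj e f → (e ∈ X ↔ f ∈ X)) →
      ∀ e f, inc v e → inc v f → e ∉ D → f ∉ D → (e ∈ X ↔ f ∈ X))
    (h_2f : ∀ e a b, a ≠ b → inc a e → inc b e → ∃ s : Finset (ι × ι), d ≤ #s + 1 ∧
      Set.InjOn Prod.fst (s : Set (ι × ι)) ∧ Set.InjOn Prod.snd (s : Set (ι × ι)) ∧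
      ∀ p ∈ s, p.1 ≠ e ∧ p.2 ≠ e ∧ inc a p.1 ∧ inc b p.2 ∧ adj p.1 p.2)
    (D : Finset ι) (hD : #D + 3 ≤ 2 * d) (X : Set ι)
    (hX : ∀ e f, e ∉ D → f ∉ D → adj e f → (e ∈ X ↔ f ∈ X)) :
    ∀ e f, e ∉ D → f ∉ D → (e ∈ X ↔ f ∈ X) := by
  let w : ν → ℕ := fun v => #(D.filter (inc v))
  have hgood : ∀ v, w v + 2 ≤ d → ∀ e f, inc v e → inc v f → e ∉ D → f ∉ D → (e ∈ X ↔ f ∈ X) := by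
    intro v hv
    exact h_link v D (by simp only [w] at hv; omega) X (fun e f _ _ he hf => hX e f he hf)
  have hex : ∀ v, w v + 2 ≤ d → ∃ e, e ∉ D ∧ inc v e := by
    intro v hv
    by_contra hn
    push Not at hn
    have : (univ.filter (inc v)) ⊆ D.filter (inc v) := by
      intro e he
      have he := (mem_filter.1 he).2
      by_cases h : e ∈ D
      · exact mem_filter.2 ⟨h, he⟩
      · exact absurd he (hn e h)
    have := (h_deg v).trans (card_le_card this)
    simp only [w] at hv
    omega
  have hinter : ∀ a b, a ≠ b → #(D.filter (inc a) ∩ D.filter (inc b)) ≤ 1 := by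
    intro a b hab
    rw [card_le_one]
    intro e he f hf
    simp only [mem_inter, mem_filter] at he hf
    exact h_uniq a b hab e f he.1.2 he.2.2 hf.1.2 hf.2.2
  have hsum : ∑ v, w v = 2 * #D := by
    have h1 := sum_card_bipartiteAbove_eq_sum_card_bipartiteBelow (s := (univ : Finset ν)) (t := D) inc
    simp only [bipartiteAbove, bipartiteBelow] at h1
    simp only [w]
    rw [h1, mul_comm, ← smul_eq_mul, ← sum_const]
    refine sum_congr rfl fun e _ => ?_
    obtain ⟨a, b, hab, h⟩ := h_two e
    rw [card_eq_two]
    refine ⟨a, b, hab, ?_⟩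
    ext v
    simp [h]
  let K : Finset ν := univ.filter (fun v => d ≤ w v + 1)
  let A : Finset ν := univ.filter (fun v => w v + 2 ≤ d ∧ ∃ e, e ∉ D ∧ inc v e ∧ e ∈ X)
  let B : Finset ν := univ.filter (fun v => w v + 2 ≤ d ∧ ∃ e, e ∉ D ∧ inc v e ∧ e ∉ X)
  have mK : ∀ v, v ∈ K ↔ d ≤ w v + 1 := fun v => by simp [K]
  have mA : ∀ v, v ∈ A ↔ w v + 2 ≤ d ∧ ∃ e, e ∉ D ∧ inc v e ∧ e ∈ X := fun v => by simp [A]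
  have mB : ∀ v, v ∈ B ↔ w v + 2 ≤ d ∧ ∃ e, e ∉ D ∧ inc v e ∧ e ∉ X := fun v => by simp [B]
  have hAX : ∀ v ∈ A, ∀ e, e ∉ D → inc v e → e ∈ X := by
    intro v hv e he hve
    obtain ⟨hg, f, hf, hvf, hfX⟩ := (mA v).1 hv
    exact (hgood v hg e f hve hvf he hf).2 hfX
  have hBX : ∀ v ∈ B, ∀ e, e ∉ D → inc v e → e ∉ X := by
    intro v hv e he hve h
    obtain ⟨hg, f, hf, hvf, hfX⟩ := (mB v).1 hv
    exact hfX ((hgood v hg e f hve hvf he hf).1 h)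
  have hcov : ∀ v, v ∉ K → v ∈ A ∨ v ∈ B := by
    intro v hv
    rw [mK] at hv
    obtain ⟨e, he, hve⟩ := hex v (by omega)
    by_cases h : e ∈ X
    · exact Or.inl ((mA v).2 ⟨by omega, e, he, hve, h⟩)
    · exact Or.inr ((mB v).2 ⟨by omega, e, he, hve, h⟩)
  have hAB : Disjoint A B := by
    rw [disjoint_left]
    intro v h1 h2
    obtain ⟨hg, f, hf, hvf, hfX⟩ := (mA v).1 h1
    exact hBX v h2 f hf hvf hfX
  have hAK : Disjoint K (A ∪ B) := by
    rw [disjoint_left]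
    intro v h1 h2
    rw [mK] at h1
    rcases mem_union.1 h2 with h | h
    · have := ((mA v).1 h).1; omega
    · have := ((mB v).1 h).1; omega
  have hK2 : #K ≤ 2 := by
    by_contra hn
    push Not at hn
    obtain ⟨x, hx, y, hy, z, hz, hxy, hxz, hyz⟩ := two_lt_card.1 hn
    have h := union3 (filter_subset (inc x) D) (filter_subset (inc y) D) (filter_subset (inc z) D)
    have := hinter x y hxy
    have := hinter x z hxz
    have := hinter y z hyz
    rw [mK] at hx hy hz
    simp only [w] at hx hy hz
    omega
  have hcross : ∀ a ∈ A, ∀ b ∈ B, ∀ e, inc a e → inc b e → e ∈ D := by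
    intro a ha b hb e hae hbe
    by_contra he
    exact hBX b hb e he hbe (hAX a ha e he hae)
  have hcrossw : ∀ a ∈ A, ∀ b ∈ B, ∀ e, inc a e → inc b e → d + 1 ≤ w a + w b := by
    intro a ha b hb e hae hbe
    have heD := hcross a ha b hb e hae hbe
    have hab : a ≠ b := fun h => disjoint_left.1 hAB ha (h ▸ hb)
    obtain ⟨s, hs, hi1, hi2, hsp⟩ := h_2f e a b hab hae hbe
    have h1 : s ⊆ s.filter (fun p => p.1 ∈ D) ∪ s.filter (fun p => p.2 ∈ D) := by
      intro p hp
      by_contra hn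
      simp only [mem_union, mem_filter, hp, true_and, not_or] at hn
      obtain ⟨_, _, h3, h4, h5⟩ := hsp p hp
      exact hBX b hb _ hn.2 h4 ((hX _ _ hn.1 hn.2 h5).1 (hAX a ha _ hn.1 h3))
    have h2 : #(s.filter (fun p => p.1 ∈ D)) ≤ #((D.filter (inc a)).erase e) := by
      refine card_le_card_of_injOn Prod.fst ?_ (hi1.mono (by exact_mod_cast filter_subset _ _))
      intro p hp
      have hp := mem_filter.1 hp
      obtain ⟨h1, _, h3, h4, h5⟩ := hsp p hp.1
      exact mem_erase.2 ⟨h1, mem_filter.2 ⟨hp.2, h3⟩⟩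
    have h3 : #(s.filter (fun p => p.2 ∈ D)) ≤ #((D.filter (inc b)).erase e) := by
      refine card_le_card_of_injOn Prod.snd ?_ (hi2.mono (by exact_mod_cast filter_subset _ _))
      intro p hp
      have hp := mem_filter.1 hp
      obtain ⟨h1, h2, h3, h4, h5⟩ := hsp p hp.1
      exact mem_erase.2 ⟨h2, mem_filter.2 ⟨hp.2, h4⟩⟩
    have h4 := card_erase_add_one (mem_filter.2 ⟨heD, hae⟩ : e ∈ D.filter (inc a))
    have h5 := card_erase_add_one (mem_filter.2 ⟨heD, hbe⟩ : e ∈ D.filter (inc b))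
    have h6 := (card_le_card h1).trans (card_union_le _ _)
    simp only [w]
    omega
  have key : A = ∅ ∨ B = ∅ := by
    by_contra hne
    push Not at hne
    obtain ⟨hneA, hneB⟩ := hne
    let C : ℕ → Finset ν := fun t => K ∪ (A.filter (fun v => t ≤ w v) ∪ B.filter (fun v => d + 2 ≤ w v + t))
    have hsC : ∃ t ∈ Icc 1 (d + 1), #(C t) ≤ 3 := by
      by_contra hn
      push Not at hn
      have h1 : #(Icc 1 (d + 1)) * 4 ≤ ∑ t ∈ Icc 1 (d + 1), #(C t) := by
        rw [← smul_eq_mul]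
        exact card_nsmul_le_sum _ _ _ fun t ht => hn t ht
      have h2 : ∑ t ∈ Icc 1 (d + 1), #(C t) ≤ ∑ t ∈ Icc 1 (d + 1), (#K + (#(A.filter (fun v => t ≤ w v)) + #(B.filter (fun v => d + 2 ≤ w v + t)))) :=
        sum_le_sum fun t _ => (card_union_le _ _).trans (Nat.add_le_add_left (card_union_le _ _) _)
      rw [sum_add_distrib, sum_add_distrib, sum_const] at h2
      have h3 : ∑ t ∈ Icc 1 (d + 1), #(A.filter (fun v => t ≤ w v)) ≤ ∑ v ∈ A, w v := by
        have := sum_card_bipartiteAbove_eq_sum_card_bipartiteBelow (s := Icc 1 (d + 1)) (t := A) (fun t v => t ≤ w v)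
        simp only [bipartiteAbove, bipartiteBelow] at this
        rw [this]
        refine sum_le_sum fun v _ => ?_
        refine (card_le_card (t := Icc 1 (w v)) ?_).trans (by simp)
        intro t ht
        simp only [mem_filter, mem_Icc] at ht ⊢
        omega
      have h4 : ∑ t ∈ Icc 1 (d + 1), #(B.filter (fun v => d + 2 ≤ w v + t)) ≤ ∑ v ∈ B, w v := by
        have := sum_card_bipartiteAbove_eq_sum_card_bipartiteBelow (s := Icc 1 (d + 1)) (t := B) (fun t v => d + 2 ≤ w v + t)
        simp only [bipartiteAbove, bipartiteBelow] at this
        rw [this]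
        refine sum_le_sum fun v _ => ?_
        refine (card_le_card (t := Icc (d + 2 - w v) (d + 1)) ?_).trans (by simp; omega)
        intro t ht
        simp only [mem_filter, mem_Icc] at ht ⊢
        omega
      have h5 : #K * (d - 1) ≤ ∑ v ∈ K, w v := by
        rw [← smul_eq_mul]
        refine card_nsmul_le_sum _ _ _ fun v hv => ?_
        have := (mK v).1 hv
        omega
      have h6 : ∑ v ∈ K, w v + (∑ v ∈ A, w v + ∑ v ∈ B, w v) ≤ ∑ v, w v := by
        rw [← sum_union hAB, ← sum_union hAK]
        exact sum_le_sum_of_subset (subset_univ _)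
      simp only [Nat.card_Icc, smul_eq_mul] at h1 h2
      obtain ⟨k, rfl⟩ : ∃ k, d = k + 1 := ⟨d - 1, by omega⟩
      simp only [Nat.add_sub_cancel] at h1 h2 h5
      nlinarith
    obtain ⟨t, ht, hCt⟩ := hsC
    have hb := h_bal (C t) (by omega) (A : Set ν) ?_
    · have hor : A ⊆ C t ∨ B ⊆ C t := by
        by_contra hn
        push Not at hn
        obtain ⟨a, ha, haC⟩ := not_subset.1 hn.1
        obtain ⟨b, hbB, hbC⟩ := not_subset.1 hn.2
        exact disjoint_left.1 hAB ((hb a b haC hbC).1 ha) hbB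
      have hKC : K ⊆ C t := subset_union_left
      rcases hor with h | h
      · refine small inc hd h_two h_uniq h_deg D hD A K (fun a ha => ((mA a).1 ha).1)
          (fun a ha => (mK a).1 ha) ?_ hneA ((card_le_card (union_subset h hKC)).trans hCt)
        intro a ha v hvA hvK e hae hve
        exact hcross a ha v ((hcov v hvK).resolve_left hvA) e hae hve
      · refine small inc hd h_two h_uniq h_deg D hD B K (fun a ha => ((mB a).1 ha).1)
          (fun a ha => (mK a).1 ha) ?_ hneB ((card_le_card (union_subset h hKC)).trans hCt)
        intro a ha v hvA hvK e hae hve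
        exact hcross v ((hcov v hvK).resolve_right hvA) a ha e hve hae
    · have one : ∀ a b e, a ∉ C t → b ∉ C t → inc a e → inc b e → a ∈ A → b ∈ A := by
        intro a b e ha hb hae hbe haA
        by_contra hbA
        simp only [C, mem_union, mem_filter, not_or, not_and] at ha hb
        have hbB := (hcov b hb.1).resolve_left hbA
        have h1 := hcrossw a haA b hbB e hae hbe
        have h2 := ha.2.1 haA
        have h3 := hb.2.2 hbB
        omega
      intro a b e ha hb hae hbe
      exact ⟨one a b e ha hb hae hbe, one b a e hb ha hbe hae⟩
  have hend : ∀ e, e ∉ D → ∃ v, v ∉ K ∧ inc v e := by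
    intro e he
    by_contra hn
    push Not at hn
    obtain ⟨a, b, hab, h⟩ := h_two e
    have hae := (h a).2 (Or.inl rfl)
    have hbe := (h b).2 (Or.inr rfl)
    have ha : a ∈ K := by by_contra hh; exact hn a hh hae
    have hb : b ∈ K := by by_contra hh; exact hn b hh hbe
    have h0 : D.filter (inc a) ∩ D.filter (inc b) = ∅ := by
      rw [eq_empty_iff_forall_notMem]
      intro f hf
      simp only [mem_inter, mem_filter] at hf
      exact he (h_uniq a b hab e f hae hbe hf.1.2 hf.2.2 ▸ hf.1.1)
    have h1 := card_union_add_card_inter (D.filter (inc a)) (D.filter (inc b))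
    rw [h0, card_empty] at h1
    have h2 := card_le_card (union_subset (filter_subset (inc a) D) (filter_subset (inc b) D))
    rw [mK] at ha hb
    simp only [w] at ha hb
    omega
  intro e f he hf
  obtain ⟨v, hv, hve⟩ := hend e he
  obtain ⟨u, hu, huf⟩ := hend f hf
  rcases key with h | h
  · rw [h] at hcov
    have h1 := hBX v ((hcov v hv).resolve_left (notMem_empty _)) e he hve
    have h2 := hBX u ((hcov u hu).resolve_left (notMem_empty _)) f hf huf
    tauto
  · rw [h] at hcov
    have h1 := hAX v ((hcov v hv).resolve_right (notMem_empty _)) e he hve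
    have h2 := hAX u ((hcov u hu).resolve_right (notMem_empty _)) f hf huf
    tauto
end Poly

open Set


namespace Poly
variable {E : Type*} [AddCommGroup E] [Module ℝ E]

def Face (V T : Set E) : Prop :=
  T ⊆ V ∧ ∃ (l : E →ₗ[ℝ] ℝ) (c : ℝ), (∀ x ∈ T, l x = c) ∧ ∀ x ∈ V, x ∉ T → c < l x

noncomputable def dm (T : Set E) : ℕ := Module.finrank ℝ (vectorSpan ℝ T)

lemma Face.refl (V : Set E) : Face V V :=
  ⟨Subset.rfl, 0, 0, by simp, fun x hx h => absurd hx h⟩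

lemma Face.restrict {V T U : Set E} (hU : Face V U) (hTV : T ⊆ V) (hUT : U ⊆ T) : Face T U := by
  obtain ⟨_, l, c, h1, h2⟩ := hU
  exact ⟨hUT, l, c, h1, fun x hx => h2 x (hTV hx)⟩

lemma Face.trans {V T U : Set E} (hV : V.Finite) (hT : Face V T) (hU : Face T U) : Face V U := by
  obtain ⟨hTV, l, c, h1, h2⟩ := hT
  obtain ⟨hUT, l', c', h1', h2'⟩ := hU
  obtain ⟨K, hK⟩ := (hV.image (fun x => (c' - l' x) / (l x - c))).bddAbove
  refine ⟨hUT.trans hTV, (K + 1) • l + l', (K + 1) * c + c', ?_, ?_⟩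
  · intro x hx
    simp [h1 x (hUT hx), h1' x hx]
  · intro x hx hxU
    simp only [LinearMap.add_apply, LinearMap.smul_apply, smul_eq_mul]
    by_cases hxT : x ∈ T
    · rw [h1 x hxT]; linarith [h2' x hxT hxU]
    · have h := h2 x hx hxT
      have h3 : (c' - l' x) / (l x - c) ≤ K := hK ⟨x, hx, rfl⟩
      rw [div_le_iff₀ (by linarith)] at h3
      nlinarith

lemma Face.inter {V T U : Set E} (hT : Face V T) (hU : Face V U) : Face V (T ∩ U) := by
  obtain ⟨hTV, l, c, h1, h2⟩ := hT
  obtain ⟨hUT, l', c', h1', h2'⟩ := hU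
  refine ⟨inter_subset_left.trans hTV, l + l', c + c', ?_, ?_⟩
  · rintro x ⟨hx, hx'⟩
    simp [h1 x hx, h1' x hx']
  · intro x hx hn
    simp only [LinearMap.add_apply]
    by_cases hxT : x ∈ T
    · have : x ∉ U := fun h => hn ⟨hxT, h⟩
      linarith [h1 x hxT, h2' x hx this]
    · by_cases hxU : x ∈ U
      · linarith [h2 x hx hxT, h1' x hxU]
      · linarith [h2 x hx hxT, h2' x hx hxU]

def topF (V : Set E) (l : E →ₗ[ℝ] ℝ) : Set E := {x ∈ V | ∀ y ∈ V, l y ≤ l x}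

lemma topF_nonempty {V : Set E} (hV : V.Finite) (hne : V.Nonempty) (l : E →ₗ[ℝ] ℝ) :
    (topF V l).Nonempty := by
  obtain ⟨x, hx, h⟩ := hV.exists_maximalFor l V hne
  refine ⟨x, hx, fun y hy => ?_⟩
  by_contra hlt
  push Not at hlt
  exact absurd (h hy hlt.le) (not_le.2 hlt)

lemma topF_face {V : Set E} (hV : V.Finite) (l : E →ₗ[ℝ] ℝ) : Face V (topF V l) := by
  rcases V.eq_empty_or_nonempty with rfl | hne
  · exact ⟨fun x hx => hx.1, 0, 0, by simp, by simp⟩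
  obtain ⟨x, hx, h⟩ := topF_nonempty hV hne l
  refine ⟨fun x hx => hx.1, -l, -(l x), ?_, ?_⟩
  · intro y hy
    simp [le_antisymm (h y hy.1) (hy.2 x hx)]
  · intro y hy hn
    simp only [LinearMap.neg_apply, neg_lt_neg_iff]
    by_contra hlt
    push Not at hlt
    exact hn ⟨hy, fun z hz => (h z hz).trans hlt⟩

lemma exists_sep {x y : E} (h : x ≠ y) : ∃ l : E →ₗ[ℝ] ℝ, l x < l y := by
  have h0 : y - x ∉ (⊥ : Submodule ℝ E) := by
    rw [Submodule.mem_bot]; exact sub_ne_zero.2 h.symm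
  obtain ⟨f, hf, -⟩ := Submodule.exists_le_ker_of_notMem h0
  rw [map_sub, sub_ne_zero] at hf
  rcases lt_or_gt_of_ne hf with h | h
  · exact ⟨-f, by simpa using h⟩
  · exact ⟨f, h⟩

lemma exists_vert {V : Set E} (hV : V.Finite) (hne : V.Nonempty) : ∃ v, Face V {v} := by
  induction hn : V.ncard using Nat.strong_induction_on generalizing V with
  | _ n ih =>
    by_cases hs : ∃ x ∈ V, ∃ y ∈ V, x ≠ y
    · obtain ⟨x, hx, y, hy, hxy⟩ := hs
      obtain ⟨l, hl⟩ := exists_sep hxy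
      have hss : topF V l ⊂ V :=
        ⟨fun x hx => hx.1, fun h => absurd ((h hx).2 y hy) (not_le.2 hl)⟩
      obtain ⟨v, hv⟩ := ih _ (hn ▸ ncard_lt_ncard hss hV) (hV.subset hss.1)
        (topF_nonempty hV hne l) rfl
      exact ⟨v, (topF_face hV l).trans hV hv⟩
    · push Not at hs
      obtain ⟨x, hx⟩ := hne
      have : V = {x} := by
        ext y; exact ⟨fun hy => hs y hy x hx, fun hy => by rw [mem_singleton_iff.1 hy]; exact hx⟩
      exact ⟨x, this ▸ Face.refl V⟩

lemma vert_top {V : Set E} (hV : V.Finite) (hne : V.Nonempty) (l : E →ₗ[ℝ] ℝ) :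
    ∃ v, Face V {v} ∧ v ∈ topF V l := by
  obtain ⟨v, hv⟩ := exists_vert (hV.subset (topF_face hV l).1) (topF_nonempty hV hne l)
  exact ⟨v, (topF_face hV l).trans hV hv, hv.1 rfl⟩

lemma Face.mem {V : Set E} {v : E} (h : Face V {v}) : v ∈ V := h.1 rfl

lemma dm_lt [FiniteDimensional ℝ E] {V T : Set E} (hT : Face V T) (hne : T.Nonempty) (h : T ≠ V) : dm T < dm V := by
  obtain ⟨hTV, l, c, h1, h2⟩ := hT
  obtain ⟨t, ht⟩ := hne
  obtain ⟨x, hx, hxT⟩ : ∃ x ∈ V, x ∉ T := by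
    by_contra hh; push Not at hh; exact h (hTV.antisymm hh)
  apply Submodule.finrank_lt_finrank_of_lt
  refine lt_of_le_of_ne (vectorSpan_mono ℝ hTV) fun heq => ?_
  have hk : vectorSpan ℝ T ≤ LinearMap.ker l := by
    rw [vectorSpan_def, Submodule.span_le]
    rintro _ ⟨a, ha, b, hb, rfl⟩
    simp [h1 a ha, h1 b hb]
  have : x -ᵥ t ∈ vectorSpan ℝ T := by
    rw [heq]; exact vsub_mem_vectorSpan ℝ hx (hTV ht)
  have := hk this
  simp [h1 t ht] at this
  linarith [h2 x hx hxT]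

lemma exists_func {p : Submodule ℝ E} {x : E} (h : x ∉ p) : ∃ l : E →ₗ[ℝ] ℝ, l x ≠ 0 ∧ ∀ y ∈ p, l y = 0 := by
  obtain ⟨f, hf, hp⟩ := Submodule.exists_le_ker_of_notMem h
  exact ⟨f, hf, fun y hy => hp hy⟩

/-- functional constant on `C` but not on `V` -/
lemma exists_const [FiniteDimensional ℝ E] {V C : Set E} (hC : C.Finite) {a : E} (hcard : C.ncard < dm V) :
    ∃ l : E →ₗ[ℝ] ℝ, (∀ x ∈ C, l x = l a) ∧ ∃ x ∈ V, ∃ y ∈ V, l x < l y := by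
  have hfin : Module.finrank ℝ (vectorSpan ℝ (insert a C)) < Module.finrank ℝ (vectorSpan ℝ V) := by
    refine lt_of_le_of_lt ?_ hcard
    clear hcard
    induction C, hC using Set.Finite.induction_on with
    | empty => simp
    | @insert b C hb hC ih =>
      rw [insert_comm, ncard_insert_of_notMem hb hC]
      exact (finrank_vectorSpan_insert_le_set ℝ _ b).trans (by omega)
  have hn : ¬ vectorSpan ℝ V ≤ vectorSpan ℝ (insert a C) := fun h =>
    absurd (Submodule.finrank_mono h) (not_le.2 hfin)
  obtain ⟨w, hw, hw'⟩ := SetLike.not_le_iff_exists.1 hn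
  obtain ⟨l, hl, hl'⟩ := exists_func hw'
  refine ⟨l, fun x hx => ?_, ?_⟩
  · have := hl' (x -ᵥ a) (vsub_mem_vectorSpan ℝ (mem_insert_of_mem _ hx) (mem_insert _ _))
    simpa [sub_eq_zero] using this
  · by_contra hh
    push Not at hh
    have hk : vectorSpan ℝ V ≤ LinearMap.ker l := by
      rw [vectorSpan_def, Submodule.span_le]
      rintro _ ⟨a, ha, b, hb, rfl⟩
      simp [le_antisymm (hh b hb a ha) (hh a ha b hb)]
    exact hl (hk hw)

lemma verts_finite {V : Set E} (hV : V.Finite) : {v | Face V {v}}.Finite :=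
  hV.subset fun _ h => h.mem

lemma card_verts [FiniteDimensional ℝ E] {V : Set E} (hV : V.Finite) (hne : V.Nonempty) :
    dm V + 1 ≤ {v | Face V {v}}.ncard := by
  by_contra hlt
  push Not at hlt
  obtain ⟨a, ha⟩ := exists_vert hV hne
  have hf := verts_finite hV
  have hc : ({v | Face V {v}} \ {a}).ncard < dm V := by
    have h1 : 0 < {v | Face V {v}}.ncard := (ncard_pos hf).2 ⟨a, ha⟩
    have h2 := ncard_sdiff_singleton_of_mem (s := {v | Face V {v}}) (a := a) ha
    omega
  obtain ⟨l, h1, x, hx, y, hy, hxy⟩ := exists_const (hf.subset sdiff_subset) (a := a) hc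
  have hall : ∀ v, Face V {v} → l v = l a := by
    intro v hv
    by_cases h : v = a
    · rw [h]
    · exact h1 v ⟨hv, h⟩
  obtain ⟨p, hp, hpt⟩ := vert_top hV hne l
  obtain ⟨q, hq, hqt⟩ := vert_top hV hne (-l)
  have := hpt.2 y hy
  have := hqt.2 x hx
  simp at this
  linarith [hall p hp, hall q hq]

end Poly

namespace Poly
variable {E : Type*} [AddCommGroup E] [Module ℝ E]

structure IsFig (V : Set E) (v : E) (W : Set E) (up : Set E → Set E) : Prop where
  fin : W.Finite
  face : ∀ U, Face W U → Face V (up U)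
  mem : ∀ U, v ∈ up U
  dim : ∀ U, U ⊆ W → U.Nonempty → dm (up U) = dm U + 1
  down : ∀ T, Face V T → v ∈ T → ∃ U, Face W U ∧ up U = T
  mono : ∀ U U', U ⊆ W → (up U ⊆ up U' ↔ U ⊆ U')
  ray : ∀ U x, x ∈ up U → x ≠ v → ∃ t : ℝ, 0 < t ∧ t • (x - v) ∈ U
  top : up W = V
  sing : ∀ U, U ⊆ W → U.Nonempty → ∃ x ∈ up U, x ≠ v

lemma finrank_span_aff [FiniteDimensional ℝ E] (m : E →ₗ[ℝ] ℝ) {U : Set E} (hU : U.Nonempty) (h : ∀ x ∈ U, m x = 1) :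
    Module.finrank ℝ (Submodule.span ℝ U) = dm U + 1 := by
  obtain ⟨u, hu⟩ := hU
  have hk : vectorSpan ℝ U ≤ LinearMap.ker m := by
    rw [vectorSpan_def, Submodule.span_le]
    rintro _ ⟨a, ha, b, hb, rfl⟩
    simp [h a ha, h b hb]
  have hu0 : u ∉ vectorSpan ℝ U := fun hh => by
    have := hk hh
    rw [LinearMap.mem_ker, h u hu] at this
    exact one_ne_zero this
  have : Submodule.span ℝ U = vectorSpan ℝ U ⊔ Submodule.span ℝ {u} := by
    apply le_antisymm
    · rw [Submodule.span_le]
      intro x hx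
      have h1 : x -ᵥ u ∈ vectorSpan ℝ U := vsub_mem_vectorSpan ℝ hx hu
      have : x = (x -ᵥ u) + u := by simp
      rw [this]
      exact Submodule.add_mem_sup h1 (Submodule.mem_span_singleton_self u)
    · refine sup_le ?_ (Submodule.span_mono (by simpa using hu))
      rw [vectorSpan_def, Submodule.span_le]
      rintro _ ⟨a, ha, b, hb, rfl⟩
      exact Submodule.sub_mem _ (Submodule.subset_span ha) (Submodule.subset_span hb)
  rw [this, dm]
  have hd : Disjoint (vectorSpan ℝ U) (Submodule.span ℝ {u}) := by
    rw [Submodule.disjoint_span_singleton' (by rintro rfl; exact hu0 (zero_mem _))]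
    exact hu0
  have h1 := Submodule.finrank_sup_add_finrank_inf_eq (vectorSpan ℝ U) (Submodule.span ℝ {u})
  rw [hd.eq_bot, finrank_bot, finrank_span_singleton (by rintro rfl; exact hu0 (zero_mem _))] at h1
  omega

lemma exists_fig [FiniteDimensional ℝ E] {V : Set E} {v : E} (hV : V.Finite) (hv : Face V {v}) :
    ∃ W up, IsFig V v W up := by
  have hvV := hv.mem
  obtain ⟨-, m, c, h1, h2⟩ := hv
  obtain rfl : m v = c := h1 v rfl
  replace h2 : ∀ x ∈ V, x ≠ v → 0 < m x - m v := fun x hx hn => sub_pos.2 (h2 x hx hn)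
  clear h1
  let φ : E → E := fun x => (m x - m v)⁻¹ • (x - v)
  have hφ : ∀ x ∈ V, x ≠ v → ∀ l : E →ₗ[ℝ] ℝ, l x - l v = (m x - m v) * l (φ x) := by
    intro x hx hn l
    have := (h2 x hx hn).ne'
    simp only [φ, map_smul, map_sub, smul_eq_mul]
    field_simp
  have hm1 : ∀ x ∈ V, x ≠ v → m (φ x) = 1 := by
    intro x hx hn
    have := (h2 x hx hn).ne'
    have h3 := hφ x hx hn m
    field_simp at h3
    exact h3.symm
  have hmW : ∀ u ∈ φ '' (V \ {v}), m u = 1 := by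
    rintro _ ⟨x, hx, rfl⟩; exact hm1 x hx.1 hx.2
  refine ⟨φ '' (V \ {v}), fun U => {x ∈ V | x = v ∨ φ x ∈ U}, ?_⟩
  constructor
  · exact (hV.subset sdiff_subset).image _
  · rintro U ⟨hUW, l, c, hl, hl'⟩
    refine ⟨fun x hx => hx.1, l - c • m, l v - c * m v, ?_, ?_⟩
    · rintro x ⟨hx, rfl | hxU⟩
      · simp
      · by_cases hn : x = v
        · simp [hn]
        · have h3 := hφ x hx hn l
          rw [hl _ hxU] at h3
          simp only [LinearMap.sub_apply, LinearMap.smul_apply, smul_eq_mul]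
          linarith
    · intro x hx hxn
      have hn : x ≠ v := fun h => hxn ⟨hx, Or.inl h⟩
      have hU : φ x ∉ U := fun h => hxn ⟨hx, Or.inr h⟩
      have h3 := hφ x hx hn l
      have h4 := hl' (φ x) ⟨x, ⟨hx, hn⟩, rfl⟩ hU
      have h5 := h2 x hx hn
      simp only [LinearMap.sub_apply, LinearMap.smul_apply, smul_eq_mul]
      nlinarith
  · exact fun U => ⟨hvV, Or.inl rfl⟩
  · intro U hUW hne
    rw [← finrank_span_aff m hne (fun x hx => hmW x (hUW hx)), dm]
    have : vectorSpan ℝ {x ∈ V | x = v ∨ φ x ∈ U} = Submodule.span ℝ U := by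
      rw [vectorSpan_eq_span_vsub_set_right ℝ
        (show v ∈ {x ∈ V | x = v ∨ φ x ∈ U} from ⟨hvV, Or.inl rfl⟩)]
      apply le_antisymm
      · rw [Submodule.span_le]
        rintro _ ⟨x, ⟨hx, hxU⟩, rfl⟩
        by_cases hn : x = v
        · simp [hn]
        · have hxU := hxU.resolve_left hn
          have : x -ᵥ v = (m x - m v) • φ x := by
            simp only [φ, smul_smul]
            rw [mul_inv_cancel₀ (h2 x hx hn).ne']; simp
          simp only [this]
          exact Submodule.smul_mem _ _ (Submodule.subset_span hxU)
      · rw [Submodule.span_le]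
        intro u hu
        obtain ⟨x, hx, rfl⟩ := hUW hu
        exact Submodule.smul_mem _ _ (Submodule.subset_span ⟨x, ⟨hx.1, Or.inr hu⟩, rfl⟩)
    rw [this]
  · rintro T ⟨hTV, l, c, hl, hl'⟩ hvT
    obtain rfl : l v = c := hl v hvT
    have key : ∀ x ∈ V, x ≠ v → x ∉ T → 0 < l (φ x) := by
      intro x hx hn hxT
      have h3 := hφ x hx hn l
      have h4 := hl' x hx hxT
      have h5 := h2 x hx hn
      by_contra hh
      push Not at hh
      nlinarith
    have key' : ∀ x ∈ V, x ≠ v → x ∈ T → l (φ x) = 0 := by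
      intro x hx hn hxT
      have h3 := hφ x hx hn l
      rw [hl x hxT, sub_self] at h3
      exact (mul_eq_zero.1 h3.symm).resolve_left (h2 x hx hn).ne'
    refine ⟨φ '' (T \ {v}), ⟨image_mono (sdiff_subset_sdiff_left hTV), l, 0, ?_, ?_⟩, ?_⟩
    · rintro _ ⟨x, hx, rfl⟩
      exact key' x (hTV hx.1) hx.2 hx.1
    · rintro _ ⟨x, hx, rfl⟩ hn
      exact key x hx.1 hx.2 fun h => hn ⟨x, ⟨h, hx.2⟩, rfl⟩
    · ext x
      constructor
      · rintro ⟨hx, rfl | ⟨y, hy, hyx⟩⟩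
        · exact hvT
        · by_cases hn : x = v
          · rw [hn]; exact hvT
          by_contra hxT
          have h3 := key x hx hn hxT
          rw [← hyx, key' y (hTV hy.1) hy.2 hy.1] at h3
          exact lt_irrefl _ h3
      · intro hx
        refine ⟨hTV hx, ?_⟩
        by_cases hn : x = v
        · exact Or.inl hn
        · exact Or.inr ⟨x, ⟨hx, hn⟩, rfl⟩
  · intro U U' hU
    constructor
    · intro h u hu
      obtain ⟨x, hx, rfl⟩ := hU hu
      exact (h ⟨hx.1, Or.inr hu⟩).2.resolve_left hx.2
    · rintro h x ⟨hx, hx'⟩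
      exact ⟨hx, hx'.imp id (fun h' => h h')⟩
  · rintro U x ⟨hx, hx'⟩ hn
    exact ⟨_, inv_pos.2 (h2 x hx hn), hx'.resolve_left hn⟩
  · ext x
    constructor
    · exact fun h => h.1
    · intro hx
      refine ⟨hx, ?_⟩
      by_cases hn : x = v
      · exact Or.inl hn
      · exact Or.inr ⟨x, ⟨hx, hn⟩, rfl⟩
  · rintro U hU ⟨u, hu⟩
    obtain ⟨x, hx, rfl⟩ := hU hu
    exact ⟨x, ⟨hx.1, Or.inr hu⟩, hx.2⟩

lemma dm_singleton (v : E) : dm ({v} : Set E) = 0 := by simp [dm]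

variable [FiniteDimensional ℝ E]

lemma subsingleton_of_dm {T : Set E} (h : dm T = 0) {x y : E} (hx : x ∈ T) (hy : y ∈ T) : x = y := by
  have h1 : vectorSpan ℝ T = ⊥ := Submodule.finrank_eq_zero.1 h
  have := vsub_mem_vectorSpan ℝ hx hy
  rw [h1] at this
  simpa [sub_eq_zero] using this

lemma simplex_step {V : Set E} {v : E} (hV : V.Finite) (hv : Face V {v}) (l : E →ₗ[ℝ] ℝ)
    {x : E} (hx : x ∈ V) (hl : l v < l x) :
    ∃ w T, Face V {w} ∧ Face V T ∧ dm T = 1 ∧ v ∈ T ∧ w ∈ T ∧ l v < l w := by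
  obtain ⟨W, up, h⟩ := exists_fig hV hv
  have hxv : x ≠ v := by rintro rfl; exact lt_irrefl _ hl
  obtain ⟨t, ht, htW⟩ := h.ray W x (by rwa [h.top]) hxv
  obtain ⟨u, hu, hut⟩ := vert_top h.fin ⟨_, htW⟩ l
  have h0 : 0 < l u := by
    refine lt_of_lt_of_le ?_ (hut.2 _ htW)
    simp only [map_smul, map_sub, smul_eq_mul]
    exact mul_pos ht (sub_pos.2 hl)
  have hT := h.face _ hu
  obtain ⟨y, hy, hyv⟩ := h.sing {u} hu.1 ⟨u, rfl⟩
  obtain ⟨s, hs, hsy⟩ := h.ray _ y hy hyv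
  have hly : l v < l y := by
    rw [← mem_singleton_iff.1 hsy] at h0
    simp only [map_smul, map_sub, smul_eq_mul] at h0
    exact sub_pos.1 (pos_of_mul_pos_right h0 hs.le)
  obtain ⟨w, hw, hwt⟩ := vert_top (hV.subset hT.1) ⟨_, hy⟩ l
  exact ⟨w, up {u}, hT.trans hV hw, hT, by rw [h.dim _ hu.1 ⟨u, rfl⟩, dm_singleton],
    h.mem _, hwt.1, hly.trans_le (hwt.2 y hy)⟩

lemma ascend {V : Set E} (hV : V.Finite) {C X : Set E}
    (hX : ∀ a b T, Face V {a} → Face V {b} → Face V T → dm T = 1 → a ∈ T → b ∈ T → a ∉ C → b ∉ C →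
      (a ∈ X ↔ b ∈ X)) (l : E →ₗ[ℝ] ℝ) {c : ℝ} (hC : ∀ x ∈ C, l x ≤ c)
    {v : E} (hv : Face V {v}) (hvC : v ∉ C) (hvc : c ≤ l v) :
    ∃ w, Face V {w} ∧ w ∈ topF V l ∧ (v ∈ X ↔ w ∈ X) := by
  induction hn : {x ∈ V | l v < l x}.ncard using Nat.strong_induction_on generalizing v with
  | _ n ih =>
    by_cases ht : v ∈ topF V l
    · exact ⟨v, hv, ht, Iff.rfl⟩
    · obtain ⟨x, hx, hxv⟩ : ∃ x ∈ V, l v < l x := by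
        by_contra hh; push Not at hh
        exact ht ⟨hv.mem, hh⟩
      obtain ⟨w, T, hw, hT, hT1, hvT, hwT, hlt⟩ := simplex_step hV hv l hx hxv
      have hwC : w ∉ C := fun h => absurd (hC w h) (not_le.2 (hvc.trans_lt hlt))
      obtain ⟨z, hz, hzt, hiff⟩ := ih _ (by
        rw [← hn]
        refine ncard_lt_ncard ⟨fun y hy => ⟨hy.1, hlt.trans hy.2⟩, fun h => ?_⟩ (hV.subset fun y hy => hy.1)
        exact lt_irrefl _ (h (show w ∈ {x ∈ V | l v < l x} from ⟨hw.mem, hlt⟩)).2) hw hwC (hvc.trans hlt.le) rfl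
      exact ⟨z, hz, hzt, (hX v w T hv hw hT hT1 hvT hwT hvC hwC).trans hiff⟩

lemma conn {V : Set E} (hV : V.Finite) {X : Set E}
    (hX : ∀ a b T, Face V {a} → Face V {b} → Face V T → dm T = 1 → a ∈ T → b ∈ T → (a ∈ X ↔ b ∈ X))
    {a b : E} (ha : Face V {a}) (hb : Face V {b}) : a ∈ X ↔ b ∈ X := by
  induction hn : V.ncard using Nat.strong_induction_on generalizing V a b with
  | _ n ih =>
    by_cases hab : a = b
    · rw [hab]
    obtain ⟨l, hl⟩ := exists_sep hab
    have hX' : ∀ a b T, Face V {a} → Face V {b} → Face V T → dm T = 1 → a ∈ T → b ∈ T → 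
      a ∉ (∅ : Set E) → b ∉ (∅ : Set E) → (a ∈ X ↔ b ∈ X) := fun a b T h1 h2 h3 h4 h5 h6 _ _ =>
        hX a b T h1 h2 h3 h4 h5 h6
    obtain ⟨p, hp, hpt, hap⟩ := ascend hV hX' l (c := l a) (by simp) ha (by simp) le_rfl
    obtain ⟨q, hq, hqt, hbq⟩ := ascend hV hX' l (c := l b) (by simp) hb (by simp) le_rfl
    have hF := topF_face hV l
    rw [hap, hbq]
    refine ih _ ?_ (hV.subset hF.1) (fun a b T h1 h2 h3 h4 h5 h6 => 
      hX a b T (hF.trans hV h1) (hF.trans hV h2) (hF.trans hV h3) h4 h5 h6)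
      (hp.restrict hF.1 (by simpa using hpt)) (hq.restrict hF.1 (by simpa using hqt)) rfl
    rw [← hn]
    exact ncard_lt_ncard ⟨hF.1, fun h => absurd ((h ha.mem).2 b hb.mem) (not_le.2 hl)⟩ hV

lemma to_top {V : Set E} (hV : V.Finite) {C X : Set E}
    (hX : ∀ a b T, Face V {a} → Face V {b} → Face V T → dm T = 1 → a ∈ T → b ∈ T → a ∉ C → b ∉ C →
      (a ∈ X ↔ b ∈ X)) (l : E →ₗ[ℝ] ℝ) {c : ℝ} (hC : ∀ x ∈ C, l x ≤ c) (hM : ∃ y ∈ V, c < l y)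
    {v w : E} (hv : Face V {v}) (hvC : v ∉ C) (hvc : c ≤ l v)
    (hw : Face V {w}) (hwC : w ∉ C) (hwc : c ≤ l w) : (v ∈ X ↔ w ∈ X) := by
  obtain ⟨p, hp, hpt, hap⟩ := ascend hV hX l hC hv hvC hvc
  obtain ⟨q, hq, hqt, hbq⟩ := ascend hV hX l hC hw hwC hwc
  have hF := topF_face hV l
  obtain ⟨y, hy, hcy⟩ := hM
  have hFC : ∀ x ∈ topF V l, x ∉ C := fun x hx hxC =>
    absurd (hC x hxC) (not_le.2 (hcy.trans_le (hx.2 y hy)))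
  rw [hap, hbq]
  exact conn (hV.subset hF.1) (fun a b T h1 h2 h3 h4 h5 h6 => 
      hX a b T (hF.trans hV h1) (hF.trans hV h2) (hF.trans hV h3) h4 h5 h6
       (hFC _ h1.mem) (hFC _ h2.mem))
      (hp.restrict hF.1 (by simpa using hpt)) (hq.restrict hF.1 (by simpa using hqt))

/-- Balinski's theorem for point configurations. -/
theorem balinski {V : Set E} (hV : V.Finite) {C X : Set E} (hCf : C.Finite) (hC : C.ncard < dm V)
    (hX : ∀ a b T, Face V {a} → Face V {b} → Face V T → dm T = 1 → a ∈ T → b ∈ T → a ∉ C → b ∉ C →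
      (a ∈ X ↔ b ∈ X)) {a b : E} (ha : Face V {a}) (hb : Face V {b}) (haC : a ∉ C) (hbC : b ∉ C) :
    a ∈ X ↔ b ∈ X := by
  obtain ⟨l, hl, x, hx, y, hy, hxy⟩ := exists_const hCf (a := a) hC
  have main : ∀ l : E →ₗ[ℝ] ℝ, (∀ x ∈ C, l x = l a) → (∃ x ∈ V, ∃ y ∈ V, l x < l y) → l a ≤ l b →
      (a ∈ X ↔ b ∈ X) := by
    rintro l hl ⟨x, hx, y, hy, hxy⟩ hab
    by_cases h : ∃ z ∈ V, l a < l z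
    · exact to_top hV hX l (fun x hx => (hl x hx).le) h ha haC le_rfl hb hbC hab
    · push Not at h
      have := h b hb.mem
      have := h y hy
      exact to_top hV hX (-l) (c := - l a) (fun x hx => by simp [hl x hx]) ⟨x, hx, by simp; linarith⟩ ha haC
        (by simp) hb hbC (by simp; linarith)
  rcases le_total (l a) (l b) with h | h
  · exact main l hl ⟨x, hx, y, hy, hxy⟩ h
  · exact main (-l) (fun x hx => by simp [hl x hx]) ⟨y, hy, x, hx, by simpa using hxy⟩ (by simpa using h)

end Poly

namespace Poly
set_option linter.unusedSectionVars false
variable {E : Type*} [AddCommGroup E] [Module ℝ E] [FiniteDimensional ℝ E]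

lemma faces_finite {V : Set E} (hV : V.Finite) (p : Set E → Prop) : {T | Face V T ∧ p T}.Finite :=
  hV.finite_subsets.subset fun _ h => h.1.1

lemma IsFig.W_nonempty {V W : Set E} {v : E} {up} (h : IsFig V v W up) (hd : 0 < dm V) : W.Nonempty := by
  by_contra hW
  have : V ⊆ {v} := by
    intro x hx
    by_contra hn
    obtain ⟨t, -, ht⟩ := h.ray W x (by rwa [h.top]) hn
    exact hW ⟨_, ht⟩
  have h2 : dm V ≤ dm ({v} : Set E) := Submodule.finrank_mono (vectorSpan_mono ℝ this)
  rw [dm_singleton] at h2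
  omega

lemma IsFig.dm_W {V W : Set E} {v : E} {up} (h : IsFig V v W up) (hd : 0 < dm V) : dm V = dm W + 1 := by
  rw [← h.dim W Subset.rfl (h.W_nonempty hd), h.top]

lemma IsFig.inj {V W : Set E} {v : E} {up} (h : IsFig V v W up) {U U' : Set E} (hU : U ⊆ W) (hU' : U' ⊆ W)
    (he : up U = up U') : U = U' :=
  ((h.mono U U' hU).1 he.le).antisymm ((h.mono U' U hU').1 he.ge)

lemma nonempty_of_dm {T : Set E} (h : dm T ≠ 0) : T.Nonempty := by
  by_contra hn
  rw [not_nonempty_iff_eq_empty] at hn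
  simp [dm, hn] at h

lemma IsFig.edge {V W : Set E} {v : E} {up} (h : IsFig V v W up) {T : Set E} (hT : Face V T) (hv : v ∈ T)
    (h1 : dm T = 1) : ∃ u, Face W {u} ∧ up {u} = T := by
  obtain ⟨U, hU, rfl⟩ := h.down T hT hv
  have hne : U.Nonempty := by
    by_contra hn
    have hsub : up U ⊆ {v} := by
      intro x hx
      by_contra hxn
      obtain ⟨t, -, ht⟩ := h.ray U x hx hxn
      exact hn ⟨_, ht⟩
    have h2 : dm (up U) ≤ dm ({v} : Set E) := Submodule.finrank_mono (vectorSpan_mono ℝ hsub)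
    rw [dm_singleton] at h2
    omega
  have h0 : dm U = 0 := by rw [h.dim U hU.1 hne] at h1; omega
  obtain ⟨u, hu⟩ := hne
  have : U = {u} := by
    ext x
    exact ⟨fun hx => subsingleton_of_dm h0 hx hu, fun hx => by rw [mem_singleton_iff.1 hx]; exact hu⟩
  exact ⟨u, this ▸ hU, by rw [this]⟩

lemma IsFig.edge' {V W : Set E} {v : E} {up} (h : IsFig V v W up) {u : E} (hu : Face W {u}) :
    Face V (up {u}) ∧ dm (up {u}) = 1 ∧ v ∈ up {u} :=
  ⟨h.face _ hu, by rw [h.dim _ hu.1 ⟨u, rfl⟩, dm_singleton], h.mem _⟩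

lemma deg {V : Set E} (hV : V.Finite) {v : E} (hv : Face V {v}) :
    dm V ≤ {T | Face V T ∧ dm T = 1 ∧ v ∈ T}.ncard := by
  rcases Nat.eq_zero_or_pos (dm V) with h0 | h0
  · omega
  obtain ⟨W, up, h⟩ := exists_fig hV hv
  rw [h.dm_W h0]
  refine (card_verts h.fin (h.W_nonempty h0)).trans ?_
  refine ncard_le_ncard_of_injOn (fun u => up {u}) (fun u hu => h.edge' hu) ?_ (faces_finite hV _)
  intro u hu u' hu' he
  exact singleton_injective (h.inj hu.1 hu'.1 he)

lemma link {V : Set E} (hV : V.Finite) {v : E} (hv : Face V {v}) {D X : Set (Set E)}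
    (hD : {T | (Face V T ∧ dm T = 1 ∧ v ∈ T) ∧ T ∈ D}.ncard + 1 < dm V)
    (hX : ∀ T T' F, Face V T → Face V T' → dm T = 1 → dm T' = 1 → v ∈ T → v ∈ T' → T ∉ D → T' ∉ D →
      Face V F → dm F = 2 → T ⊆ F → T' ⊆ F → (T ∈ X ↔ T' ∈ X))
    {T T' : Set E} (hT : Face V T) (hT' : Face V T') (h1 : dm T = 1) (h1' : dm T' = 1) (hvT : v ∈ T)
    (hvT' : v ∈ T') (hTD : T ∉ D) (hTD' : T' ∉ D) : T ∈ X ↔ T' ∈ X := by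
  obtain ⟨W, up, h⟩ := exists_fig hV hv
  obtain ⟨u, hu, rfl⟩ := h.edge hT hvT h1
  obtain ⟨u', hu', rfl⟩ := h.edge hT' hvT' h1'
  refine balinski h.fin (C := {u | Face W {u} ∧ up {u} ∈ D}) (X := {u | up {u} ∈ X})
    ((verts_finite h.fin).subset fun u hu => hu.1) ?_ ?_ hu hu' (fun h => hTD h.2) (fun h => hTD' h.2)
  · have := h.dm_W (by omega)
    refine lt_of_le_of_lt ?_ (show {T | (Face V T ∧ dm T = 1 ∧ v ∈ T) ∧ T ∈ D}.ncard < dm W by omega)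
    refine ncard_le_ncard_of_injOn (fun u => up {u}) (fun u hu => ⟨h.edge' hu.1, hu.2⟩) ?_
      ((faces_finite hV (fun T => (dm T = 1 ∧ v ∈ T))).subset fun T hT => hT.1)
    intro u hu u' hu' he
    exact singleton_injective (h.inj hu.1.1 hu'.1.1 he)
  · intro a b T ha hb hT hT1 haT hbT haC hbC
    obtain ⟨p1, p2, p3⟩ := h.edge' ha
    obtain ⟨q1, q2, q3⟩ := h.edge' hb
    exact hX _ _ (up T) p1 q1 p2 q2 p3 q3 (fun hh => haC ⟨ha, hh⟩) (fun hh => hbC ⟨hb, hh⟩)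
      (h.face _ hT) (by rw [h.dim _ hT.1 ⟨a, haT⟩, hT1]) ((h.mono _ _ ha.1).2 (by simpa using haT))
      ((h.mono _ _ hb.1).2 (by simpa using hbT))

lemma two_faces {V : Set E} (hV : V.Finite) {v : E} (hv : Face V {v}) {e : Set E} (he : Face V e)
    (he1 : dm e = 1) (hve : v ∈ e) : dm V ≤ {F | Face V F ∧ dm F = 2 ∧ e ⊆ F}.ncard + 1 := by
  rcases Nat.eq_zero_or_pos (dm V) with h0 | h0
  · omega
  obtain ⟨W, up, h⟩ := exists_fig hV hv
  obtain ⟨u, hu, rfl⟩ := h.edge he hve he1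
  rw [h.dm_W h0]
  refine Nat.succ_le_succ ((deg h.fin hu).trans ?_)
  refine ncard_le_ncard_of_injOn up ?_ ?_ (faces_finite hV _)
  · rintro U ⟨hU, hU1, huU⟩
    exact ⟨h.face _ hU, by rw [h.dim _ hU.1 ⟨u, huU⟩, hU1], (h.mono _ _ hu.1).2 (by simpa using huU)⟩
  · intro U hU U' hU' he
    exact h.inj hU.1.1 hU'.1.1 he

lemma other_edge {V : Set E} (hV : V.Finite) {v : E} (hv : Face V {v}) {F : Set E} (hF : Face V F)
    (hF2 : dm F = 2) (hvF : v ∈ F) (e : Set E) : ∃ f, Face V f ∧ dm f = 1 ∧ v ∈ f ∧ f ⊆ F ∧ f ≠ e := by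
  have h := deg (hV.subset hF.1) (hv.restrict hF.1 (by simpa using hvF))
  obtain ⟨f, hf, hfe⟩ := exists_ne_of_one_lt_ncard
    (show 1 < {T | Face F T ∧ dm T = 1 ∧ v ∈ T}.ncard by omega) e
  exact ⟨f, hF.trans hV hf.1, hf.2.1, hf.2.2, hf.1.1, hfe⟩

lemma eq_of_dm {V T T' : Set E} (hT : Face V T) (hT' : Face V T') (hne : (T ∩ T').Nonempty)
    (h : dm T ≤ dm (T ∩ T')) : T ⊆ T' := by
  have h1 : Face T (T ∩ T') := (hT.inter hT').restrict hT.1 inter_subset_left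
  by_contra hn
  have := dm_lt h1 hne (fun h => hn (inter_eq_left.1 h))
  omega

lemma edge_unique {V e f : Set E} (he : Face V e) (hf : Face V f) (he1 : dm e = 1) (hf1 : dm f = 1)
    {a b : E} (hab : a ≠ b) (hae : a ∈ e) (hbe : b ∈ e) (haf : a ∈ f) (hbf : b ∈ f) : e = f := by
  have h1 : dm (e ∩ f) ≠ 0 := fun h => hab (subsingleton_of_dm h ⟨hae, haf⟩ ⟨hbe, hbf⟩)
  exact (eq_of_dm he hf ⟨a, hae, haf⟩ (by omega)).antisymm
    (eq_of_dm hf he ⟨a, haf, hae⟩ (by rw [inter_comm]; omega))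

lemma face2_unique {V e f F F' : Set E} (he : Face V e) (hf : Face V f) (he1 : dm e = 1) (hf1 : dm f = 1)
    (hef : f ≠ e) (hF : Face V F) (hF' : Face V F') (hF2 : dm F = 2) (hF2' : dm F' = 2)
    (h1 : e ⊆ F) (h2 : e ⊆ F') (h3 : f ⊆ F) (h4 : f ⊆ F') : F = F' := by
  have hene : e.Nonempty := nonempty_of_dm (by omega)
  have hfne : f.Nonempty := nonempty_of_dm (by omega)
  have hI := hF.inter hF'
  have hlt : dm e < dm (F ∩ F') := by
    refine dm_lt (he.restrict hI.1 (subset_inter h1 h2)) hene fun heq => hef ?_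
    have hfe : f ⊆ e := by rw [heq]; exact subset_inter h3 h4
    by_contra hn
    have := dm_lt (hf.restrict he.1 hfe) hfne hn
    omega
  have hne := hene.mono (subset_inter h1 h2)
  exact (eq_of_dm hF hF' hne (by omega)).antisymm
    (eq_of_dm hF' hF (by rwa [inter_comm]) (by rw [inter_comm]; omega))

lemma not_between {V : Set E} {a b c : E} (hb : Face V {b}) (ha : a ∈ V) (hc : c ∈ V) (hab : a ≠ b)
    (hcb : c ≠ b) : ¬ Wbtw ℝ a b c := by
  rintro ⟨t, ⟨ht0, ht1⟩, rfl⟩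
  obtain ⟨-, l, k, h1, h2⟩ := hb
  have e1 := h1 _ rfl
  have e2 := h2 a ha hab
  have e3 := h2 c hc hcb
  rw [AffineMap.lineMap_apply_module] at e1
  simp only [map_add, map_smul, smul_eq_mul] at e1
  rcases ht0.eq_or_lt with h0 | h0
  · rw [← h0] at e1; linarith
  · have := mul_pos h0 (sub_pos.2 e3)
    have := mul_nonneg (sub_nonneg.2 ht1) (sub_pos.2 e2).le
    nlinarith

lemma edge_two {V e : Set E} (hV : V.Finite) (he : Face V e) (he1 : dm e = 1) :
    ∃ a b, a ≠ b ∧ Face V {a} ∧ Face V {b} ∧ a ∈ e ∧ b ∈ e ∧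
      ∀ v, Face V {v} → v ∈ e → v = a ∨ v = b := by
  have hc := card_verts (hV.subset he.1) (nonempty_of_dm (by omega))
  obtain ⟨a, ha, b, hb, hab⟩ := (one_lt_ncard (verts_finite (hV.subset he.1))).1
    (show 1 < {v | Face e {v}}.ncard by omega)
  refine ⟨a, b, hab, he.trans hV ha, he.trans hV hb, ha.mem, hb.mem, fun v hv hve => ?_⟩
  by_contra hn
  push Not at hn
  have hv' := hv.restrict he.1 (T := e) (by simpa using hve)
  have hcol : Collinear ℝ e := collinear_iff_finrank_le_one.2 he1.le
  have hcol3 : Collinear ℝ {a, b, v} := hcol.subset (by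
    rintro x (rfl | rfl | rfl)
    exacts [ha.mem, hb.mem, hve])
  rcases hcol3.wbtw_or_wbtw_or_wbtw with h | h | h
  · exact not_between hb ha.mem hve hab hn.2 h
  · exact not_between hv' hb.mem ha.mem hn.2.symm hn.1.symm h
  · exact not_between ha hve hb.mem hn.1 hab.symm h

end Poly

namespace Poly
variable {E : Type*} [AddCommGroup E] [Module ℝ E] [FiniteDimensional ℝ E]

lemma config {S : Set E} (hS : S.Finite) {d : ℕ} (hd : 4 ≤ d) (hdm : dm S = d)
    (D : Set (Set E)) (hDf : D.Finite) (hD : D.ncard + 3 ≤ 2 * d) (X : Set (Set E))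
    (hX : ∀ T T' F, Face S T → Face S T' → dm T = 1 → dm T' = 1 → T ∉ D → T' ∉ D →
      Face S F → dm F = 2 → T ⊆ F → T' ⊆ F → (T ∈ X ↔ T' ∈ X))
    {T T' : Set E} (hT : Face S T) (hT' : Face S T') (h1 : dm T = 1) (h1' : dm T' = 1)
    (hTD : T ∉ D) (hTD' : T' ∉ D) : T ∈ X ↔ T' ∈ X := by
  classical
  haveI : Fintype {v // Face S {v}} := (verts_finite hS).fintype
  haveI : Fintype {T : Set E // Face S T ∧ dm T = 1} := (faces_finite hS _).fintype
  have key := comb (ν := {v // Face S {v}}) (ι := {T : Set E // Face S T ∧ dm T = 1})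
    (fun v T => v.1 ∈ T.1) (fun T T' => ∃ F, Face S F ∧ dm F = 2 ∧ T.1 ⊆ F ∧ T'.1 ⊆ F) hd
    ?_ ?_ ?_ ?_ ?_ ?_ (Finset.univ.filter (fun T => T.1 ∈ D)) ?_ {T | T.1 ∈ X} ?_
    ⟨T, hT, h1⟩ ⟨T', hT', h1'⟩ (by simpa using hTD) (by simpa using hTD')
  · exact key
  · rintro ⟨e, he, he1⟩
    obtain ⟨a, b, hab, ha, hb, hae, hbe, h⟩ := edge_two hS he he1
    refine ⟨⟨a, ha⟩, ⟨b, hb⟩, by simpa using hab, ?_⟩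
    rintro ⟨v, hv⟩
    simp only [Subtype.mk.injEq]
    exact ⟨h v hv, by rintro (rfl | rfl) <;> assumption⟩
  · rintro ⟨a, ha⟩ ⟨b, hb⟩ hab ⟨e, he, he1⟩ ⟨f, hf, hf1⟩ h1 h2 h3 h4
    simp only [Subtype.mk.injEq] at *
    exact edge_unique he hf he1 hf1 (by simpa using hab) h1 h2 h3 h4
  · rintro ⟨v, hv⟩
    have := deg hS hv
    rw [hdm] at this
    refine this.trans (le_of_eq ?_)
    rw [← Set.ncard_coe_finset, ← Set.ncard_image_of_injective _ Subtype.val_injective]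
    congr 1
    ext T
    simp [and_assoc]
    tauto
  · intro C hC A hA ⟨a, ha⟩ ⟨b, hb⟩ haC hbC
    have := balinski hS (C := Subtype.val '' (C : Set {v // Face S {v}})) (X := Subtype.val '' A)
      (Set.toFinite _)
      (by rw [Set.ncard_image_of_injective _ Subtype.val_injective, Set.ncard_coe_finset, hdm]; exact hC)
      (fun a b T ha hb hT h1 haT hbT haC hbC => by
        have := hA ⟨a, ha⟩ ⟨b, hb⟩ ⟨T, hT, h1⟩ (by simpa [ha] using haC) (by simpa [hb] using hbC) haT hbT
        simpa [ha, hb] using this) ha hb (by simpa [ha] using haC) (by simpa [hb] using hbC)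
    simpa [ha, hb] using this
  · rintro ⟨v, hv⟩ D hD X hX ⟨e, he, he1⟩ ⟨f, hf, hf1⟩ hve hvf heD hfD
    have := link hS hv (D := Subtype.val '' (D : Set {T : Set E // Face S T ∧ dm T = 1}))
      (X := Subtype.val '' X)
      (by
        rw [hdm]
        refine lt_of_le_of_lt (le_of_eq ?_) hD
        congr 1
        rw [← Set.ncard_coe_finset, ← Set.ncard_image_of_injective _ Subtype.val_injective]
        congr 1
        ext T
        simp
        grind)
      (fun T T' F hT hT' h1 h1' hvT hvT' hTD hTD' hF hF2 h3 h4 => by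
        have := hX ⟨T, hT, h1⟩ ⟨T', hT', h1'⟩ hvT hvT' (by simpa [hT, h1] using hTD)
          (by simpa [hT', h1'] using hTD') ⟨F, hF, hF2, h3, h4⟩
        simpa [hT, h1, hT', h1'] using this) he hf he1 hf1 hve hvf
      (by simpa [he, he1] using heD) (by simpa [hf, hf1] using hfD)
    simpa [he, he1, hf, hf1] using this
  · rintro ⟨e, he, he1⟩ ⟨a, ha⟩ ⟨b, hb⟩ hab hae hbe
    simp only at hae hbe
    have hΦ := two_faces hS ha he he1 hae
    have hfin := faces_finite hS (fun F => dm F = 2 ∧ e ⊆ F)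
    have hA : ∀ F : {F // Face S F ∧ dm F = 2 ∧ e ⊆ F}, ∃ f, Face S f ∧ dm f = 1 ∧ a ∈ f ∧ f ⊆ F.1 ∧ f ≠ e :=
      fun F => other_edge hS ha F.2.1 F.2.2.1 (F.2.2.2 hae) e
    have hB : ∀ F : {F // Face S F ∧ dm F = 2 ∧ e ⊆ F}, ∃ f, Face S f ∧ dm f = 1 ∧ b ∈ f ∧ f ⊆ F.1 ∧ f ≠ e :=
      fun F => other_edge hS hb F.2.1 F.2.2.1 (F.2.2.2 hbe) e
    choose fa a1 a2 a3 a4 a5 using hA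
    choose fb b1 b2 b3 b4 b5 using hB
    haveI : Fintype {F // Face S F ∧ dm F = 2 ∧ e ⊆ F} := hfin.fintype
    have inja : ∀ F F', fa F = fa F' → F = F' := fun F F' h =>
      Subtype.ext (face2_unique he (a1 F) he1 (a2 F) (a5 F) F.2.1 F'.2.1 F.2.2.1 F'.2.2.1
        F.2.2.2 F'.2.2.2 (a4 F) (h ▸ a4 F'))
    have injb : ∀ F F', fb F = fb F' → F = F' := fun F F' h =>
      Subtype.ext (face2_unique he (b1 F) he1 (b2 F) (b5 F) F.2.1 F'.2.1 F.2.2.1 F'.2.2.1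
        F.2.2.2 F'.2.2.2 (b4 F) (h ▸ b4 F'))
    refine ⟨Finset.univ.image (fun F => (⟨fa F, a1 F, a2 F⟩, ⟨fb F, b1 F, b2 F⟩)), ?_, ?_, ?_, ?_⟩
    · rw [Finset.card_image_of_injective, Finset.card_univ, ← Nat.card_eq_fintype_card]
      · rw [← hdm]; exact hΦ
      · intro F F' h
        simp only [Prod.mk.injEq, Subtype.mk.injEq] at h
        exact inja _ _ h.1
    · intro p hp q hq h
      simp only [Finset.coe_image, Finset.coe_univ, Set.image_univ, Set.mem_range] at hp hq
      obtain ⟨F, rfl⟩ := hp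
      obtain ⟨F', rfl⟩ := hq
      simp only [Subtype.mk.injEq] at h
      rw [inja _ _ h]
    · intro p hp q hq h
      simp only [Finset.coe_image, Finset.coe_univ, Set.image_univ, Set.mem_range] at hp hq
      obtain ⟨F, rfl⟩ := hp
      obtain ⟨F', rfl⟩ := hq
      simp only [Subtype.mk.injEq] at h
      rw [injb _ _ h]
    · intro p hp
      simp only [Finset.mem_image, Finset.mem_univ, true_and] at hp
      obtain ⟨F, rfl⟩ := hp
      simp only [ne_eq, Subtype.mk.injEq]
      exact ⟨a5 F, b5 F, a3 F, b3 F, F.1, F.2.1, F.2.2.1, a4 F, b4 F⟩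
  · refine le_trans (Nat.add_le_add_right ?_ 3) hD
    rw [← Set.ncard_coe_finset, ← Set.ncard_image_of_injective _ Subtype.val_injective]
    apply Set.ncard_le_ncard _ hDf
    rintro _ ⟨T, hT, rfl⟩
    simpa using hT
  · rintro ⟨T, hT, h1⟩ ⟨T', hT', h1'⟩ hTD hTD' ⟨F, hF, hF2, h3, h4⟩
    exact hX T T' F hT hT' h1 h1' (by simpa using hTD) (by simpa using hTD') hF hF2 h3 h4

lemma many {S : Set E} (hS : S.Finite) {d : ℕ} (hd : 4 ≤ d) (hdm : dm S = d) :
    2 * d - 1 ≤ {T | Face S T ∧ dm T = 1}.ncard := by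
  have hne : S.Nonempty := nonempty_of_dm (by omega)
  obtain ⟨v, hv⟩ := exists_vert hS hne
  have h1 := deg hS hv
  have : {T | Face S T ∧ dm T = 1 ∧ v ∈ T}.Nonempty := by
    apply Set.nonempty_of_ncard_ne_zero; omega
  obtain ⟨e, he, he1, -⟩ := this
  obtain ⟨a, b, hab, ha, hb, hae, hbe, h⟩ := edge_two hS he he1
  have ha' := deg hS ha
  have hb' := deg hS hb
  have hf := faces_finite hS (fun T => dm T = 1)
  have e1 := Set.ncard_union_add_ncard_inter {T | Face S T ∧ dm T = 1 ∧ a ∈ T} {T | Face S T ∧ dm T = 1 ∧ b ∈ T}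
    (faces_finite hS _) (faces_finite hS _)
  have e2 : ({T | Face S T ∧ dm T = 1 ∧ a ∈ T} ∪ {T | Face S T ∧ dm T = 1 ∧ b ∈ T}).ncard ≤ {T | Face S T ∧ dm T = 1}.ncard := by
    apply Set.ncard_le_ncard _ hf
    rintro T (h | h)
    · exact ⟨h.1, h.2.1⟩
    · exact ⟨h.1, h.2.1⟩
  have e3 : ({T | Face S T ∧ dm T = 1 ∧ a ∈ T} ∩ {T | Face S T ∧ dm T = 1 ∧ b ∈ T}).ncard ≤ 1 := by
    refine le_trans (Set.ncard_le_ncard (t := {e}) ?_ (Set.finite_singleton e)) (Set.ncard_singleton e).le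
    rintro T ⟨h, h'⟩
    exact (edge_unique he h.1 he1 h.2.1 hab hae hbe h.2.2 h'.2.2).symm
  omega

end Poly

namespace Poly
variable {N : ℕ}

lemma sdim_hull (T : Set (EuclideanSpace ℝ (Fin N))) : sdim (convexHull ℝ T) = dm T := by
  rw [sdim, affineSpan_convexHull, direction_affineSpan, dm]

lemma hull_cover {S T : Set (EuclideanSpace ℝ (Fin N))} {l : EuclideanSpace ℝ (Fin N) →ₗ[ℝ] ℝ} {c : ℝ}
    (h1 : ∀ x ∈ T, l x = c) (h2 : ∀ x ∈ S, x ∉ T → c < l x) {x} (hx : x ∈ convexHull ℝ S) :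
    c < l x ∨ x ∈ convexHull ℝ T := by
  have hl : ∀ x ∈ convexHull ℝ T, l x = c := fun x hx =>
    convexHull_min (t := {x | l x = c}) h1 (convex_hyperplane l.isLinear c) hx
  have hc : Convex ℝ {x | c < l x ∨ x ∈ convexHull ℝ T} := by
    intro x hx y hy a b ha hb hab
    by_cases hT : x ∈ convexHull ℝ T ∧ y ∈ convexHull ℝ T
    · exact Or.inr (convex_convexHull ℝ T hT.1 hT.2 ha hb hab)
    rcases eq_or_lt_of_le ha with rfl | ha
    · obtain rfl : b = 1 := by linarith
      simpa using hy
    rcases eq_or_lt_of_le hb with rfl | hb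
    · obtain rfl : a = 1 := by linarith
      simpa using hx
    left
    have hx' : c ≤ l x := by rcases hx with h | h; exacts [h.le, (hl x h).ge]
    have hy' : c ≤ l y := by rcases hy with h | h; exacts [h.le, (hl y h).ge]
    simp only [map_add, map_smul, smul_eq_mul]
    have e : c = a * c + b * c := by rw [← add_mul, hab, one_mul]
    by_cases hxT : x ∈ convexHull ℝ T
    · have : c < l y := hy.resolve_right (fun h => hT ⟨hxT, h⟩)
      nlinarith
    · have : c < l x := hx.resolve_right hxT
      nlinarith
  refine convexHull_min (t := {x | c < l x ∨ x ∈ convexHull ℝ T}) ?_ hc hx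
  intro y hy
  by_cases h : y ∈ T
  · exact Or.inr (subset_convexHull ℝ T h)
  · exact Or.inl (h2 y hy h)

lemma hull_inter {S T : Set (EuclideanSpace ℝ (Fin N))} (h : Face S T) : convexHull ℝ T ∩ S = T := by
  obtain ⟨hTS, l, c, h1, h2⟩ := h
  refine Subset.antisymm ?_ (fun x hx => ⟨subset_convexHull ℝ T hx, hTS hx⟩)
  rintro x ⟨hx, hxS⟩
  by_contra hxT
  have := convexHull_min (t := {x | l x = c}) h1 (convex_hyperplane l.isLinear c) hx
  exact absurd this (h2 x hxS hxT).ne'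

lemma hull_face {S T : Set (EuclideanSpace ℝ (Fin N))} {k : ℕ} (h : Face S T) (hne : T.Nonempty) (hk : dm T = k) :
    IsFaceDim (convexHull ℝ S) (convexHull ℝ T) k := by
  refine ⟨?_, hne.convexHull, (sdim_hull T).trans hk⟩
  obtain ⟨hTS, l, c, h1, h2⟩ := h
  have hl : ∀ x ∈ convexHull ℝ T, l x = c := fun x hx =>
    convexHull_min (t := {x | l x = c}) h1 (convex_hyperplane l.isLinear c) hx
  have hge : ∀ x ∈ convexHull ℝ S, c ≤ l x := fun x hx => by
    rcases hull_cover h1 h2 hx with h | h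
    exacts [h.le, (hl x h).ge]
  obtain ⟨t, ht⟩ := hne
  intro _
  refine ⟨-l.toContinuousLinearMap, ?_⟩
  ext x
  simp only [mem_setOf_eq, ContinuousLinearMap.neg_apply, LinearMap.coe_toContinuousLinearMap', neg_le_neg_iff]
  constructor
  · intro hx
    exact ⟨convexHull_mono hTS hx, fun y hy => by rw [hl x hx]; exact hge y hy⟩
  · rintro ⟨hx, hy⟩
    have := hy t (subset_convexHull ℝ S (hTS ht))
    rw [h1 t ht] at this
    exact (hull_cover h1 h2 hx).resolve_left (not_lt.2 this)

lemma face_hull {S F : Set (EuclideanSpace ℝ (Fin N))} {k : ℕ} (h : IsFaceDim (convexHull ℝ S) F k) :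
    Face S (F ∩ S) ∧ dm (F ∩ S) = k ∧ convexHull ℝ (F ∩ S) = F := by
  obtain ⟨hex, hne, hk⟩ := h
  obtain ⟨l, hl⟩ := hex hne
  obtain ⟨t, ht⟩ := hne
  have ht' := ht
  rw [hl] at ht'
  have hF : ∀ x, x ∈ F ↔ x ∈ convexHull ℝ S ∧ l x = l t := by
    intro x
    constructor
    · intro hx
      rw [hl] at hx
      exact ⟨hx.1, le_antisymm (ht'.2 x hx.1) (hx.2 t ht'.1)⟩
    · rintro ⟨hx, h⟩
      rw [hl]
      exact ⟨hx, fun y hy => h ▸ ht'.2 y hy⟩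
  have h1 : ∀ x ∈ F ∩ S, (-l.toLinearMap) x = - l t := by
    rintro x ⟨hx, -⟩
    simp [((hF x).1 hx).2]
  have h2 : ∀ x ∈ S, x ∉ F ∩ S → - l t < (-l.toLinearMap) x := by
    intro x hx hx'
    simp only [LinearMap.neg_apply, ContinuousLinearMap.coe_coe, neg_lt_neg_iff]
    have hxS := subset_convexHull ℝ S hx
    refine lt_of_le_of_ne (ht'.2 x hxS) (fun h => hx' ⟨(hF x).2 ⟨hxS, h⟩, hx⟩)
  have e : convexHull ℝ (F ∩ S) = F := by
    apply Subset.antisymm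
    · apply convexHull_min inter_subset_left
      have : F = convexHull ℝ S ∩ {x | l x = l t} := by ext x; exact hF x
      rw [this]
      exact (convex_convexHull ℝ S).inter (convex_hyperplane l.toLinearMap.isLinear _)
    · intro x hx
      have := (hF x).1 hx
      refine (hull_cover h1 h2 this.1).resolve_left ?_
      simp [this.2]
  refine ⟨⟨inter_subset_right, -l.toLinearMap, - l t, h1, h2⟩, ?_, e⟩
  rw [← sdim_hull, e, hk]

end Poly

open Poly

/-- For every convex polytope `P` of dimension `d ≥ 4`, the graph `G_1(P)` on
the edges of `P` is `(2d-2)`-vertex-connected. -/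
theorem stmt_3 (d : ℕ) (hd : 4 ≤ d) {N : ℕ}
    (P : Set (EuclideanSpace ℝ (Fin N))) (hP : IsPolytope P) (hdim : sdim P = d) :
    MConnected (faceGraph P 1) (2 * d - 2) := by
  obtain ⟨S, hS, rfl⟩ := hP
  rw [sdim_hull] at hdim
  let φ : {F // IsFaceDim (convexHull ℝ S) F 1} → Set (EuclideanSpace ℝ (Fin N)) := fun F => F.1 ∩ S
  have hφi : Function.Injective φ := by
    intro F F' h
    apply Subtype.ext
    rw [← (face_hull F.2).2.2, ← (face_hull F'.2).2.2]
    exact congrArg _ h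
  have hφr : Set.range φ = {T | Face S T ∧ dm T = 1} := by
    ext T
    constructor
    · rintro ⟨F, rfl⟩
      exact ⟨(face_hull F.2).1, (face_hull F.2).2.1⟩
    · rintro ⟨h, h1⟩
      exact ⟨⟨convexHull ℝ T, hull_face h (nonempty_of_dm (by omega)) h1⟩, hull_inter h⟩
  have hcard : 2 * d - 1 ≤ Nat.card {F // IsFaceDim (convexHull ℝ S) F 1} := by
    rw [← Set.ncard_univ, ← Set.ncard_image_of_injective _ hφi, Set.image_univ, hφr]
    exact many hS hd hdim
  refine ⟨by omega, ?_⟩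
  intro Z hZf hZ
  have hne : Zᶜ.Nonempty := by
    rw [Set.nonempty_compl]
    rintro rfl
    rw [Set.ncard_univ] at hZ
    omega
  haveI : Nonempty ↥(Zᶜ) := hne.to_subtype
  refine ⟨?_⟩
  intro x y
  have hmem : ∀ F, φ F ∈ φ '' Z ↔ F ∈ Z := fun F => hφi.mem_set_image
  have key := config hS hd hdim (φ '' Z) (hZf.image _)
    (by rw [Set.ncard_image_of_injective _ hφi]; omega)
    {T | ∃ F : ↥(Zᶜ), φ F.1 = T ∧ ((faceGraph (convexHull ℝ S) 1).induce Zᶜ).Reachable x F}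
    (by
      have main : ∀ F F' : ↥(Zᶜ), ∀ G, Face S G → dm G = 2 → φ F.1 ⊆ G → φ F'.1 ⊆ G →
          ((faceGraph (convexHull ℝ S) 1).induce Zᶜ).Reachable F F' := by
        intro F F' G hG hG2 h1 h2
        by_cases hFF : F = F'
        · subst hFF; exact SimpleGraph.Reachable.refl _
        apply SimpleGraph.Adj.reachable
        simp only [faceGraph, SimpleGraph.comap_adj, SimpleGraph.fromRel_adj, Function.Embedding.subtype_apply]
        refine ⟨fun h => hFF (Subtype.ext h), Or.inl ⟨convexHull ℝ G,
          hull_face hG (nonempty_of_dm (by omega)) hG2, ?_, ?_⟩⟩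
        · rw [← (face_hull F.1.2).2.2]; exact convexHull_mono h1
        · rw [← (face_hull F'.1.2).2.2]; exact convexHull_mono h2
      intro T T' G hT hT' h1 h1' hTZ hTZ' hG hG2 hTG hTG'
      obtain ⟨F, rfl⟩ : T ∈ Set.range φ := by rw [hφr]; exact ⟨hT, h1⟩
      obtain ⟨F', rfl⟩ : T' ∈ Set.range φ := by rw [hφr]; exact ⟨hT', h1'⟩
      rw [hmem] at hTZ hTZ'
      have h := main ⟨F, hTZ⟩ ⟨F', hTZ'⟩ G hG hG2 hTG hTG'
      constructor
      · rintro ⟨H, hH, hr⟩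
        obtain rfl : H = ⟨F, hTZ⟩ := Subtype.ext (hφi hH)
        exact ⟨_, rfl, hr.trans h⟩
      · rintro ⟨H, hH, hr⟩
        obtain rfl : H = ⟨F', hTZ'⟩ := Subtype.ext (hφi hH)
        exact ⟨_, rfl, hr.trans h.symm⟩)
    (face_hull x.1.2).1 (face_hull y.1.2).1 (face_hull x.1.2).2.1 (face_hull y.1.2).2.1
    (fun h => x.2 ((hmem x.1).1 h)) (fun h => y.2 ((hmem y.1).1 h))
  obtain ⟨H, hH, hr⟩ := key.1 ⟨x, rfl, SimpleGraph.Reachable.refl _⟩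
  obtain rfl : H = y := Subtype.ext (hφi hH)
  exact hr
end
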